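/- Let ℓ ≥ 1 be a real number. Set Λ(2,ℓ) := 12ℓ·2^{6ℓ} + 5ℓ C_{2,ℓ} + 9ℓ D_{2,ℓ}, where C_{2,ℓ} := (10ℓ)^{2^{16ℓ}}, A_2 := 125^2 · 1092/8, B_{2,ℓ} := (1/2) e^{4/e} 2^{20ℓ}, D_{2,ℓ} := A_2 · max(A_2, 2·2^{5ℓA_2}) + (2A_2)^{−A_2/4} e^{B_{2,ℓ}/e} 2^{5ℓB_{2,ℓ}} · δ + 5 with δ = 1 if A_2 < B_{2,ℓ} and δ = 0 otherwise, and φ(ℓ) := 16748 · Λ(2,ℓ). Then, uniformly for all real x ≥ exp(7^{28} (12eℓ)^{28 log(192eℓ)}) and all real y with x^{1/ℓ} ≤ y ≤ x, one has ∑_{x−y < n ≤ x} Δ(n) ≤ φ(ℓ) · y · (log x)^{−1 + 4/π}. -/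

import Mathlib

/-- The Erdős–Hooley Δ-function: the maximum over real `u` of the number of
divisors of `n` in the interval `(e^u, e^{u+1}]`. -/
noncomputable def hooleyDelta (n : ℕ) : ℕ :=
  sSup {m : ℕ | ∃ u : ℝ,
    m = (n.divisors.filter (fun d : ℕ => Real.exp u < (d : ℝ) ∧ (d : ℝ) ≤ Real.exp (u + 1))).card}

noncomputable def A2 : ℝ := 125 ^ 2 * 1092 / 8

noncomputable def B2l (ℓ : ℝ) : ℝ := (1 / 2) * Real.exp (4 / Real.exp 1) * (2 : ℝ) ^ (20 * ℓ)

noncomputable def C2l (ℓ : ℝ) : ℝ := (10 * ℓ) ^ ((2 : ℝ) ^ (16 * ℓ))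

noncomputable def D2l (ℓ : ℝ) : ℝ :=
  A2 * max A2 (2 * (2 : ℝ) ^ (5 * ℓ * A2)) +
    (2 * A2) ^ (-A2 / 4) * Real.exp (B2l ℓ / Real.exp 1) *
      (2 : ℝ) ^ (5 * ℓ * B2l ℓ) * (if A2 < B2l ℓ then 1 else 0) + 5

noncomputable def Lam2 (ℓ : ℝ) : ℝ :=
  12 * ℓ * (2 : ℝ) ^ (6 * ℓ) + 5 * ℓ * C2l ℓ + 9 * ℓ * D2l ℓ

noncomputable def phiConst (ℓ : ℝ) : ℝ := 16748 * Lam2 ℓ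

namespace ErdosHooley

/-- The number of divisors of `n` in the window `(e^u, e^{u+1}]`. -/
noncomputable def windowCount (n : ℕ) (u : ℝ) : ℕ :=
  (n.divisors.filter (fun d : ℕ => Real.exp u < (d : ℝ) ∧ (d : ℝ) ≤ Real.exp (u + 1))).card

lemma hooleyDelta_set_bddAbove (n : ℕ) : BddAbove {m : ℕ | ∃ u : ℝ, m = windowCount n u} :=
  ⟨n.divisors.card, by rintro _ ⟨u, rfl⟩; exact Finset.card_filter_le _ _⟩

lemma windowCount_le_hooleyDelta (n : ℕ) (u : ℝ) : windowCount n u ≤ hooleyDelta n :=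
  le_csSup (hooleyDelta_set_bddAbove n) ⟨u, rfl⟩

lemma exists_hooleyDelta_eq_windowCount (n : ℕ) : ∃ u : ℝ, hooleyDelta n = windowCount n u :=
  Nat.sSup_mem (s := {m : ℕ | ∃ u : ℝ, m = windowCount n u}) ⟨_, 0, rfl⟩
    (hooleyDelta_set_bddAbove n)

lemma hooleyDelta_le_card_divisors (n : ℕ) : hooleyDelta n ≤ n.divisors.card := by
  obtain ⟨u, hu⟩ := exists_hooleyDelta_eq_windowCount n
  rw [hu]
  exact Finset.card_filter_le _ _

lemma hooleyDelta_mul_le {a b : ℕ} (ha : a ≠ 0) (hb : b ≠ 0) :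
    hooleyDelta (a * b) ≤ b.divisors.card * hooleyDelta a := by
  obtain ⟨u, hu⟩ := exists_hooleyDelta_eq_windowCount (a * b)
  have hsub : ((a * b).divisors.filter
      (fun d : ℕ => Real.exp u < (d : ℝ) ∧ (d : ℝ) ≤ Real.exp (u + 1))) ⊆
      b.divisors.biUnion fun e => ((a.divisors.filter (fun d : ℕ =>
        Real.exp (u - Real.log e) < (d : ℝ) ∧
          (d : ℝ) ≤ Real.exp (u - Real.log e + 1))).image (· * e)) := by
    intro d hd
    rw [Finset.mem_filter, Nat.mem_divisors] at hd
    obtain ⟨⟨hdvd, -⟩, h1, h2⟩ := hd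
    obtain ⟨d1, d2, hd1, hd2, rfl⟩ := exists_dvd_and_dvd_of_dvd_mul hdvd
    have hd2pos : (0 : ℝ) < d2 := by exact_mod_cast Nat.pos_of_dvd_of_pos hd2 (by omega)
    simp only [Finset.mem_biUnion, Finset.mem_image, Finset.mem_filter, Nat.mem_divisors]
    refine ⟨d2, ⟨hd2, hb⟩, d1, ⟨⟨hd1, ha⟩, ?_, ?_⟩, rfl⟩
    · rw [Real.exp_sub, Real.exp_log hd2pos, div_lt_iff₀ hd2pos]
      exact_mod_cast h1
    · rw [sub_add_eq_add_sub, Real.exp_sub, Real.exp_log hd2pos, le_div_iff₀ hd2pos]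
      exact_mod_cast h2
  rw [hu, windowCount]
  refine (Finset.card_le_card hsub).trans (Finset.card_biUnion_le_card_mul _ _ _ ?_)
  intro e _
  exact Finset.card_image_le.trans (windowCount_le_hooleyDelta a _)

lemma card_divisors_mul_le (m n : ℕ) :
    (m * n).divisors.card ≤ m.divisors.card * n.divisors.card := by
  rw [Nat.divisors_mul]
  exact Finset.card_mul_le

/-- If all prime factors of `b` are at least `z`, then `b` has at most `log b / log z` prime
factors, so at most `2 ^ (log b / log z)` divisors. -/
lemma card_divisors_le_of_rough {z : ℝ} (hz : 1 < z) {b : ℕ} (hb : b ≠ 0)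
    (h : ∀ p : ℕ, p.Prime → p ∣ b → z ≤ p) :
    (b.divisors.card : ℝ) ≤ 2 ^ (Real.log b / Real.log z) := by
  induction b using Nat.recOnMul with
  | zero => exact absurd rfl hb
  | one => simp
  | prime p hp =>
    rw [hp.divisors, Finset.card_pair hp.one_lt.ne]
    have : (1 : ℝ) ≤ Real.log p / Real.log z := by
      rw [one_le_div (Real.log_pos hz)]
      exact Real.log_le_log (by linarith) (h p hp dvd_rfl)
    calc ((2 : ℕ) : ℝ) = (2 : ℝ) ^ (1 : ℝ) := by norm_num
      _ ≤ _ := Real.rpow_le_rpow_of_exponent_le (by norm_num) this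
  | mul a b iha ihb =>
    have ha0 : a ≠ 0 := left_ne_zero_of_mul hb
    have hb0 : b ≠ 0 := right_ne_zero_of_mul hb
    have h1 := iha ha0 fun p hp hd => h p hp (hd.mul_right _)
    have h2 := ihb hb0 fun p hp hd => h p hp (hd.mul_left _)
    calc (((a * b).divisors.card : ℕ) : ℝ) ≤ (a.divisors.card : ℝ) * b.divisors.card := by
          exact_mod_cast card_divisors_mul_le a b
      _ ≤ 2 ^ (Real.log a / Real.log z) * 2 ^ (Real.log b / Real.log z) := by gcongr
      _ = _ := by
          rw [← Real.rpow_add (by norm_num), Nat.cast_mul,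
            Real.log_mul (by exact_mod_cast ha0) (by exact_mod_cast hb0), add_div]

/-- The divisor bound with an explicit constant. -/
lemma card_divisors_le_rpow {δ : ℝ} (hδ : 0 < δ) {n : ℕ} (hn : n ≠ 0) :
    (n.divisors.card : ℝ) ≤ (1 + 1 / (δ * Real.log 2)) ^ ((2 : ℝ) ^ (1 / δ)) * (n : ℝ) ^ δ := by
  set K : ℝ := 1 + 1 / (δ * Real.log 2) with hK
  have hl2 : 0 < Real.log 2 := Real.log_pos (by norm_num)
  have hK1 : 1 ≤ K := by rw [hK]; have : 0 < 1 / (δ * Real.log 2) := by positivity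
                         linarith
  set W : ℝ := (2 : ℝ) ^ (1 / δ) with hW
  have hlocal : ∀ p ∈ n.primeFactors, ((n.factorization p + 1 : ℕ) : ℝ) ≤
      (if (p : ℝ) < W then K else 1) * ((p : ℝ) ^ n.factorization p) ^ δ := by
    intro p hp
    have hp := Nat.prime_of_mem_primeFactors hp
    set k := n.factorization p
    have hp0 : (0 : ℝ) < p := by exact_mod_cast hp.pos
    have hp2 : (2 : ℝ) ≤ p := by exact_mod_cast hp.two_le
    have hpow : ((p : ℝ) ^ k) ^ δ = Real.exp (k * (δ * Real.log p)) := by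
      rw [← Real.rpow_natCast, ← Real.rpow_mul hp0.le, Real.rpow_def_of_pos hp0]
      ring_nf
    have hlogp : Real.log 2 ≤ Real.log p := Real.log_le_log (by norm_num) hp2
    split_ifs with hlt
    · have h1 : 1 ≤ ((p : ℝ) ^ k) ^ δ := by rw [hpow]; exact Real.one_le_exp (by positivity)
      have h2 : (k : ℝ) * (δ * Real.log 2) ≤ ((p : ℝ) ^ k) ^ δ := by
        rw [hpow]
        have := Real.add_one_le_exp (k * (δ * Real.log p))
        have h3 : (k : ℝ) * (δ * Real.log 2) ≤ k * (δ * Real.log p) := by gcongr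
        linarith
      have h3 : (k : ℝ) ≤ 1 / (δ * Real.log 2) * ((p : ℝ) ^ k) ^ δ := by
        rw [one_div, inv_mul_eq_div, le_div_iff₀ (by positivity)]
        exact h2
      rw [hK]; push_cast; nlinarith
    · rw [one_mul]
      have h1 : (2 : ℝ) ≤ (p : ℝ) ^ δ := by
        calc (2 : ℝ) = W ^ δ := by
              rw [hW, ← Real.rpow_mul (by norm_num), one_div, inv_mul_cancel₀ hδ.ne', Real.rpow_one]
          _ ≤ _ := Real.rpow_le_rpow (by positivity) (not_lt.mp hlt) hδ.le
      have h2 : ((p : ℝ) ^ k) ^ δ = ((p : ℝ) ^ δ) ^ k := by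
        rw [← Real.rpow_natCast, ← Real.rpow_mul hp0.le, mul_comm, Real.rpow_mul hp0.le,
          Real.rpow_natCast]
      rw [h2]
      calc ((k + 1 : ℕ) : ℝ) ≤ (2 : ℝ) ^ k := by exact_mod_cast Nat.lt_two_pow_self
        _ ≤ _ := by gcongr
  have hprod : (n : ℝ) ^ δ = ∏ p ∈ n.primeFactors, ((p : ℝ) ^ n.factorization p) ^ δ := by
    conv_lhs => rw [← Nat.prod_factorization_pow_eq_self hn]
    rw [Finsupp.prod, Nat.support_factorization]
    push_cast
    rw [Real.finsetProd_rpow _ _ (fun i _ => by positivity)]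
  have hconst : ∏ p ∈ n.primeFactors, (if (p : ℝ) < W then K else 1) ≤ K ^ W := by
    rw [← Finset.prod_filter, Finset.prod_const, ← Real.rpow_natCast]
    refine Real.rpow_le_rpow_of_exponent_le hK1 ?_
    have hsub : n.primeFactors.filter (fun p : ℕ => (p : ℝ) < W) ⊆ Finset.Icc 1 ⌊W⌋₊ := by
      intro p hp
      rw [Finset.mem_filter] at hp
      rw [Finset.mem_Icc]
      exact ⟨(Nat.prime_of_mem_primeFactors hp.1).one_le, Nat.le_floor hp.2.le⟩
    have := Finset.card_le_card hsub
    rw [Nat.card_Icc, Nat.add_sub_cancel] at this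
    exact (Nat.cast_le.mpr this).trans (Nat.floor_le (by positivity))
  calc (n.divisors.card : ℝ) = ∏ p ∈ n.primeFactors, ((n.factorization p + 1 : ℕ) : ℝ) := by
        rw [Nat.card_divisors hn]; push_cast; rfl
    _ ≤ ∏ p ∈ n.primeFactors,
          ((if (p : ℝ) < W then K else 1) * ((p : ℝ) ^ n.factorization p) ^ δ) :=
        Finset.prod_le_prod (fun _ _ => by positivity) hlocal
    _ = (∏ p ∈ n.primeFactors, (if (p : ℝ) < W then K else 1)) * (n : ℝ) ^ δ := by
        rw [Finset.prod_mul_distrib, hprod]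
    _ ≤ _ := by gcongr

end ErdosHooley

namespace ErdosHooley

open ArithmeticFunction in
lemma sum_moebius_multiples_of_squarefree {s : ℕ} (hs : Squarefree s) (r : ℕ) :
    ∑ d ∈ s.divisors with r ∣ d, (moebius d : ℝ) = if r = s then (moebius s : ℝ) else 0 := by
  have hs0 : s ≠ 0 := hs.ne_zero
  by_cases hr : r ∣ s
  · obtain ⟨t, rfl⟩ := hr
    have hcop := Nat.coprime_of_squarefree_mul hs
    have hr0 : r ≠ 0 := left_ne_zero_of_mul hs0
    have ht0 : t ≠ 0 := right_ne_zero_of_mul hs0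
    have himg : (r * t).divisors.filter (fun d => r ∣ d) = t.divisors.image (r * ·) := by
      ext d
      simp only [Finset.mem_filter, Nat.mem_divisors, Finset.mem_image]
      constructor
      · rintro ⟨⟨h1, -⟩, e, rfl⟩
        exact ⟨e, ⟨Nat.dvd_of_mul_dvd_mul_left (Nat.pos_of_ne_zero hr0) h1, ht0⟩, rfl⟩
      · rintro ⟨e, ⟨h1, -⟩, rfl⟩
        exact ⟨⟨mul_dvd_mul_left r h1, hs0⟩, dvd_mul_right _ _⟩
    rw [himg, Finset.sum_image fun a _ b _ h =>
      Nat.eq_of_mul_eq_mul_left (Nat.pos_of_ne_zero hr0) h]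
    have h1 : ∀ e ∈ t.divisors, (moebius (r * e) : ℝ) = moebius r * moebius e := by
      intro e he
      rw [isMultiplicative_moebius.map_mul_of_coprime
        (hcop.coprime_dvd_right (Nat.dvd_of_mem_divisors he))]
      push_cast; rfl
    rw [Finset.sum_congr rfl h1, ← Finset.mul_sum]
    have h2 : ∑ e ∈ t.divisors, (moebius e : ℝ) = if t = 1 then 1 else 0 := by
      have := congrArg (fun f : ArithmeticFunction ℤ => f t) coe_zeta_mul_moebius
      simp only [coe_zeta_mul_apply, one_apply] at this
      exact_mod_cast this
    rw [h2]
    by_cases ht : t = 1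
    · simp [ht]
    · have : r ≠ r * t := fun h => ht (Nat.eq_of_mul_eq_mul_left (Nat.pos_of_ne_zero hr0)
        (by rw [mul_one]; exact h.symm))
      simp [ht, this]
  · rw [if_neg (by rintro rfl; exact hr dvd_rfl), Finset.sum_eq_zero]
    intro d hd
    rw [Finset.mem_filter, Nat.mem_divisors] at hd
    exact absurd (hd.2.trans hd.1.1) hr

/-- Squarefree numbers up to `N`, the support of the Selberg weights of level `N`. -/
def sqfreeUpTo (N : ℕ) : Finset ℕ := (Finset.Icc 1 N).filter Squarefree

/-- The normalising sum in Selberg's sieve. -/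
noncomputable def selbergMass (N : ℕ) : ℝ := ∑ r ∈ sqfreeUpTo N, 1 / (Nat.totient r : ℝ)

/-- Selberg's optimal weights. -/
noncomputable def selbergWeight (N d : ℕ) : ℝ :=
  ArithmeticFunction.moebius d * d / selbergMass N *
    ∑ r ∈ sqfreeUpTo N with d ∣ r, 1 / (Nat.totient r : ℝ)

lemma mem_sqfreeUpTo {N d : ℕ} : d ∈ sqfreeUpTo N ↔ (1 ≤ d ∧ d ≤ N) ∧ Squarefree d := by
  simp [sqfreeUpTo]

lemma one_mem_sqfreeUpTo {N : ℕ} (hN : 1 ≤ N) : 1 ∈ sqfreeUpTo N :=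
  mem_sqfreeUpTo.mpr ⟨⟨le_rfl, hN⟩, squarefree_one⟩

lemma selbergMass_pos {N : ℕ} (hN : 1 ≤ N) : 0 < selbergMass N := by
  refine Finset.sum_pos (fun r hr => ?_) ⟨1, one_mem_sqfreeUpTo hN⟩
  have : 0 < r.totient := Nat.totient_pos.mpr (mem_sqfreeUpTo.mp hr).1.1
  positivity

lemma selbergWeight_one {N : ℕ} (hN : 1 ≤ N) : selbergWeight N 1 = 1 := by
  have := (selbergMass_pos hN).ne'
  simp only [selbergWeight, one_dvd, Finset.filter_true]
  change _ / _ * selbergMass N = 1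
  simp [this]

lemma abs_selbergWeight_le {N : ℕ} (hN : 1 ≤ N) (d : ℕ) : |selbergWeight N d| ≤ d := by
  have hV := selbergMass_pos hN
  have h1 : |(ArithmeticFunction.moebius d : ℝ)| ≤ 1 := by
    exact_mod_cast ArithmeticFunction.abs_moebius_le_one (n := d)
  have h2 : ∑ r ∈ sqfreeUpTo N with d ∣ r, 1 / (Nat.totient r : ℝ) ≤ selbergMass N :=
    Finset.sum_le_sum_of_subset_of_nonneg (Finset.filter_subset _ _) fun _ _ _ => by positivity
  have h3 : 0 ≤ ∑ r ∈ sqfreeUpTo N with d ∣ r, 1 / (Nat.totient r : ℝ) :=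
    Finset.sum_nonneg fun _ _ => by positivity
  rw [selbergWeight, abs_mul, abs_div, abs_mul, abs_of_pos hV, abs_of_nonneg h3, Nat.abs_cast,
    div_mul_eq_mul_div, div_le_iff₀ hV]
  gcongr
  exact mul_le_of_le_one_left (by positivity) h1

lemma sum_multiples_selbergWeight_div {N r : ℕ} :
    ∑ d ∈ sqfreeUpTo N with r ∣ d, selbergWeight N d / d =
      if r ∈ sqfreeUpTo N then
        ArithmeticFunction.moebius r / (selbergMass N * Nat.totient r) else 0 := by
  have h1 : ∀ d ∈ sqfreeUpTo N, selbergWeight N d / d =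
      ∑ s ∈ sqfreeUpTo N, if d ∣ s then
        1 / (selbergMass N * Nat.totient s) * (ArithmeticFunction.moebius d : ℝ) else 0 := by
    intro d hd
    have hd0 : (d : ℝ) ≠ 0 := by
      have := (mem_sqfreeUpTo.mp hd).1.1
      positivity
    rw [selbergWeight, Finset.sum_filter, Finset.mul_sum, Finset.sum_div]
    refine Finset.sum_congr rfl fun s _ => ?_
    split_ifs
    · field_simp
    · simp
  rw [Finset.sum_filter, Finset.sum_congr rfl (g := fun d => ∑ s ∈ sqfreeUpTo N,
    if r ∣ d ∧ d ∣ s then 1 / (selbergMass N * Nat.totient s) *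
      (ArithmeticFunction.moebius d : ℝ) else 0)]
  swap
  · intro d hd
    by_cases hr : r ∣ d
    · simp only [hr, if_true, true_and]; exact h1 d hd
    · simp [hr]
  rw [Finset.sum_comm, Finset.sum_congr rfl (g := fun s => if r = s then
    1 / (selbergMass N * Nat.totient s) * (ArithmeticFunction.moebius s : ℝ) else 0)]
  · rw [Finset.sum_ite_eq]
    split_ifs
    · ring
    · rfl
  · intro s hs
    have hs' := mem_sqfreeUpTo.mp hs
    have h2 := sum_moebius_multiples_of_squarefree hs'.2 r
    rw [← Finset.sum_filter, ← Finset.mul_sum]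
    have hset : (sqfreeUpTo N).filter (fun d => r ∣ d ∧ d ∣ s) =
        s.divisors.filter (fun d => r ∣ d) := by
      ext d
      simp only [Finset.mem_filter, mem_sqfreeUpTo, Nat.mem_divisors]
      constructor
      · rintro ⟨-, h3, h4⟩
        exact ⟨⟨h4, hs'.2.ne_zero⟩, h3⟩
      · rintro ⟨⟨h3, h4⟩, h5⟩
        refine ⟨⟨⟨Nat.pos_of_dvd_of_pos h3 hs'.1.1, (Nat.le_of_dvd hs'.1.1 h3).trans hs'.1.2⟩,
          hs'.2.squarefree_of_dvd h3⟩, h5, h3⟩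
    rw [hset, h2]
    split_ifs <;> simp

lemma selberg_quadratic_form {N : ℕ} (hN : 1 ≤ N) :
    ∑ d ∈ sqfreeUpTo N, ∑ e ∈ sqfreeUpTo N,
      selbergWeight N d * selbergWeight N e / (Nat.lcm d e : ℝ) = 1 / selbergMass N := by
  have hV := (selbergMass_pos hN).ne'
  have h1 : ∀ d ∈ sqfreeUpTo N, ∀ e ∈ sqfreeUpTo N,
      selbergWeight N d * selbergWeight N e / (Nat.lcm d e : ℝ) =
      ∑ r ∈ Finset.Icc 1 N, (Nat.totient r : ℝ) *
        ((if r ∣ d then selbergWeight N d / d else 0) *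
          (if r ∣ e then selbergWeight N e / e else 0)) := by
    intro d hd e he
    have hd' := mem_sqfreeUpTo.mp hd
    have he' := mem_sqfreeUpTo.mp he
    have hd0 : (d : ℝ) ≠ 0 := by exact_mod_cast hd'.2.ne_zero
    have he0 : (e : ℝ) ≠ 0 := by exact_mod_cast he'.2.ne_zero
    have hg0 : 0 < Nat.gcd d e := Nat.gcd_pos_of_pos_left _ hd'.1.1
    have hgcd : (Nat.gcd d e : ℝ) = ∑ r ∈ Finset.Icc 1 N with r ∣ d ∧ r ∣ e,
        (Nat.totient r : ℝ) := by
      have h2 : (Nat.gcd d e).divisors = (Finset.Icc 1 N).filter fun r => r ∣ d ∧ r ∣ e := by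
        ext r
        simp only [Nat.mem_divisors, Finset.mem_filter, Finset.mem_Icc, Nat.dvd_gcd_iff]
        constructor
        · rintro ⟨h3, -⟩
          exact ⟨⟨Nat.pos_of_dvd_of_pos h3.1 hd'.1.1,
            (Nat.le_of_dvd hd'.1.1 h3.1).trans hd'.1.2⟩, h3⟩
        · rintro ⟨-, h3⟩
          exact ⟨h3, hg0.ne'⟩
      rw [← h2]
      exact_mod_cast (Nat.sum_totient (Nat.gcd d e)).symm
    have hlcm : (Nat.gcd d e : ℝ) * Nat.lcm d e = d * e := by exact_mod_cast Nat.gcd_mul_lcm d e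
    have hl0 : (Nat.lcm d e : ℝ) ≠ 0 := by
      exact_mod_cast Nat.lcm_ne_zero hd'.2.ne_zero he'.2.ne_zero
    have h3 : selbergWeight N d * selbergWeight N e / (Nat.lcm d e : ℝ) =
        Nat.gcd d e * (selbergWeight N d / d * (selbergWeight N e / e)) := by
      rw [div_mul_div_comm, ← hlcm]
      have : (Nat.gcd d e : ℝ) ≠ 0 := by exact_mod_cast hg0.ne'
      field_simp
    rw [h3, hgcd, Finset.sum_mul, Finset.sum_filter]
    refine Finset.sum_congr rfl fun r _ => ?_
    by_cases ha : r ∣ d <;> by_cases hb : r ∣ e <;> simp [ha, hb]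
  calc _ = ∑ d ∈ sqfreeUpTo N, ∑ e ∈ sqfreeUpTo N, ∑ r ∈ Finset.Icc 1 N, (Nat.totient r : ℝ) *
        ((if r ∣ d then selbergWeight N d / d else 0) *
          (if r ∣ e then selbergWeight N e / e else 0)) :=
        Finset.sum_congr rfl fun d hd => Finset.sum_congr rfl fun e he => h1 d hd e he
    _ = ∑ r ∈ Finset.Icc 1 N, (Nat.totient r : ℝ) *
        (∑ d ∈ sqfreeUpTo N with r ∣ d, selbergWeight N d / d) ^ 2 := by
        rw [Finset.sum_congr rfl fun d _ => Finset.sum_comm, Finset.sum_comm]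
        refine Finset.sum_congr rfl fun r _ => ?_
        rw [sq, Finset.sum_filter, Finset.sum_mul_sum, Finset.mul_sum]
        refine Finset.sum_congr rfl fun d _ => ?_
        rw [Finset.mul_sum]
    _ = ∑ r ∈ sqfreeUpTo N, 1 / (selbergMass N) ^ 2 * (1 / (Nat.totient r : ℝ)) := by
        conv_rhs => rw [sqfreeUpTo, Finset.sum_filter]
        refine Finset.sum_congr rfl fun r hr => ?_
        rw [sum_multiples_selbergWeight_div]
        by_cases hsq : Squarefree r
        · have hmem : r ∈ sqfreeUpTo N := mem_sqfreeUpTo.mpr ⟨Finset.mem_Icc.mp hr, hsq⟩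
          have ht : (Nat.totient r : ℝ) ≠ 0 := by
            exact_mod_cast (Nat.totient_pos.mpr (Finset.mem_Icc.mp hr).1).ne'
          have hmu : (ArithmeticFunction.moebius r : ℝ) ^ 2 = 1 := by
            exact_mod_cast ArithmeticFunction.moebius_sq_eq_one_of_squarefree hsq
          rw [if_pos hmem, if_pos hsq, div_pow, hmu]
          field_simp
        · have hmem : r ∉ sqfreeUpTo N := fun h => hsq (mem_sqfreeUpTo.mp h).2
          rw [if_neg hmem, if_neg hsq]
          simp
    _ = 1 / selbergMass N := by
        rw [← Finset.mul_sum]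
        change _ * selbergMass N = _
        field_simp

lemma log_le_two_mul_selbergMass {R : ℝ} (hR : 1 ≤ R) :
    Real.log R ≤ 2 * selbergMass ⌊R⌋₊ := by
  set N := ⌊R⌋₊ with hN
  refine (log_le_harmonic_floor R (by linarith)).trans ?_
  rw [harmonic_eq_sum_Icc, ← hN]
  push_cast
  have hsq : ∑ b ∈ Finset.Icc 1 N, ((b : ℝ) ^ 2)⁻¹ ≤ 2 := by
    have := sum_Ioo_inv_sq_le (α := ℝ) 0 (N + 1)
    rw [show Finset.Icc 1 N = Finset.Ioo 0 (N + 1) by ext; simp; omega]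
    simpa using this
  calc ∑ n ∈ Finset.Icc 1 N, (n : ℝ)⁻¹
      ≤ ∑ n ∈ Finset.Icc 1 N, ∑ c ∈ Finset.Icc 1 N ×ˢ sqfreeUpTo N,
          if c.1 ^ 2 * c.2 = n then ((c.1 : ℝ) ^ 2)⁻¹ * (c.2 : ℝ)⁻¹ else 0 := by
        refine Finset.sum_le_sum fun n hn => ?_
        obtain ⟨a, b, hab, ha⟩ := Nat.sq_mul_squarefree n
        rw [Finset.mem_Icc] at hn
        have hb0 : b ≠ 0 := by rintro rfl; simp at hab; omega
        have ha0 : a ≠ 0 := ha.ne_zero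
        have hbn : b ≤ n := by
          rw [← hab, sq, mul_assoc]
          exact Nat.le_mul_of_pos_right _ (by positivity)
        have han : a ≤ n := by rw [← hab]; exact Nat.le_mul_of_pos_left _ (by positivity)
        have hmem : (b, a) ∈ Finset.Icc 1 N ×ˢ sqfreeUpTo N := by
          rw [Finset.mem_product, Finset.mem_Icc, mem_sqfreeUpTo]
          exact ⟨⟨by omega, by simp; omega⟩, ⟨by simp; omega, by simp; omega⟩, ha⟩
        refine le_trans (le_of_eq ?_) (Finset.single_le_sum (fun c _ => ?_) hmem)
        · simp only [hab, if_true]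
          rw [← hab]; push_cast; rw [mul_inv]
        · split_ifs <;> positivity
    _ = ∑ c ∈ Finset.Icc 1 N ×ˢ sqfreeUpTo N, ∑ n ∈ Finset.Icc 1 N,
          if c.1 ^ 2 * c.2 = n then ((c.1 : ℝ) ^ 2)⁻¹ * (c.2 : ℝ)⁻¹ else 0 := Finset.sum_comm
    _ ≤ ∑ c ∈ Finset.Icc 1 N ×ˢ sqfreeUpTo N, ((c.1 : ℝ) ^ 2)⁻¹ * (c.2 : ℝ)⁻¹ := by
        refine Finset.sum_le_sum fun c _ => ?_
        rw [Finset.sum_ite_eq]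
        split_ifs
        · exact le_rfl
        · positivity
    _ = (∑ b ∈ Finset.Icc 1 N, ((b : ℝ) ^ 2)⁻¹) * ∑ a ∈ sqfreeUpTo N, (a : ℝ)⁻¹ := by
        rw [Finset.sum_product, Finset.sum_mul_sum]
    _ ≤ 2 * selbergMass N := by
        refine mul_le_mul hsq (Finset.sum_le_sum fun a ha => ?_)
          (Finset.sum_nonneg fun _ _ => by positivity) (by norm_num)
        have ha1 := (mem_sqfreeUpTo.mp ha).1.1
        rw [one_div]
        have : (0 : ℝ) < Nat.totient a := by exact_mod_cast Nat.totient_pos.mpr ha1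
        gcongr
        exact_mod_cast Nat.totient_le a

/-- The integers in `(u, u + Y]`. -/
noncomputable def intervalNat (u Y : ℝ) : Finset ℕ := Finset.Ioc ⌊u⌋₊ ⌊u + Y⌋₊

lemma mem_intervalNat {u Y : ℝ} (hu : 0 ≤ u) (hY : 0 ≤ Y) {n : ℕ} :
    n ∈ intervalNat u Y ↔ u < n ∧ (n : ℝ) ≤ u + Y := by
  rw [intervalNat, Finset.mem_Ioc, Nat.floor_lt hu, Nat.le_floor_iff (by positivity)]

lemma abs_card_multiples_sub_le {u Y : ℝ} (hu : 0 ≤ u) (hY : 0 ≤ Y) {m : ℕ} (hm : m ≠ 0) :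
    |(((intervalNat u Y).filter (fun n => m ∣ n)).card : ℝ) - Y / m| ≤ 1 := by
  have hm0 : (0 : ℝ) < m := by positivity
  have hfl : ⌊u⌋₊ ≤ ⌊u + Y⌋₊ := Nat.floor_le_floor (by linarith)
  have hunion : (Finset.Ioc 0 ⌊u + Y⌋₊).filter (fun n => m ∣ n) =
      (Finset.Ioc 0 ⌊u⌋₊).filter (fun n => m ∣ n) ∪ (intervalNat u Y).filter (fun n => m ∣ n) := by
    rw [intervalNat, ← Finset.filter_union, Finset.Ioc_union_Ioc_eq_Ioc (Nat.zero_le _) hfl]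
  have hdisj : Disjoint ((Finset.Ioc 0 ⌊u⌋₊).filter (fun n => m ∣ n))
      ((intervalNat u Y).filter (fun n => m ∣ n)) := by
    refine Finset.disjoint_filter_filter ?_
    rw [Finset.disjoint_left]
    intro n hn hn'
    rw [intervalNat, Finset.mem_Ioc] at hn'
    rw [Finset.mem_Ioc] at hn
    omega
  have hcard := congrArg Finset.card hunion
  rw [Finset.card_union_of_disjoint hdisj, Nat.Ioc_filter_dvd_card_eq_div,
    Nat.Ioc_filter_dvd_card_eq_div, ← Nat.floor_div_natCast, ← Nat.floor_div_natCast] at hcard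
  have hcard' : (⌊(u + Y) / m⌋₊ : ℝ) = ⌊u / m⌋₊ +
      ((intervalNat u Y).filter (fun n => m ∣ n)).card := by exact_mod_cast hcard
  have h1 := Nat.floor_le (show 0 ≤ (u + Y) / m by positivity)
  have h2 := Nat.lt_floor_add_one ((u + Y) / m)
  have h3 := Nat.floor_le (show 0 ≤ u / m by positivity)
  have h4 := Nat.lt_floor_add_one (u / m)
  rw [add_div] at h1 h2 hcard'
  rw [abs_le]
  constructor <;> linarith

open scoped Classical in
/-- Selberg's upper bound for the number of integers in a short interval without small prime
factors. -/
lemma card_rough_le {u Y z : ℝ} (hu : 0 ≤ u) (hz : 2 ≤ z) (hY : z ^ 2 * Real.log z ≤ Y) :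
    (((intervalNat u Y).filter (fun n => ∀ p : ℕ, p.Prime → p ∣ n → z ≤ p)).card : ℝ) ≤
      5 * Y / Real.log z := by
  have hlz : 0 < Real.log z := Real.log_pos (by linarith)
  have hY0 : 0 ≤ Y := le_trans (by positivity) hY
  set R := Real.sqrt z with hR
  have hR2 : R ^ 2 = z := Real.sq_sqrt (by linarith)
  have hR0 : 0 ≤ R := Real.sqrt_nonneg z
  have hR1 : 1 ≤ R := by nlinarith
  have hRz : R < z := by nlinarith
  set N := ⌊R⌋₊ with hNdef
  have hN : 1 ≤ N := Nat.le_floor (by simpa using hR1)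
  have hNR : (N : ℝ) ≤ R := Nat.floor_le hR0
  have hV := selbergMass_pos hN
  have hVlow : Real.log z / 4 ≤ selbergMass N := by
    have h1 := log_le_two_mul_selbergMass hR1
    have h2 : Real.log R = Real.log z / 2 := by rw [hR, Real.log_sqrt (by linarith)]
    linarith
  set I := intervalNat u Y with hI
  set lam := selbergWeight N with hlam
  have hpt : ∀ n ∈ I, (if ∀ p : ℕ, p.Prime → p ∣ n → z ≤ p then (1 : ℝ) else 0) ≤
      (∑ d ∈ sqfreeUpTo N, if d ∣ n then lam d else 0) ^ 2 := by
    intro n _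
    split_ifs with h
    · have : ∑ d ∈ sqfreeUpTo N, (if d ∣ n then lam d else 0) = 1 := by
        rw [Finset.sum_eq_single 1]
        · simp [hlam, selbergWeight_one hN]
        · intro d hd hd1
          rw [if_neg]
          intro hdn
          obtain ⟨p, hp, hpd⟩ := Nat.exists_prime_and_dvd hd1
          have h1 := h p hp (hpd.trans hdn)
          have hd' := mem_sqfreeUpTo.mp hd
          have h2 : (p : ℝ) ≤ N := by exact_mod_cast (Nat.le_of_dvd hd'.1.1 hpd).trans hd'.1.2
          linarith
        · intro h1
          exact absurd (one_mem_sqfreeUpTo hN) h1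
      rw [this]; norm_num
    · positivity
  have hdouble : ∑ n ∈ I, (∑ d ∈ sqfreeUpTo N, if d ∣ n then lam d else 0) ^ 2 =
      ∑ d ∈ sqfreeUpTo N, ∑ e ∈ sqfreeUpTo N,
        lam d * lam e * ((I.filter (fun n => Nat.lcm d e ∣ n)).card : ℝ) := by
    simp_rw [sq, Finset.sum_mul_sum]
    rw [Finset.sum_comm]
    refine Finset.sum_congr rfl fun d _ => ?_
    rw [Finset.sum_comm]
    refine Finset.sum_congr rfl fun e _ => ?_
    rw [← nsmul_eq_mul', ← Finset.sum_const, Finset.sum_filter]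
    refine Finset.sum_congr rfl fun n _ => ?_
    by_cases ha : d ∣ n <;> by_cases hb : e ∣ n <;> simp [Nat.lcm_dvd_iff, ha, hb]
  have hterm : ∀ d ∈ sqfreeUpTo N, ∀ e ∈ sqfreeUpTo N,
      lam d * lam e * ((I.filter (fun n => Nat.lcm d e ∣ n)).card : ℝ) ≤
        Y * (lam d * lam e / (Nat.lcm d e : ℝ)) + N * N := by
    intro d hd e he
    have hd' := mem_sqfreeUpTo.mp hd
    have he' := mem_sqfreeUpTo.mp he
    have h1 := abs_card_multiples_sub_le hu hY0
      (Nat.lcm_ne_zero hd'.2.ne_zero he'.2.ne_zero) (m := Nat.lcm d e)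
    rw [← hI] at h1
    set c := ((I.filter (fun n => Nat.lcm d e ∣ n)).card : ℝ)
    have h2 : lam d * lam e * (c - Y / (Nat.lcm d e : ℝ)) ≤ N * N := by
      refine (le_abs_self _).trans ?_
      rw [abs_mul, abs_mul]
      have h3 : |lam d| ≤ N := (abs_selbergWeight_le hN d).trans (by exact_mod_cast hd'.1.2)
      have h4 : |lam e| ≤ N := (abs_selbergWeight_le hN e).trans (by exact_mod_cast he'.1.2)
      calc |lam d| * |lam e| * |c - Y / (Nat.lcm d e : ℝ)| ≤ N * N * 1 := by gcongr
        _ = _ := mul_one _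
    have h3 : Y * (lam d * lam e / (Nat.lcm d e : ℝ)) =
      lam d * lam e * (Y / (Nat.lcm d e : ℝ)) := by ring
    rw [h3]
    linarith [mul_sub (lam d * lam e) c (Y / (Nat.lcm d e : ℝ))]
  have hcardD : ((sqfreeUpTo N).card : ℝ) ≤ N := by
    have := Finset.card_filter_le (Finset.Icc 1 N) Squarefree
    rw [Nat.card_Icc, Nat.add_sub_cancel] at this
    exact_mod_cast this
  calc (((I).filter (fun n => ∀ p : ℕ, p.Prime → p ∣ n → z ≤ p)).card : ℝ)
      = ∑ n ∈ I, (if ∀ p : ℕ, p.Prime → p ∣ n → z ≤ p then (1 : ℝ) else 0) := by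
        rw [Finset.sum_boole]
    _ ≤ ∑ n ∈ I, (∑ d ∈ sqfreeUpTo N, if d ∣ n then lam d else 0) ^ 2 := Finset.sum_le_sum hpt
    _ ≤ ∑ d ∈ sqfreeUpTo N, ∑ e ∈ sqfreeUpTo N,
        (Y * (lam d * lam e / (Nat.lcm d e : ℝ)) + N * N) := by
        rw [hdouble]
        exact Finset.sum_le_sum fun d hd => Finset.sum_le_sum fun e he => hterm d hd e he
    _ = Y / selbergMass N + ((sqfreeUpTo N).card * (sqfreeUpTo N).card) * (N * N) := by
        simp_rw [Finset.sum_add_distrib, ← Finset.mul_sum, Finset.sum_const, nsmul_eq_mul]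
        rw [hlam, selberg_quadratic_form hN]
        ring
    _ ≤ Y / (Real.log z / 4) + (R * R) * (R * R) := by
        have hcR : ((sqfreeUpTo N).card : ℝ) ≤ R := hcardD.trans hNR
        gcongr
    _ = 4 * Y / Real.log z + z ^ 2 := by
        rw [← sq R, hR2]; field_simp
    _ ≤ 5 * Y / Real.log z := by
        have : z ^ 2 ≤ Y / Real.log z := by rw [le_div_iff₀ hlz]; exact hY
        have h5 : 5 * Y / Real.log z = 4 * Y / Real.log z + Y / Real.log z := by ring
        linarith

end ErdosHooley

namespace ErdosHooley

open MeasureTheory Set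

/-- The integral `∫₁^∞ {t} t^{-s-1} dt`, which carries the regular part of `ζ(s)` near `s = 1`. -/
noncomputable def fractIntegral (s : ℂ) : ℂ :=
  ∫ t in Ioi (1 : ℝ), ((Int.fract t : ℝ) : ℂ) * (t : ℂ) ^ (-(s + 1))

lemma norm_fract_mul_cpow_le (s : ℂ) {t : ℝ} (ht : 0 < t) :
    ‖((Int.fract t : ℝ) : ℂ) * (t : ℂ) ^ (-(s + 1))‖ ≤ t ^ (-s.re - 1) := by
  rw [norm_mul, Complex.norm_cpow_eq_rpow_re_of_pos ht, Complex.norm_real,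
    Real.norm_of_nonneg (Int.fract_nonneg t)]
  have h1 : (-(s + 1)).re = -s.re - 1 := by simp; ring
  rw [h1]
  exact mul_le_of_le_one_left (by positivity) (Int.fract_lt_one t).le

lemma integrableOn_fract_mul_cpow {s : ℂ} (hs : 0 < s.re) :
    IntegrableOn (fun t : ℝ => ((Int.fract t : ℝ) : ℂ) * (t : ℂ) ^ (-(s + 1))) (Ioi 1) := by
  refine Integrable.mono' (integrableOn_Ioi_rpow_of_lt (a := -s.re - 1) (by linarith) one_pos)
    ?_ ?_
  · refine AEStronglyMeasurable.mul ?_ ?_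
    · exact (Complex.measurable_ofReal.comp measurable_fract).aestronglyMeasurable
    · exact (Complex.measurable_ofReal.pow_const _).aestronglyMeasurable
  · filter_upwards [ae_restrict_mem measurableSet_Ioi] with t ht
    exact norm_fract_mul_cpow_le s (one_pos.trans ht)

lemma norm_fractIntegral_le {s : ℂ} (hs : 1 < s.re) : ‖fractIntegral s‖ ≤ 1 := by
  have h1 : ‖fractIntegral s‖ ≤ ∫ t in Ioi (1 : ℝ), t ^ (-s.re - 1) := by
    refine norm_integral_le_of_norm_le
      (integrableOn_Ioi_rpow_of_lt (a := -s.re - 1) (by linarith) one_pos) ?_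
    filter_upwards [ae_restrict_mem measurableSet_Ioi] with t ht
    exact norm_fract_mul_cpow_le s (one_pos.trans ht)
  refine h1.trans ?_
  rw [integral_Ioi_rpow_of_lt (by linarith) one_pos, Real.one_rpow,
    show -1 / (-s.re - 1 + 1) = 1 / s.re by
      rw [show -s.re - 1 + 1 = -s.re by ring, neg_div_neg_eq], div_le_one (by linarith)]
  exact hs.le

lemma norm_fractIntegral_sub_le {σ σ' t : ℝ} (hσ : 1 < σ) (h : σ ≤ σ') :
    ‖fractIntegral (σ + t * Complex.I) - fractIntegral (σ' + t * Complex.I)‖ ≤ σ' - σ := by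
  have hre : ∀ σ : ℝ, (σ + t * Complex.I : ℂ).re = σ := by intro σ; simp
  have hi1 := integrableOn_Ioi_rpow_of_lt (a := -σ - 1) (c := 1) (by linarith) one_pos
  have hi2 := integrableOn_Ioi_rpow_of_lt (a := -σ' - 1) (c := 1) (by linarith) one_pos
  have h1 : ‖fractIntegral (σ + t * Complex.I) - fractIntegral (σ' + t * Complex.I)‖ ≤
      ∫ u in Ioi (1 : ℝ), (u ^ (-σ - 1) - u ^ (-σ' - 1)) := by
    rw [fractIntegral, fractIntegral, ← integral_sub
      (integrableOn_fract_mul_cpow (by rw [hre]; linarith))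
      (integrableOn_fract_mul_cpow (by rw [hre]; linarith))]
    refine norm_integral_le_of_norm_le (hi1.sub hi2) ?_
    filter_upwards [ae_restrict_mem measurableSet_Ioi] with u hu
    have hu0 : 0 < u := one_pos.trans hu
    have hsplit : ∀ σ : ℝ, (u : ℂ) ^ (-((σ + t * Complex.I : ℂ) + 1)) =
        (u ^ (-σ - 1) : ℝ) * (u : ℂ) ^ (-(t * Complex.I)) := by
      intro σ
      rw [Complex.ofReal_cpow hu0.le, ← Complex.cpow_add _ _ (by exact_mod_cast hu0.ne')]
      congr 1; push_cast; ring
    rw [hsplit, hsplit, ← mul_sub, ← sub_mul, norm_mul, norm_mul,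
      Complex.norm_cpow_eq_rpow_re_of_pos hu0, ← Complex.ofReal_sub, Complex.norm_real,
      Complex.norm_real, Real.norm_of_nonneg (Int.fract_nonneg u)]
    have hle : u ^ (-σ' - 1) ≤ u ^ (-σ - 1) :=
      Real.rpow_le_rpow_of_exponent_le (le_of_lt hu) (by linarith)
    rw [Real.norm_of_nonneg (sub_nonneg.mpr hle)]
    simp only [Complex.neg_re, Complex.mul_re, Complex.ofReal_re, Complex.I_re, mul_zero,
      Complex.ofReal_im, Complex.I_im, mul_one, sub_self, neg_zero, Real.rpow_zero]
    exact mul_le_of_le_one_left (sub_nonneg.mpr hle) (Int.fract_lt_one u).le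
  refine h1.trans ?_
  rw [integral_sub hi1 hi2, integral_Ioi_rpow_of_lt (by linarith) one_pos,
    integral_Ioi_rpow_of_lt (by linarith) one_pos, Real.one_rpow, Real.one_rpow]
  have h0 : (0 : ℝ) < σ := by linarith
  have h0' : (0 : ℝ) < σ' := by linarith
  rw [show -1 / (-σ - 1 + 1) - -1 / (-σ' - 1 + 1) = (σ' - σ) / (σ * σ') by
    rw [show -σ - 1 + 1 = -σ by ring, show -σ' - 1 + 1 = -σ' by ring]
    field_simp]
  exact div_le_self (by linarith) (by nlinarith)

lemma riemannZeta_eq_fractIntegral {s : ℂ} (hs : 1 < s.re) :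
    riemannZeta s = s / (s - 1) - s * fractIntegral s := by
  have h1 := LSeries_eq_mul_integral_of_nonneg (fun _ => 1) zero_le_one hs
    (by simpa using Asymptotics.isBigO_refl _ _) (fun _ => zero_le_one)
  have h2 : LSeries (fun _ => ((1 : ℝ) : ℂ)) s = riemannZeta s := by
    rw [← LSeries_one_eq_riemannZeta hs]
    congr 1
  rw [← h2, h1]
  have h3 : ∫ t in Ioi (1 : ℝ), (t : ℂ) ^ (-s) = 1 / (s - 1) := by
    rw [integral_Ioi_cpow_of_lt (by simp; linarith) one_pos]
    simp only [Complex.ofReal_one, Complex.one_cpow]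
    rw [show -s + 1 = -(s - 1) by ring, neg_div_neg_eq]
  have h4 : ∫ t in Ioi (1 : ℝ), (∑ k ∈ Finset.Icc 1 ⌊t⌋₊, ((1 : ℝ) : ℂ)) * (t : ℂ) ^ (-(s + 1)) =
      ∫ t in Ioi (1 : ℝ), ((t : ℂ) ^ (-s) - ((Int.fract t : ℝ) : ℂ) * (t : ℂ) ^ (-(s + 1))) := by
    refine setIntegral_congr_fun measurableSet_Ioi fun t ht => ?_
    have ht0 : (0 : ℝ) < t := one_pos.trans ht
    have hne : (t : ℂ) ≠ 0 := by exact_mod_cast ht0.ne'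
    have h5 : (t : ℂ) ^ (-s) = t * (t : ℂ) ^ (-(s + 1)) := by
      rw [show -s = 1 + -(s + 1) by ring, Complex.cpow_add _ _ hne, Complex.cpow_one]
    have h6 : ((⌊t⌋₊ : ℕ) : ℂ) = t - Int.fract t := by
      have : ((⌊t⌋₊ : ℕ) : ℝ) = t - Int.fract t := by
        rw [natCast_floor_eq_intCast_floor ht0.le, Int.self_sub_fract]
      exact_mod_cast congrArg (fun r : ℝ => (r : ℂ)) this
    simp only [Complex.ofReal_one, Finset.sum_const, Nat.card_Icc, Nat.add_sub_cancel, nsmul_eq_mul,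
      mul_one]
    rw [h5, h6]; ring
  rw [h4, integral_sub (integrableOn_Ioi_cpow_of_lt (by simp; linarith) one_pos)
    (integrableOn_fract_mul_cpow (by linarith)), h3, fractIntegral]
  ring

lemma norm_zeta_product_ge_one {x : ℝ} (hx : 0 < x) (y : ℝ) :
    1 ≤ ‖riemannZeta (1 + x)‖ ^ 3 * ‖riemannZeta (1 + x + Complex.I * y)‖ ^ 4 *
      ‖riemannZeta (1 + x + 2 * Complex.I * y)‖ := by
  have := DirichletCharacter.norm_LFunction_product_ge_one (N := 1) 1 hx y
  rw [DirichletCharacter.LFunctionTrivChar] at this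
  simpa [DirichletCharacter.LFunction_modOne_eq, norm_mul, norm_pow] using this

end ErdosHooley

namespace ErdosHooley

lemma line_sub_one_ne_zero {σ : ℝ} (hσ : 1 < σ) (t : ℝ) : (σ + t * Complex.I : ℂ) - 1 ≠ 0 := by
  intro h
  have := congrArg Complex.re h
  simp at this; linarith

lemma norm_line_le {σ : ℝ} (hσ : 0 ≤ σ) (t : ℝ) : ‖(σ + t * Complex.I : ℂ)‖ ≤ σ + |t| := by
  refine (norm_add_le _ _).trans ?_
  rw [norm_mul, Complex.norm_I, Complex.norm_real, Complex.norm_real, Real.norm_of_nonneg hσ,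
    Real.norm_eq_abs, mul_one]

lemma norm_line_sub_one_le {σ : ℝ} (hσ : 1 ≤ σ) (t : ℝ) :
    ‖(σ + t * Complex.I : ℂ) - 1‖ ≤ σ - 1 + |t| := by
  have := norm_line_le (sub_nonneg.mpr hσ) t
  rwa [show ((σ - 1 : ℝ) : ℂ) + t * Complex.I = (σ + t * Complex.I : ℂ) - 1 by
    push_cast; ring] at this

lemma abs_le_norm_line_sub_one (σ t : ℝ) : |t| ≤ ‖(σ + t * Complex.I : ℂ) - 1‖ := by
  have := Complex.abs_im_le_norm ((σ + t * Complex.I : ℂ) - 1)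
  simpa using this

lemma sub_one_mul_riemannZeta {σ : ℝ} (hσ : 1 < σ) (t : ℝ) :
    ((σ + t * Complex.I : ℂ) - 1) * riemannZeta (σ + t * Complex.I) =
      (σ + t * Complex.I : ℂ) - ((σ + t * Complex.I : ℂ) - 1) *
        ((σ + t * Complex.I : ℂ) * fractIntegral (σ + t * Complex.I)) := by
  rw [riemannZeta_eq_fractIntegral (by simpa using hσ)]
  have := line_sub_one_ne_zero hσ t
  field_simp

lemma norm_sub_one_mul_riemannZeta_le {σ : ℝ} (hσ : 1 < σ) (hσ2 : σ ≤ 2) (t : ℝ) :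
    ‖((σ + t * Complex.I : ℂ) - 1) * riemannZeta (σ + t * Complex.I)‖ ≤ (|t| + 3) ^ 2 := by
  rw [sub_one_mul_riemannZeta hσ]
  have h1 := norm_line_le (by linarith : 0 ≤ σ) t
  have h2 := norm_line_sub_one_le hσ.le t
  have h3 := norm_fractIntegral_le (s := (σ + t * Complex.I : ℂ)) (by simpa using hσ)
  have ht := abs_nonneg t
  refine (norm_sub_le _ _).trans ?_
  rw [norm_mul, norm_mul]
  calc _ ≤ (σ + |t|) + (σ - 1 + |t|) * ((σ + |t|) * 1) := by gcongr
    _ ≤ (2 + |t|) + (1 + |t|) * ((2 + |t|) * 1) := by gcongr; linarith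
    _ ≤ _ := by nlinarith

lemma half_le_norm_sub_one_mul_riemannZeta {σ t : ℝ} (hσ : 1 < σ)
    (h : ‖(σ + t * Complex.I : ℂ) - 1‖ ≤ 1 / 8) :
    1 / 2 ≤ ‖((σ + t * Complex.I : ℂ) - 1) * riemannZeta (σ + t * Complex.I)‖ := by
  rw [sub_one_mul_riemannZeta hσ]
  set s : ℂ := σ + t * Complex.I with hs
  have h3 := norm_fractIntegral_le (s := s) (by simpa [hs] using hσ)
  have h1 : ‖s‖ ≤ 9 / 8 := by
    have := norm_add_le (s - 1) 1
    rw [sub_add_cancel, norm_one] at this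
    linarith
  have h4 : ‖(s - 1) * (1 - s * fractIntegral s)‖ ≤ 1 / 8 * (1 + 9 / 8 * 1) := by
    rw [norm_mul]
    have : ‖1 - s * fractIntegral s‖ ≤ 1 + 9 / 8 * 1 := by
      refine (norm_sub_le _ _).trans ?_
      rw [norm_one, norm_mul]
      gcongr
    gcongr
  have h5 : s - (s - 1) * (s * fractIntegral s) = 1 + (s - 1) * (1 - s * fractIntegral s) := by ring
  rw [h5]
  have h6 := norm_sub_le (1 + (s - 1) * (1 - s * fractIntegral s))
    ((s - 1) * (1 - s * fractIntegral s))
  rw [add_sub_cancel_right, norm_one] at h6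
  linarith

lemma norm_zeta_product_line_ge_one {σ : ℝ} (hσ : 1 < σ) (t : ℝ) :
    1 ≤ ‖riemannZeta σ‖ ^ 3 * ‖riemannZeta (σ + t * Complex.I)‖ ^ 4 *
      ‖riemannZeta (σ + (2 * t : ℝ) * Complex.I)‖ := by
  have := norm_zeta_product_ge_one (sub_pos.mpr hσ) t
  rw [show (1 : ℂ) + ((σ - 1 : ℝ) : ℂ) = σ by push_cast; ring] at this
  rwa [show (σ : ℂ) + Complex.I * t = σ + t * Complex.I by ring,
    show (σ : ℂ) + 2 * Complex.I * t = σ + (2 * t : ℝ) * Complex.I by push_cast; ring] at this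

lemma norm_riemannZeta_ofReal_le {σ : ℝ} (hσ : 1 < σ) (hσ2 : σ ≤ 2) :
    ‖riemannZeta σ‖ ≤ 4 / (σ - 1) := by
  have h1 := sub_one_mul_riemannZeta hσ 0
  simp only [Complex.ofReal_zero, zero_mul, add_zero] at h1
  have h3 := norm_fractIntegral_le (s := (σ : ℂ)) (by simpa using hσ)
  have hn : ‖(σ : ℂ) - 1‖ = σ - 1 := by
    rw [← Complex.ofReal_one, ← Complex.ofReal_sub, Complex.norm_real, Real.norm_of_nonneg]
    linarith
  have hs : ‖(σ : ℂ)‖ = σ := by rw [Complex.norm_real, Real.norm_of_nonneg (by linarith)]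
  have h4 : ‖((σ : ℂ) - 1) * riemannZeta σ‖ ≤ 4 := by
    rw [h1]
    refine (norm_sub_le _ _).trans ?_
    rw [norm_mul, norm_mul, hn, hs]
    have : (σ - 1) * (σ * ‖fractIntegral σ‖) ≤ (2 - 1) * (2 * 1) := by
      gcongr
    linarith
  rw [norm_mul, hn] at h4
  rw [le_div_iff₀ (by linarith)]
  linarith

lemma norm_riemannZeta_sub_le {σ σ' t : ℝ} (hσ : 1 < σ) (h : σ ≤ σ') (hσ' : σ' ≤ 2)
    (ht : 1 / 16 ≤ |t|) :
    ‖riemannZeta (σ + t * Complex.I) - riemannZeta (σ' + t * Complex.I)‖ ≤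
      (σ' - σ) * (87 * (|t| + 3)) := by
  have hσ1 : 1 < σ' := by linarith
  rw [riemannZeta_eq_fractIntegral (by simpa using hσ),
    riemannZeta_eq_fractIntegral (by simpa using hσ1)]
  have hne := line_sub_one_ne_zero hσ t
  have hne' := line_sub_one_ne_zero hσ1 t
  have ha := abs_le_norm_line_sub_one σ t
  have hb := abs_le_norm_line_sub_one σ' t
  have hF := norm_fractIntegral_le (s := (σ + t * Complex.I : ℂ)) (by simpa using hσ)
  have hFF := norm_fractIntegral_sub_le (t := t) hσ h
  have hs' := norm_line_le (by linarith : 0 ≤ σ') t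
  have hd : ‖(σ + t * Complex.I : ℂ) - (σ' + t * Complex.I)‖ = σ' - σ := by
    rw [add_sub_add_right_eq_sub, ← Complex.ofReal_sub, Complex.norm_real, Real.norm_eq_abs,
      abs_sub_comm, abs_of_nonneg (by linarith)]
  set s : ℂ := σ + t * Complex.I
  set s' : ℂ := σ' + t * Complex.I
  have key : s / (s - 1) - s * fractIntegral s - (s' / (s' - 1) - s' * fractIntegral s') =
      -(s - s') * ((s - 1)⁻¹ * (s' - 1)⁻¹) - ((s - s') * fractIntegral s +
        s' * (fractIntegral s - fractIntegral s')) := by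
    field_simp
    ring
  rw [key]
  refine (norm_sub_le _ _).trans ?_
  have h1 : ‖-(s - s') * ((s - 1)⁻¹ * (s' - 1)⁻¹)‖ ≤ (σ' - σ) * (16 * 16) := by
    rw [norm_mul, norm_neg, hd, norm_mul, norm_inv, norm_inv]
    have h16 : ‖s - 1‖⁻¹ ≤ 16 := by
      rw [inv_le_comm₀ (by linarith) (by norm_num)]; linarith
    have h16' : ‖s' - 1‖⁻¹ ≤ 16 := by
      rw [inv_le_comm₀ (by linarith) (by norm_num)]; linarith
    gcongr
  have h2 : ‖(s - s') * fractIntegral s + s' * (fractIntegral s - fractIntegral s')‖ ≤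
      (σ' - σ) * 1 + (2 + |t|) * (σ' - σ) := by
    refine (norm_add_le _ _).trans ?_
    rw [norm_mul, norm_mul, hd]
    have : ‖s'‖ ≤ 2 + |t| := by linarith
    gcongr
  have h3 : 0 ≤ σ' - σ := by linarith
  nlinarith [mul_nonneg h3 (abs_nonneg t)]

lemma sub_one_cube_le_mul_norm_riemannZeta_pow {σ : ℝ} (hσ : 1 < σ) (hσ2 : σ ≤ 2) (t : ℝ)
    {M : ℝ} (hM : ‖riemannZeta (σ + (2 * t : ℝ) * Complex.I)‖ ≤ M) :
    (σ - 1) ^ 3 ≤ 64 * M * ‖riemannZeta (σ + t * Complex.I)‖ ^ 4 := by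
  have h1 := norm_zeta_product_line_ge_one hσ t
  have h2 := norm_riemannZeta_ofReal_le hσ hσ2
  have h0 : 0 < σ - 1 := by linarith
  have h3 : 1 ≤ (4 / (σ - 1)) ^ 3 * ‖riemannZeta (σ + t * Complex.I)‖ ^ 4 * M := by
    refine h1.trans ?_
    gcongr
  rw [div_pow] at h3
  have h4 : (4 : ℝ) ^ 3 / (σ - 1) ^ 3 * ‖riemannZeta (σ + t * Complex.I)‖ ^ 4 * M =
      (64 * M * ‖riemannZeta (σ + t * Complex.I)‖ ^ 4) / (σ - 1) ^ 3 := by ring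
  rw [h4, le_div_iff₀ (by positivity)] at h3
  linarith

/-- The constant in the lower bound for `ζ` near the line `Re s = 1`. -/
def zetaConst : ℝ := 4096 * 174 ^ 4

lemma mul_le_norm_riemannZeta_of_le {σ : ℝ} (hσ : 1 < σ) (hσ2 : σ ≤ 2) {t : ℝ}
    (h : 1 / 16 ≤ ‖(σ + (2 * t : ℝ) * Complex.I : ℂ) - 1‖) {η : ℝ} (hη0 : 0 ≤ η)
    (hησ : η ≤ σ - 1) (hη : η * (zetaConst * (|t| + 3) ^ 6) ≤ 1) :
    174 * η * (|t| + 3) ≤ ‖riemannZeta (σ + t * Complex.I)‖ := by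
  set V := |t| + 3 with hV
  have hV3 : 3 ≤ V := by have := abs_nonneg t; linarith
  have h1 := norm_sub_one_mul_riemannZeta_le hσ hσ2 (2 * t)
  rw [norm_mul, abs_mul, abs_of_pos (two_pos : (0 : ℝ) < 2)] at h1
  have hM : ‖riemannZeta (σ + (2 * t : ℝ) * Complex.I)‖ ≤ 64 * V ^ 2 := by
    have h2 : (2 * |t| + 3) ^ 2 ≤ (2 * V) ^ 2 := by
      have := abs_nonneg t
      gcongr
      linarith
    have h3 := norm_nonneg (riemannZeta (σ + (2 * t : ℝ) * Complex.I))
    nlinarith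
  have h4 := sub_one_cube_le_mul_norm_riemannZeta_pow hσ hσ2 t hM
  have h5 : η ^ 3 ≤ (σ - 1) ^ 3 := by gcongr
  have h6 : η ^ 3 * (η * (zetaConst * V ^ 6)) ≤ η ^ 3 * 1 := by gcongr
  refine le_of_pow_le_pow_left₀ (n := 4) (by norm_num) (norm_nonneg _) ?_
  have h7 : 4096 * V ^ 2 * (174 * η * V) ^ 4 ≤
      4096 * V ^ 2 * ‖riemannZeta (σ + t * Complex.I)‖ ^ 4 := by
    calc 4096 * V ^ 2 * (174 * η * V) ^ 4 = η ^ 3 * (η * (zetaConst * V ^ 6)) := by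
          unfold zetaConst; ring
      _ ≤ _ := by linarith
  exact le_of_mul_le_mul_left h7 (by positivity)

lemma inv_le_norm_sub_one_mul_riemannZeta {σ : ℝ} (hσ : 1 < σ) (hσ2 : σ ≤ 2) (t : ℝ) :
    1 / (16 * (zetaConst * (|t| + 3) ^ 6)) ≤
      ‖((σ + t * Complex.I : ℂ) - 1) * riemannZeta (σ + t * Complex.I)‖ := by
  set V := |t| + 3 with hV
  have hV3 : 3 ≤ V := by have := abs_nonneg t; linarith
  have hV6 : (1 : ℝ) ≤ V ^ 6 := one_le_pow₀ (by linarith)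
  have hc1 : 16 ≤ zetaConst * V ^ 6 := by
    have : (16 : ℝ) ≤ zetaConst := by unfold zetaConst; norm_num
    nlinarith
  by_cases h8 : ‖(σ + t * Complex.I : ℂ) - 1‖ ≤ 1 / 8
  · refine le_trans ?_ (half_le_norm_sub_one_mul_riemannZeta hσ h8)
    apply one_div_le_one_div_of_le (by norm_num); linarith
  push Not at h8
  have hs1 := norm_line_sub_one_le hσ.le t
  set η := 1 / (zetaConst * V ^ 6) with hη
  have hη0 : 0 < η := by positivity
  have hη1 : η * (zetaConst * V ^ 6) ≤ 1 := by rw [hη, one_div_mul_cancel (by linarith)]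
  have hη16 : η ≤ 1 / 16 := one_div_le_one_div_of_le (by norm_num) hc1
  have hre : ∀ σ t : ℝ, σ - 1 ≤ ‖(σ + t * Complex.I : ℂ) - 1‖ := fun σ t => by
    have := Complex.re_le_norm ((σ + t * Complex.I : ℂ) - 1)
    simpa using this
  have hfar : ∀ σ' : ℝ, σ ≤ σ' → 1 / 16 ≤ ‖(σ' + (2 * t : ℝ) * Complex.I : ℂ) - 1‖ := by
    intro σ' hσ'
    by_cases ht : |t| < 1 / 16
    · refine le_trans ?_ (hre σ' _)
      linarith
    · push Not at ht
      refine le_trans ?_ (abs_le_norm_line_sub_one σ' (2 * t))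
      rw [abs_mul, abs_of_pos (two_pos : (0 : ℝ) < 2)]
      linarith
  have hmain : η ≤ ‖riemannZeta (σ + t * Complex.I)‖ := by
    by_cases hcase : η ≤ σ - 1
    · have := mul_le_norm_riemannZeta_of_le hσ hσ2 (hfar σ le_rfl) hη0.le hcase hη1
      rw [← hV] at this
      nlinarith
    · push Not at hcase
      have ht : 1 / 16 ≤ |t| := by linarith
      have hle : σ ≤ 1 + η := by linarith
      have h1 := mul_le_norm_riemannZeta_of_le (σ := 1 + η) (by linarith) (by linarith)
        (hfar (1 + η) hle) hη0.le (by linarith) hη1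
      have h2 := norm_riemannZeta_sub_le hσ hle (by linarith) ht
      rw [← hV] at h1 h2
      have h3 := norm_sub_norm_le (riemannZeta ((1 + η : ℝ) + t * Complex.I))
        (riemannZeta (σ + t * Complex.I))
      rw [norm_sub_rev] at h3
      have h4 : (1 + η - σ) * (87 * V) ≤ η * (87 * V) := by gcongr; linarith
      nlinarith
  rw [norm_mul]
  calc 1 / (16 * (zetaConst * V ^ 6)) = 1 / 16 * η := by rw [hη]; field_simp
    _ ≤ _ := by
      have : 1 / 16 ≤ ‖(σ + t * Complex.I : ℂ) - 1‖ := by linarith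
      gcongr

lemma abs_log_norm_sub_one_mul_riemannZeta_le {σ : ℝ} (hσ : 1 < σ) (hσ2 : σ ≤ 2) (t : ℝ) :
    |Real.log ‖((σ + t * Complex.I : ℂ) - 1) * riemannZeta (σ + t * Complex.I)‖| ≤
      36 + 6 * Real.log (|t| + 3) := by
  have hV3 : 3 ≤ |t| + 3 := by have := abs_nonneg t; linarith
  have h1 := inv_le_norm_sub_one_mul_riemannZeta hσ hσ2 t
  have h2 := norm_sub_one_mul_riemannZeta_le hσ hσ2 t
  have hlV : 0 ≤ Real.log (|t| + 3) := Real.log_nonneg (by linarith)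
  have hc : 0 < zetaConst := by unfold zetaConst; norm_num
  have hpos : 0 < 1 / (16 * (zetaConst * (|t| + 3) ^ 6)) := by positivity
  have h3 := Real.log_le_log hpos h1
  have h4 := Real.log_le_log (hpos.trans_le h1) h2
  rw [Real.log_pow] at h4
  rw [one_div, Real.log_inv, ← mul_assoc, Real.log_mul (by positivity) (by positivity),
    Real.log_pow] at h3
  have h5 : Real.log (16 * zetaConst) ≤ 36 := by
    have h6 : 16 * zetaConst ≤ 2 ^ 50 := by unfold zetaConst; norm_num
    have h7 := Real.log_le_log (by positivity) h6
    rw [Real.log_pow] at h7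
    have := Real.log_two_lt_d9
    push_cast at h7
    linarith
  push_cast at h3 h4
  rw [abs_le]
  constructor <;> linarith

end ErdosHooley

namespace ErdosHooley

/-- The sum `∑ₚ cos (t log p) p^{-1-ε}` over primes. -/
noncomputable def primeCosSum (ε t : ℝ) : ℝ :=
  ∑' p : Nat.Primes, Real.cos (t * Real.log p) * (p : ℝ) ^ (-(1 + ε))

lemma summable_primes_rpow {ε : ℝ} (hε : 0 < ε) :
    Summable fun p : Nat.Primes => (p : ℝ) ^ (-(1 + ε)) :=
  Nat.Primes.summable_rpow.mpr (by linarith)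

lemma summable_mul_primes_rpow {ε : ℝ} (hε : 0 < ε) {g : Nat.Primes → ℝ} {M : ℝ}
    (hg : ∀ p, |g p| ≤ M) :
    Summable fun p : Nat.Primes => g p * (p : ℝ) ^ (-(1 + ε)) := by
  refine Summable.of_norm_bounded ((summable_primes_rpow hε).mul_left M) fun p => ?_
  rw [Real.norm_eq_abs, abs_mul, abs_of_nonneg (by positivity : 0 ≤ (p : ℝ) ^ (-(1 + ε)))]
  exact mul_le_mul_of_nonneg_right (hg p) (by positivity)

lemma summable_primes_inv_sq : Summable fun p : Nat.Primes => 1 / (p : ℝ) ^ 2 :=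
  hasSum_zeta_two.summable.subtype _

lemma tsum_primes_inv_sq_le : ∑' p : Nat.Primes, 1 / (p : ℝ) ^ 2 ≤ 2 := by
  have h1 : ∑' p : Nat.Primes, 1 / (p : ℝ) ^ 2 ≤ ∑' n : ℕ, 1 / (n : ℝ) ^ 2 :=
    hasSum_zeta_two.summable.tsum_subtype_le (fun n : ℕ => 1 / (n : ℝ) ^ 2) {p | p.Prime}
      (fun _ => by positivity)
  rw [hasSum_zeta_two.tsum_eq] at h1
  have := Real.pi_lt_d2
  have := Real.pi_pos
  nlinarith

lemma prime_cpow_neg (p : Nat.Primes) (ε t : ℝ) :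
    (p : ℂ) ^ (-(((1 + ε : ℝ) : ℂ) + t * Complex.I)) =
      ((p : ℝ) ^ (-(1 + ε)) : ℝ) * Complex.exp (((-(t * Real.log p) : ℝ) : ℂ) * Complex.I) := by
  have hp : (0 : ℝ) < p := by exact_mod_cast p.2.pos
  have hpc : ((p : ℕ) : ℂ) = ((p : ℝ) : ℂ) := by simp
  have hne : ((p : ℝ) : ℂ) ≠ 0 := by exact_mod_cast hp.ne'
  rw [hpc, neg_add, Complex.cpow_add _ _ hne, Complex.ofReal_cpow hp.le]
  congr 1
  · push_cast; rfl
  · rw [Complex.cpow_def_of_ne_zero hne, ← Complex.ofReal_log hp.le]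
    congr 1; push_cast; ring

lemma abs_primeCosSum_sub_log_norm_zeta_le {ε : ℝ} (hε : 0 < ε) (t : ℝ) :
    |primeCosSum ε t - Real.log ‖riemannZeta (((1 + ε : ℝ) : ℂ) + t * Complex.I)‖| ≤ 2 := by
  set s : ℂ := ((1 + ε : ℝ) : ℂ) + t * Complex.I with hs
  have hre : 1 < s.re := by simp [hs, hε]
  have hsum : Summable fun p : Nat.Primes => -Complex.log (1 - (p : ℂ) ^ (-s)) := by
    refine (DirichletCharacter.summable_neg_log_one_sub_mul_prime_cpow (N := 1) 1 hre).congr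
      fun p => ?_
    rw [MulChar.one_apply (isUnit_of_subsingleton _), one_mul]
  have hlog : Real.log ‖riemannZeta s‖ =
      ∑' p : Nat.Primes, (-Complex.log (1 - (p : ℂ) ^ (-s))).re := by
    rw [← riemannZeta_eulerProduct_exp_log hre, Complex.norm_exp, Real.log_exp]
    exact Complex.re_tsum hsum
  have hsumlog : Summable fun p : Nat.Primes => (-Complex.log (1 - (p : ℂ) ^ (-s))).re :=
    (Complex.hasSum_re hsum.hasSum).summable
  have hsumcos : Summable fun p : Nat.Primes =>
      Real.cos (t * Real.log p) * (p : ℝ) ^ (-(1 + ε)) :=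
    summable_mul_primes_rpow hε fun p => Real.abs_cos_le_one _
  rw [hlog, primeCosSum, ← hsumcos.tsum_sub hsumlog]
  rw [← Real.norm_eq_abs]
  refine le_trans (tsum_of_norm_bounded summable_primes_inv_sq.hasSum fun p => ?_)
    tsum_primes_inv_sq_le
  have hp2 : (2 : ℝ) ≤ p := by exact_mod_cast p.2.two_le
  have hnorm : ‖(p : ℂ) ^ (-s)‖ ≤ 1 / (p : ℝ) := by
    rw [hs, prime_cpow_neg, norm_mul, Complex.norm_exp_ofReal_mul_I, mul_one, Complex.norm_real,
      Real.norm_of_nonneg (by positivity), one_div, ← Real.rpow_neg_one]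
    exact Real.rpow_le_rpow_of_exponent_le (by linarith) (by linarith)
  have hrez : ((p : ℂ) ^ (-s)).re = Real.cos (t * Real.log p) * (p : ℝ) ^ (-(1 + ε)) := by
    rw [hs, prime_cpow_neg, Complex.re_ofReal_mul, Complex.exp_ofReal_mul_I_re, Real.cos_neg,
      mul_comm]
  set z : ℂ := (p : ℂ) ^ (-s) with hz
  have hhalf : 1 / (p : ℝ) ≤ 1 / 2 := one_div_le_one_div_of_le (by norm_num) hp2
  have hz1 : ‖z‖ ≤ 1 / 2 := hnorm.trans hhalf
  have h1 := Complex.norm_log_one_add_sub_self_le (z := -z) (by rw [norm_neg]; linarith)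
  rw [norm_neg, ← sub_eq_add_neg, sub_neg_eq_add] at h1
  rw [← hrez, ← Complex.sub_re, sub_neg_eq_add, add_comm z]
  refine (Complex.abs_re_le_norm _).trans (h1.trans ?_)
  have h2 : (1 - ‖z‖)⁻¹ ≤ 2 := by
    rw [inv_le_comm₀ (by linarith) (by norm_num)]; linarith
  calc ‖z‖ ^ 2 * (1 - ‖z‖)⁻¹ / 2 ≤ (1 / (p : ℝ)) ^ 2 * 2 / 2 := by
        have : 0 ≤ (1 - ‖z‖)⁻¹ := inv_nonneg.mpr (by linarith)
        gcongr
    _ = 1 / (p : ℝ) ^ 2 := by ring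

lemma abs_primeCosSum_add_log_le {ε : ℝ} (hε : 0 < ε) (hε1 : ε ≤ 1) (t : ℝ) :
    |primeCosSum ε t + Real.log ‖(ε + t * Complex.I : ℂ)‖| ≤ 38 + 6 * Real.log (|t| + 3) := by
  have h1 := abs_primeCosSum_sub_log_norm_zeta_le hε t
  have h2 := abs_log_norm_sub_one_mul_riemannZeta_le (σ := 1 + ε) (by linarith) (by linarith) t
  have hne := line_sub_one_ne_zero (σ := 1 + ε) (by linarith) t
  have hz : riemannZeta (((1 + ε : ℝ) : ℂ) + t * Complex.I) ≠ 0 :=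
    riemannZeta_ne_zero_of_one_le_re (by simp [hε.le])
  rw [norm_mul, Real.log_mul (norm_ne_zero_iff.mpr hne) (norm_ne_zero_iff.mpr hz)] at h2
  rw [show (((1 + ε : ℝ) : ℂ) + t * Complex.I) - 1 = ε + t * Complex.I by push_cast; ring] at h2
  rw [abs_le] at *
  constructor <;> linarith

end ErdosHooley

namespace ErdosHooley

open Complex in
lemma integral_cos_mul_exp (n : ℤ) :
    ∫ x in (-(Real.pi / 2))..(Real.pi / 2), cexp (-(2 * n * I) * x) * ((Real.cos x : ℝ) : ℂ) =
      2 * (-1) ^ n / (1 - 4 * (n : ℂ) ^ 2) := by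
  have h1 : (1 - 2 * n : ℂ) ≠ 0 := by
    have : (1 - 2 * n : ℤ) ≠ 0 := by omega
    exact_mod_cast this
  have h2 : (1 + 2 * n : ℂ) ≠ 0 := by
    have : (1 + 2 * n : ℤ) ≠ 0 := by omega
    exact_mod_cast this
  have hc1 : I * (1 - 2 * n) ≠ 0 := mul_ne_zero I_ne_zero h1
  have hc2 : -(I * (1 + 2 * n)) ≠ 0 := neg_ne_zero.mpr (mul_ne_zero I_ne_zero h2)
  have hcongr : ∀ x : ℝ, cexp (-(2 * n * I) * x) * ((Real.cos x : ℝ) : ℂ) =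
      1 / 2 * cexp (I * (1 - 2 * n) * x) + 1 / 2 * cexp (-(I * (1 + 2 * n)) * x) := by
    intro x
    rw [ofReal_cos, Complex.cos, mul_div_assoc', mul_add, ← exp_add, ← exp_add]
    ring_nf
  simp_rw [hcongr]
  rw [intervalIntegral.integral_add
    ((by fun_prop : Continuous _).intervalIntegrable _ _)
    ((by fun_prop : Continuous _).intervalIntegrable _ _),
    intervalIntegral.integral_const_mul, intervalIntegral.integral_const_mul,
    integral_exp_mul_complex hc1, integral_exp_mul_complex hc2]
  have e1 : cexp (Real.pi / 2 * I) = I := exp_pi_div_two_mul_I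
  have e2 : cexp (-(Real.pi / 2 * I)) = -I := by rw [exp_neg, e1, inv_I]
  have e3 : ∀ m : ℤ, cexp (m * (Real.pi * I)) = (-1) ^ m := by
    intro m; rw [exp_int_mul, exp_pi_mul_I]
  have e4 : ((-1 : ℂ)) ^ (-n) = (-1) ^ n := by
    rw [zpow_neg, ← inv_zpow]; norm_num
  have a1 : cexp (I * (1 - 2 * n) * (Real.pi / 2 : ℝ)) = I * (-1) ^ n := by
    rw [show I * (1 - 2 * n) * ((Real.pi / 2 : ℝ) : ℂ) =
      Real.pi / 2 * I + (-n : ℤ) * (Real.pi * I) by push_cast; ring, exp_add, e1, e3, e4]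
  have a2 : cexp (I * (1 - 2 * n) * (-(Real.pi / 2) : ℝ)) = -I * (-1) ^ n := by
    rw [← e2, ← e3, ← exp_add]; congr 1; push_cast; ring
  have a3 : cexp (-(I * (1 + 2 * n)) * (Real.pi / 2 : ℝ)) = -I * (-1) ^ n := by
    rw [← e2, ← e4, ← e3, ← exp_add]; congr 1; push_cast; ring
  have a4 : cexp (-(I * (1 + 2 * n)) * (-(Real.pi / 2) : ℝ)) = I * (-1) ^ n := by
    rw [show -(I * (1 + 2 * n)) * ((-(Real.pi / 2) : ℝ) : ℂ) =
      Real.pi / 2 * I + n * (Real.pi * I) by push_cast; ring, exp_add, e1, e3]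
  rw [a1, a2, a3, a4, show (1 - 4 * (n : ℂ) ^ 2) = (1 - 2 * n) * (1 + 2 * n) by ring]
  field_simp [I_ne_zero]
  ring

lemma periodic_abs_cos : Function.Periodic (fun x : ℝ => ((|Real.cos x| : ℝ) : ℂ)) Real.pi := by
  intro x
  simp [Real.cos_add_pi]

local instance : Fact (0 < Real.pi) := ⟨Real.pi_pos⟩

/-- `|cos|` as a continuous function on the circle of length `π`. -/
noncomputable def absCosCircle : C(AddCircle Real.pi, ℂ) where
  toFun := periodic_abs_cos.lift
  continuous_toFun := by
    refine continuous_coinduced_dom.mpr ?_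
    change Continuous fun x : ℝ => ((|Real.cos x| : ℝ) : ℂ)
    fun_prop

lemma absCosCircle_coe (x : ℝ) : absCosCircle (x : AddCircle Real.pi) = ((|Real.cos x| : ℝ) : ℂ) :=
  rfl

lemma fourier_coe_pi (n : ℤ) (x : ℝ) :
    fourier n (x : AddCircle Real.pi) = Complex.exp (2 * n * Complex.I * x) := by
  rw [fourier_coe_apply]
  congr 1
  have : (Real.pi : ℂ) ≠ 0 := by exact_mod_cast Real.pi_pos.ne'
  field_simp

lemma fourierCoeff_absCosCircle (n : ℤ) :
    fourierCoeff absCosCircle n = 2 / Real.pi * (-1) ^ n / (1 - 4 * (n : ℂ) ^ 2) := by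
  rw [fourierCoeff_eq_intervalIntegral _ _ (-(Real.pi / 2)),
    show -(Real.pi / 2) + Real.pi = Real.pi / 2 by ring]
  have : ∫ x in (-(Real.pi / 2))..(Real.pi / 2),
      fourier (-n) (x : AddCircle Real.pi) • absCosCircle x =
      ∫ x in (-(Real.pi / 2))..(Real.pi / 2),
        Complex.exp (-(2 * n * Complex.I) * x) * ((Real.cos x : ℝ) : ℂ) := by
    refine intervalIntegral.integral_congr fun x hx => ?_
    rw [Set.uIcc_of_le (by linarith [Real.pi_pos])] at hx
    rw [fourier_coe_pi, absCosCircle_coe, smul_eq_mul,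
      abs_of_nonneg (Real.cos_nonneg_of_mem_Icc hx)]
    congr 2; push_cast; ring
  rw [this, integral_cos_mul_exp, Complex.real_smul]
  push_cast
  ring

lemma summable_fourierCoeff_absCosCircle : Summable (fourierCoeff absCosCircle) := by
  have hs : Summable fun n : ℤ => 1 / (n : ℝ) ^ 2 := Real.summable_one_div_int_pow.mpr (by norm_num)
  refine Summable.of_norm_bounded_eventually hs ?_
  rw [Filter.eventually_cofinite]
  refine (Set.finite_singleton (0 : ℤ)).subset fun n hn => ?_
  by_contra hn0
  apply hn
  rw [fourierCoeff_absCosCircle]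
  have h1 : (1 : ℝ) ≤ (n : ℝ) ^ 2 := by
    have : (1 : ℤ) ≤ n ^ 2 := by
      have := sq_pos_of_ne_zero hn0
      omega
    exact_mod_cast this
  have h2 : ‖(1 - 4 * (n : ℂ) ^ 2)‖ = 4 * (n : ℝ) ^ 2 - 1 := by
    rw [show (1 - 4 * (n : ℂ) ^ 2) = ((1 - 4 * (n : ℝ) ^ 2 : ℝ) : ℂ) by push_cast; ring,
      Complex.norm_real, Real.norm_eq_abs, abs_sub_comm, abs_of_nonneg (by linarith)]
  rw [norm_div, h2, norm_mul, norm_zpow, norm_neg, norm_one, one_zpow, mul_one, norm_div,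
    Complex.norm_real, Real.norm_of_nonneg Real.pi_pos.le, Complex.norm_ofNat]
  have h3 : (2 : ℝ) / Real.pi ≤ 1 := by
    rw [div_le_one Real.pi_pos]; linarith [Real.pi_gt_three]
  have := Real.pi_pos
  gcongr
  linarith

lemma hasSum_two_abs_cos (t : ℝ) :
    HasSum (fun k : ℕ => 8 / Real.pi * ((-1) ^ k / (4 * ((k : ℝ) + 1) ^ 2 - 1)) *
      Real.cos (2 * (k + 1) * t)) (2 * |Real.cos t| - 4 / Real.pi) := by
  have h1 := has_pointwise_sum_fourier_series_of_summable summable_fourierCoeff_absCosCircle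
    (t : AddCircle Real.pi)
  have h2 := h1.nat_add_neg
  rw [← hasSum_nat_add_iff' 1] at h2
  have h3 := (Complex.hasSum_re h2).mul_left 2
  convert! h3 using 1
  · funext k
    have hpos : (4 * ((k : ℝ) + 1) ^ 2 - 1) ≠ 0 := by
      have : (0 : ℝ) ≤ k := by positivity
      nlinarith
    have hconj : ∀ n : ℤ, fourierCoeff absCosCircle n • fourier n (t : AddCircle Real.pi) =
        ((2 / Real.pi * (-1) ^ n / (1 - 4 * (n : ℝ) ^ 2) : ℝ) : ℂ) *
          Complex.exp (((2 * n * t : ℝ) : ℂ) * Complex.I) := by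
      intro n
      rw [fourierCoeff_absCosCircle, fourier_coe_pi, smul_eq_mul]
      congr 1
      · push_cast; ring
      · congr 1; push_cast; ring
    rw [hconj, hconj, Complex.add_re, Complex.re_ofReal_mul, Complex.re_ofReal_mul,
      Complex.exp_ofReal_mul_I_re, Complex.exp_ofReal_mul_I_re]
    have hz : ((-1 : ℝ)) ^ (-((k + 1 : ℕ) : ℤ)) = (-1) ^ (k + 1) := by
      rw [zpow_neg, zpow_natCast, ← inv_pow]; norm_num
    rw [hz, zpow_natCast]
    have hcos : Real.cos (2 * ((-((k + 1 : ℕ) : ℤ) : ℤ) : ℝ) * t) = Real.cos (2 * (k + 1) * t) := by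
      rw [← Real.cos_neg]; congr 1; push_cast; ring
    rw [hcos]
    have hden : (1 - 4 * ((-((k + 1 : ℕ) : ℤ) : ℤ) : ℝ) ^ 2) = -(4 * ((k : ℝ) + 1) ^ 2 - 1) := by
      push_cast; ring
    have hden' : (1 - 4 * ((((k + 1 : ℕ) : ℤ) : ℤ) : ℝ) ^ 2) = -(4 * ((k : ℝ) + 1) ^ 2 - 1) := by
      push_cast; ring
    rw [hden, hden']
    push_cast
    have := Real.pi_pos.ne'
    field_simp
    ring
  · rw [Finset.range_one, Finset.sum_singleton, absCosCircle_coe]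
    have h0 : fourierCoeff absCosCircle 0 • fourier 0 (t : AddCircle Real.pi) =
        ((2 / Real.pi : ℝ) : ℂ) := by
      rw [fourierCoeff_absCosCircle, fourier_coe_pi]; simp
    simp only [Nat.cast_zero, neg_zero, h0]
    rw [← Complex.ofReal_add, ← Complex.ofReal_add, ← Complex.ofReal_sub, Complex.ofReal_re]
    ring

end ErdosHooley

namespace ErdosHooley

lemma sum_range_inv_mul_sqrt_le (n : ℕ) :
    ∑ k ∈ Finset.range (n + 1), 1 / (((k : ℝ) + 1) * Real.sqrt (k + 1)) ≤
      3 - 2 / Real.sqrt (n + 1) := by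
  induction n with
  | zero => norm_num
  | succ n ih =>
    rw [Finset.sum_range_succ]
    set a := Real.sqrt ((n : ℝ) + 1) with ha
    have ha0 : 0 < a := Real.sqrt_pos.mpr (by positivity)
    have ha2 : a ^ 2 = (n : ℝ) + 1 := Real.sq_sqrt (by positivity)
    push_cast
    set b := Real.sqrt ((n : ℝ) + 1 + 1) with hb
    have hb0 : 0 < b := Real.sqrt_pos.mpr (by positivity)
    have hb2 : b ^ 2 = (n : ℝ) + 1 + 1 := Real.sq_sqrt (by positivity)
    have hab : a ≤ b := Real.sqrt_le_sqrt (by linarith)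
    rw [← hb2]
    have key : 1 / (b ^ 2 * b) ≤ 2 / a - 2 / b := by
      rw [div_sub_div _ _ ha0.ne' hb0.ne', div_le_div_iff₀ (by positivity) (by positivity)]
      have h1 : (b - a) * (b + a) = 1 := by nlinarith
      have h2 : a ≤ (b - a) * (2 * b) * b := by nlinarith [mul_nonneg (sub_nonneg.mpr hab) hb0.le]
      nlinarith
    linarith

lemma summable_inv_mul_sqrt : Summable fun k : ℕ => 1 / (((k : ℝ) + 1) * Real.sqrt (k + 1)) := by
  refine summable_of_sum_range_le (c := 3) (fun _ => by positivity) fun n => ?_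
  cases n with
  | zero => simp
  | succ n =>
    have := sum_range_inv_mul_sqrt_le n
    have h : (0 : ℝ) ≤ 2 / Real.sqrt (n + 1) := by positivity
    linarith

lemma tsum_inv_mul_sqrt_le : ∑' k : ℕ, 1 / (((k : ℝ) + 1) * Real.sqrt (k + 1)) ≤ 3 := by
  refine summable_inv_mul_sqrt.tsum_le_of_sum_range_le fun n => ?_
  cases n with
  | zero => simp
  | succ n =>
    have := sum_range_inv_mul_sqrt_le n
    have h : (0 : ℝ) ≤ 2 / Real.sqrt (n + 1) := by positivity
    linarith

/-- The coefficients of the cosine series of `2|cos t|`. -/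
noncomputable def absCosCoeff (k : ℕ) : ℝ :=
  8 / Real.pi * ((-1) ^ k / (4 * ((k : ℝ) + 1) ^ 2 - 1))

lemma abs_absCosCoeff_le (k : ℕ) : |absCosCoeff k| ≤ 1 / ((k : ℝ) + 1) ^ 2 := by
  have hk : (1 : ℝ) ≤ ((k : ℝ) + 1) ^ 2 := one_le_pow₀ (by linarith [k.cast_nonneg (α := ℝ)])
  have hpi := Real.pi_gt_three
  rw [absCosCoeff, abs_mul, abs_div, abs_div, abs_pow, abs_neg, abs_one, one_pow,
    abs_of_pos Real.pi_pos, abs_of_pos (by linarith : (0 : ℝ) < 4 * ((k : ℝ) + 1) ^ 2 - 1),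
    abs_of_pos (by norm_num : (0 : ℝ) < 8), div_mul_div_comm, mul_one,
    div_le_div_iff₀ (by nlinarith) (by positivity)]
  nlinarith

lemma hasSum_absCosCoeff : HasSum absCosCoeff (2 - 4 / Real.pi) := by
  have := hasSum_two_abs_cos 0
  simp only [mul_zero, Real.cos_zero, mul_one, abs_one] at this
  exact this

lemma log_add_four_le (k : ℕ) : Real.log ((k : ℝ) + 4) ≤ 2 * Real.sqrt (k + 1) := by
  have hk : (0 : ℝ) ≤ k := k.cast_nonneg
  have hs : 0 < Real.sqrt ((k : ℝ) + 1) := Real.sqrt_pos.mpr (by positivity)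
  have hs2 : Real.sqrt ((k : ℝ) + 1) ^ 2 = k + 1 := Real.sq_sqrt (by positivity)
  have h1 : (k : ℝ) + 4 ≤ (2 * Real.sqrt (k + 1)) ^ 2 := by nlinarith
  have h2 := Real.log_le_log (by positivity) h1
  rw [Real.log_pow, Real.log_mul (by norm_num) hs.ne'] at h2
  have h3 := Real.log_le_sub_one_of_pos hs
  have := Real.log_two_lt_d9
  push_cast at h2
  linarith

lemma norm_add_mul_I_mono {ε θ : ℝ} (hθ : 0 < θ) (k : ℕ) :
    ‖(ε + θ * Complex.I : ℂ)‖ ≤ ‖(ε + ((k + 1) * θ : ℝ) * Complex.I : ℂ)‖ := by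
  rw [Complex.norm_add_mul_I, Complex.norm_add_mul_I]
  refine Real.sqrt_le_sqrt ?_
  have hk : (0 : ℝ) ≤ k := k.cast_nonneg
  have : θ ≤ (k + 1) * θ := by nlinarith
  gcongr

lemma norm_add_mul_I_le_mul {ε θ : ℝ} (k : ℕ) :
    ‖(ε + ((k + 1) * θ : ℝ) * Complex.I : ℂ)‖ ≤ (k + 1) * ‖(ε + θ * Complex.I : ℂ)‖ := by
  rw [Complex.norm_add_mul_I, Complex.norm_add_mul_I]
  refine Real.sqrt_le_iff.mpr ⟨by positivity, ?_⟩
  rw [mul_pow, mul_pow, Real.sq_sqrt (by positivity)]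
  have hk : (0 : ℝ) ≤ k := k.cast_nonneg
  have h1 : (1 : ℝ) ≤ ((k : ℝ) + 1) ^ 2 := one_le_pow₀ (by linarith)
  nlinarith [sq_nonneg ε]

lemma abs_primeCosSum_mul_add_log_le {ε θ : ℝ} (hε : 0 < ε) (hε1 : ε ≤ 1) (hθ : 0 < θ)
    (hθ1 : θ ≤ 1) (k : ℕ) :
    |primeCosSum ε ((k + 1) * θ) + Real.log ‖(ε + θ * Complex.I : ℂ)‖| ≤
      52 * Real.sqrt (k + 1) := by
  have hk : (0 : ℝ) ≤ k := k.cast_nonneg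
  have h1 := abs_primeCosSum_add_log_le hε hε1 ((k + 1) * θ)
  have hn0 : 0 < ‖(ε + θ * Complex.I : ℂ)‖ := by
    rw [Complex.norm_add_mul_I]; positivity
  have h2 := Real.log_le_log hn0 (norm_add_mul_I_mono (ε := ε) hθ k)
  have h3 := Real.log_le_log (hn0.trans_le (norm_add_mul_I_mono (ε := ε) hθ k))
    (norm_add_mul_I_le_mul (ε := ε) (θ := θ) k)
  rw [Real.log_mul (by positivity) hn0.ne'] at h3
  have h4 : Real.log (|((k : ℝ) + 1) * θ| + 3) ≤ Real.log ((k : ℝ) + 4) := by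
    refine Real.log_le_log (by positivity) ?_
    rw [abs_of_nonneg (by positivity)]
    nlinarith
  have h5 : Real.log ((k : ℝ) + 1) ≤ Real.log ((k : ℝ) + 4) :=
    Real.log_le_log (by positivity) (by linarith)
  have h6 := log_add_four_le k
  have h7 : 1 ≤ Real.sqrt ((k : ℝ) + 1) := Real.one_le_sqrt.mpr (by linarith)
  rw [abs_le] at h1 ⊢
  constructor <;> linarith

lemma tsum_two_abs_cos_primes_le {ε θ : ℝ} (hε : 0 < ε) (hε1 : ε ≤ 1) (hθ : 0 < θ)
    (hθ1 : θ ≤ 1) :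
    ∑' p : Nat.Primes, 2 * |Real.cos (θ / 2 * Real.log p)| * (p : ℝ) ^ (-(1 + ε)) ≤
      4 / Real.pi * Real.log (1 / ε) + (2 - 4 / Real.pi) * Real.log (1 / θ) + 300 := by
  have hpi := Real.pi_gt_three
  have hsp := summable_primes_rpow hε
  have hs1 : Summable fun p : Nat.Primes =>
      (2 * |Real.cos (θ / 2 * Real.log p)| - 4 / Real.pi) * (p : ℝ) ^ (-(1 + ε)) := by
    refine summable_mul_primes_rpow hε (M := 2) fun p => ?_
    have h1 := Real.abs_cos_le_one (θ / 2 * Real.log p)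
    have h2 := abs_nonneg (Real.cos (θ / 2 * Real.log p))
    have h3 : 4 / Real.pi ≤ 2 := by rw [div_le_iff₀ Real.pi_pos]; linarith
    have h4 : 0 ≤ 4 / Real.pi := by positivity
    rw [abs_le]; constructor <;> linarith
  have hsplit : ∑' p : Nat.Primes, 2 * |Real.cos (θ / 2 * Real.log p)| * (p : ℝ) ^ (-(1 + ε)) =
      ∑' p : Nat.Primes, (2 * |Real.cos (θ / 2 * Real.log p)| - 4 / Real.pi) *
        (p : ℝ) ^ (-(1 + ε)) + 4 / Real.pi * primeCosSum ε 0 := by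
    simp only [primeCosSum, zero_mul, Real.cos_zero, one_mul]
    rw [← tsum_mul_left, ← hs1.tsum_add (hsp.mul_left _)]
    exact tsum_congr fun p => by ring
  have hinv : Summable fun k : ℕ => 1 / ((k : ℝ) + 1) ^ 2 := by
    have := (summable_nat_add_iff 1).mpr hasSum_zeta_two.summable
    simpa using this
  have hdouble : Summable (Function.uncurry fun (p : Nat.Primes) (k : ℕ) =>
      absCosCoeff k * Real.cos ((k + 1) * θ * Real.log p) * (p : ℝ) ^ (-(1 + ε))) := by
    have hprod : Summable fun x : Nat.Primes × ℕ =>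
        (x.1 : ℝ) ^ (-(1 + ε)) * (1 / ((x.2 : ℝ) + 1) ^ 2) :=
      Summable.mul_of_nonneg (f := fun p : Nat.Primes => (p : ℝ) ^ (-(1 + ε)))
        (g := fun k : ℕ => 1 / ((k : ℝ) + 1) ^ 2) hsp hinv
        (fun p => Real.rpow_nonneg (Nat.cast_nonneg _) _)
        (fun k => div_nonneg zero_le_one (sq_nonneg _))
    refine Summable.of_norm_bounded hprod fun x => ?_
    simp only [Function.uncurry]
    rw [norm_mul, norm_mul, Real.norm_eq_abs, Real.norm_eq_abs,
      Real.norm_of_nonneg (by positivity : 0 ≤ (x.1 : ℝ) ^ (-(1 + ε))), mul_comm]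
    gcongr
    calc |absCosCoeff x.2| * |Real.cos ((x.2 + 1) * θ * Real.log x.1)|
        ≤ 1 / ((x.2 : ℝ) + 1) ^ 2 * 1 := by
          gcongr
          · exact abs_absCosCoeff_le _
          · exact Real.abs_cos_le_one _
      _ = _ := mul_one _
  have hswap : ∑' p : Nat.Primes, (2 * |Real.cos (θ / 2 * Real.log p)| - 4 / Real.pi) *
        (p : ℝ) ^ (-(1 + ε)) = ∑' k : ℕ, absCosCoeff k * primeCosSum ε ((k + 1) * θ) := by
    have h1 : ∀ p : Nat.Primes, (2 * |Real.cos (θ / 2 * Real.log p)| - 4 / Real.pi) *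
        (p : ℝ) ^ (-(1 + ε)) = ∑' k : ℕ, absCosCoeff k * Real.cos ((k + 1) * θ * Real.log p) *
          (p : ℝ) ^ (-(1 + ε)) := by
      intro p
      rw [tsum_mul_right, ← (hasSum_two_abs_cos (θ / 2 * Real.log p)).tsum_eq]
      congr 1
      refine tsum_congr fun k => ?_
      rw [absCosCoeff]
      congr 2; ring
    refine (tsum_congr h1).trans (hdouble.tsum_comm.symm.trans (tsum_congr fun k => ?_))
    rw [primeCosSum, ← tsum_mul_left]
    exact tsum_congr fun p => by ring
  set N := Real.log ‖(ε + θ * Complex.I : ℂ)‖ with hN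
  have hterm : ∀ k : ℕ, |absCosCoeff k * (primeCosSum ε ((k + 1) * θ) + N)| ≤
      52 * (1 / (((k : ℝ) + 1) * Real.sqrt (k + 1))) := by
    intro k
    rw [abs_mul]
    have h1 := abs_primeCosSum_mul_add_log_le hε hε1 hθ hθ1 k
    have hs : 0 < Real.sqrt ((k : ℝ) + 1) := Real.sqrt_pos.mpr (by positivity)
    have hs2 : Real.sqrt ((k : ℝ) + 1) ^ 2 = k + 1 := Real.sq_sqrt (by positivity)
    calc _ ≤ 1 / ((k : ℝ) + 1) ^ 2 * (52 * Real.sqrt (k + 1)) := by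
          gcongr
          exact abs_absCosCoeff_le k
      _ = _ := by
          generalize Real.sqrt ((k : ℝ) + 1) = r at hs hs2 ⊢
          rw [← hs2]
          field_simp
  have hsumE : Summable fun k : ℕ => absCosCoeff k * (primeCosSum ε ((k + 1) * θ) + N) :=
    Summable.of_norm_bounded (summable_inv_mul_sqrt.mul_left 52) hterm
  have hE : ∑' k : ℕ, absCosCoeff k * (primeCosSum ε ((k + 1) * θ) + N) ≤ 156 := by
    have h1 := hsumE.tsum_le_tsum (fun k => (le_abs_self _).trans (hterm k))
      (summable_inv_mul_sqrt.mul_left 52)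
    rw [tsum_mul_left] at h1
    linarith [tsum_inv_mul_sqrt_le]
  have hfinal : ∑' k : ℕ, absCosCoeff k * primeCosSum ε ((k + 1) * θ) =
      ∑' k : ℕ, absCosCoeff k * (primeCosSum ε ((k + 1) * θ) + N) -
        (2 - 4 / Real.pi) * N := by
    rw [← (hasSum_absCosCoeff.mul_right N).tsum_eq,
      ← hsumE.tsum_sub (hasSum_absCosCoeff.summable.mul_right N)]
    exact tsum_congr fun k => by ring
  have hN' : -N ≤ Real.log (1 / θ) := by
    rw [one_div, Real.log_inv, neg_le_neg_iff, hN]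
    refine Real.log_le_log hθ ?_
    have := Complex.abs_im_le_norm (ε + θ * Complex.I : ℂ)
    simp only [Complex.add_im, Complex.ofReal_im, Complex.mul_im, Complex.ofReal_re,
      Complex.I_im, mul_one, Complex.I_re, mul_zero, add_zero, zero_add] at this
    exact (le_abs_self θ).trans this
  have hS0 : primeCosSum ε 0 ≤ Real.log (1 / ε) + 50 := by
    have h1 := abs_primeCosSum_add_log_le hε hε1 0
    rw [Complex.ofReal_zero, zero_mul, add_zero, Complex.norm_real, Real.norm_of_nonneg hε.le,
      abs_zero, zero_add, abs_le] at h1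
    have h3 : Real.log 3 ≤ 2 := by
      have := Real.log_le_sub_one_of_pos (by norm_num : (0 : ℝ) < 3); linarith
    rw [one_div, Real.log_inv]
    linarith [h1.2]
  have hpi4 : 4 / Real.pi ≤ 4 / 3 := by gcongr
  have hpi0 : 0 < 4 / Real.pi := by positivity
  have h1 : (2 - 4 / Real.pi) * (-N) ≤ (2 - 4 / Real.pi) * Real.log (1 / θ) :=
    mul_le_mul_of_nonneg_left hN' (by linarith)
  have h2 : 4 / Real.pi * primeCosSum ε 0 ≤ 4 / Real.pi * (Real.log (1 / ε) + 50) :=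
    mul_le_mul_of_nonneg_left hS0 hpi0.le
  rw [hsplit, hswap, hfinal]
  nlinarith

end ErdosHooley

namespace ErdosHooley

lemma sum_le_exp_sum_primesBelow {f g : ℕ → ℝ} (hf0 : ∀ n, 0 ≤ f n) (hf1 : f 1 = 1)
    (hmul : ∀ {m n : ℕ}, m.Coprime n → f (m * n) = f m * f n)
    (hs : ∀ {p : ℕ}, p.Prime → Summable fun k : ℕ => f (p ^ k)) {N : ℕ}
    (hg : ∀ {p : ℕ}, p.Prime → p < N → ∑' k : ℕ, f (p ^ k) ≤ 1 + g p)
    {S : Finset ℕ} (hS : ∀ a ∈ S, a ∈ N.smoothNumbers) :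
    ∑ a ∈ S, f a ≤ Real.exp (∑ p ∈ N.primesBelow, g p) := by
  classical
  have hnorm : ∀ {p : ℕ}, p.Prime → Summable fun k : ℕ => ‖f (p ^ k)‖ := fun hp =>
    (hs hp).congr fun k => (Real.norm_of_nonneg (hf0 _)).symm
  have hsum := (EulerProduct.summable_and_hasSum_smoothNumbers_prod_primesBelow_tsum hf1 hmul
    hnorm N).2
  have h1 : ∑ a ∈ S, f a ≤ ∏ p ∈ N.primesBelow, ∑' k : ℕ, f (p ^ k) := by
    have h2 : ∑ a ∈ S, f a = ∑ a ∈ S.subtype (· ∈ N.smoothNumbers), f a := by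
      rw [Finset.sum_subtype_of_mem _ hS]
    rw [h2]
    exact sum_le_hasSum _ (fun a _ => hf0 a) hsum
  refine h1.trans ?_
  rw [Real.exp_sum]
  refine Finset.prod_le_prod (fun p _ => tsum_nonneg fun k => hf0 _) fun p hp => ?_
  have hp' := Nat.mem_primesBelow.mp hp
  refine (hg hp'.2 hp'.1).trans ?_
  linarith [Real.add_one_le_exp (g p)]

lemma sum_primeFactors_log_le {n : ℕ} (hn : n ≠ 0) :
    ∑ p ∈ n.primeFactors, Real.log p ≤ Real.log n := by
  rw [← Real.log_prod (fun p hp => by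
    exact_mod_cast (Nat.prime_of_mem_primeFactors hp).ne_zero)]
  rw [← Nat.cast_prod]
  refine Real.log_le_log ?_ ?_
  · exact_mod_cast Finset.prod_pos fun p hp => (Nat.prime_of_mem_primeFactors hp).pos
  · exact_mod_cast Nat.le_of_dvd (Nat.pos_of_ne_zero hn) (Nat.prod_primeFactors_dvd n)

lemma sum_log_div_primesBelow_le {N : ℕ} (hN : 1 ≤ N) :
    ∑ p ∈ (N + 1).primesBelow, Real.log p / p ≤ Real.log N + Real.log 4 := by
  have hN0 : (0 : ℝ) < N := by exact_mod_cast hN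
  have hmem : ∀ p ∈ (N + 1).primesBelow, 1 ≤ p := fun p hp =>
    (Nat.mem_primesBelow.mp hp).2.one_le
  have h1 : ∑ p ∈ (N + 1).primesBelow, Real.log p * (N / p : ℕ) ≤ N * Real.log N := by
    calc ∑ p ∈ (N + 1).primesBelow, Real.log p * (N / p : ℕ)
        = ∑ p ∈ (N + 1).primesBelow, ∑ n ∈ Finset.Ioc 0 N, if p ∣ n then Real.log p else 0 := by
          refine Finset.sum_congr rfl fun p _ => ?_
          rw [← Finset.sum_filter, Finset.sum_const, Nat.Ioc_filter_dvd_card_eq_div, nsmul_eq_mul,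
            mul_comm]
      _ = ∑ n ∈ Finset.Ioc 0 N, ∑ p ∈ (N + 1).primesBelow, if p ∣ n then Real.log p else 0 :=
          Finset.sum_comm
      _ ≤ ∑ n ∈ Finset.Ioc 0 N, Real.log N := by
          refine Finset.sum_le_sum fun n hn => ?_
          rw [Finset.mem_Ioc] at hn
          rw [← Finset.sum_filter]
          refine le_trans ?_ ((sum_primeFactors_log_le hn.1.ne').trans
            (Real.log_le_log (by exact_mod_cast hn.1) (by exact_mod_cast hn.2)))
          refine Finset.sum_le_sum_of_subset_of_nonneg ?_ ?_
          · intro p hp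
            rw [Finset.mem_filter, Nat.mem_primesBelow] at hp
            exact Nat.mem_primeFactors.mpr ⟨hp.1.2, hp.2, hn.1.ne'⟩
          · intro p _ _
            exact Real.log_natCast_nonneg p
      _ = N * Real.log N := by simp
  have h2 : ∑ p ∈ (N + 1).primesBelow, Real.log p ≤ Real.log 4 * N := by
    have := Chebyshev.theta_le_log4_mul_x hN0.le
    rw [Chebyshev.theta_eq_sum_primesLE_log] at this
    exact this
  have h3 : ∑ p ∈ (N + 1).primesBelow, (N * (Real.log p / p)) ≤
      ∑ p ∈ (N + 1).primesBelow, (Real.log p * (N / p : ℕ) + Real.log p) := by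
    refine Finset.sum_le_sum fun p hp => ?_
    have hp1 := hmem p hp
    have hlog : 0 ≤ Real.log p := Real.log_natCast_nonneg p
    have : (N : ℝ) / p ≤ (N / p : ℕ) + 1 := by
      rw [← Nat.floor_div_eq_div (K := ℝ)]
      exact (Nat.lt_floor_add_one _).le
    calc N * (Real.log p / p) = Real.log p * (N / p) := by ring
      _ ≤ Real.log p * ((N / p : ℕ) + 1) := by gcongr
      _ = _ := by ring
  rw [← Finset.mul_sum, Finset.sum_add_distrib] at h3
  nlinarith

end ErdosHooley

namespace ErdosHooley

open ArithmeticFunction in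
/-- The completely multiplicative function `n ↦ n^{iθ}`. -/
noncomputable def twist (θ : ℝ) : ArithmeticFunction ℂ :=
  ⟨fun n => if n = 0 then 0 else Complex.exp ((θ * Real.log n : ℝ) * Complex.I), by simp⟩

lemma twist_apply (θ : ℝ) {n : ℕ} (hn : n ≠ 0) :
    twist θ n = Complex.exp ((θ * Real.log n : ℝ) * Complex.I) := by
  simp [twist, hn]

lemma norm_twist (θ : ℝ) {n : ℕ} (hn : n ≠ 0) : ‖twist θ n‖ = 1 := by
  rw [twist_apply θ hn, Complex.norm_exp_ofReal_mul_I]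

lemma isMultiplicative_twist (θ : ℝ) : (twist θ).IsMultiplicative := by
  rw [ArithmeticFunction.IsMultiplicative.iff_ne_zero]
  refine ⟨by simp [twist], fun {m n} hm hn _ => ?_⟩
  rw [twist_apply θ hm, twist_apply θ hn, twist_apply θ (mul_ne_zero hm hn), ← Complex.exp_add,
    Nat.cast_mul, Real.log_mul (by exact_mod_cast hm) (by exact_mod_cast hn)]
  push_cast
  ring_nf

/-- The twisted divisor sum `∑_{d ∣ n} d^{iθ}`. -/
noncomputable def divisorTwist (θ : ℝ) : ArithmeticFunction ℂ :=
  twist θ * (ArithmeticFunction.zeta : ArithmeticFunction ℂ)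

lemma isMultiplicative_divisorTwist (θ : ℝ) : (divisorTwist θ).IsMultiplicative :=
  (isMultiplicative_twist θ).mul ArithmeticFunction.isMultiplicative_zeta.natCast

lemma divisorTwist_apply (θ : ℝ) (n : ℕ) :
    divisorTwist θ n = ∑ d ∈ n.divisors, twist θ d :=
  ArithmeticFunction.coe_mul_zeta_apply

lemma norm_divisorTwist_le (θ : ℝ) (n : ℕ) : ‖divisorTwist θ n‖ ≤ n.divisors.card := by
  rw [divisorTwist_apply]
  refine (norm_sum_le _ _).trans ?_
  rw [Finset.sum_congr rfl fun d hd => norm_twist θ (Nat.pos_of_mem_divisors hd).ne']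
  simp

lemma norm_one_add_exp_mul_I (t : ℝ) :
    ‖1 + Complex.exp ((t : ℝ) * Complex.I)‖ = 2 * |Real.cos (t / 2)| := by
  have h : 1 + Complex.exp ((t : ℝ) * Complex.I) =
      Complex.exp ((t / 2 : ℝ) * Complex.I) * ((2 * Real.cos (t / 2) : ℝ) : ℂ) := by
    push_cast
    rw [Complex.two_cos, mul_add, ← Complex.exp_add, ← Complex.exp_add]
    ring_nf
    rw [Complex.exp_zero, add_comm]
  rw [h, norm_mul, Complex.norm_exp_ofReal_mul_I, one_mul, Complex.norm_real, Real.norm_eq_abs,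
    abs_mul, abs_two]

lemma norm_divisorTwist_prime (θ : ℝ) {p : ℕ} (hp : p.Prime) :
    ‖divisorTwist θ p‖ = 2 * |Real.cos (θ / 2 * Real.log p)| := by
  rw [divisorTwist_apply, hp.divisors, Finset.sum_pair hp.one_lt.ne,
    (isMultiplicative_twist θ).map_one, twist_apply θ hp.ne_zero, norm_one_add_exp_mul_I]
  ring_nf

lemma continuous_norm_divisorTwist (n : ℕ) : Continuous fun θ : ℝ => ‖divisorTwist θ n‖ := by
  simp only [divisorTwist_apply]
  refine continuous_norm.comp (continuous_finsetSum _ fun d hd => ?_)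
  simp only [twist_apply _ (Nat.pos_of_mem_divisors hd).ne']
  fun_prop

lemma integral_one_sub_mul_cos_nonneg (v : ℝ) :
    0 ≤ ∫ θ in (0 : ℝ)..1, (1 - θ) * Real.cos (θ * v) := by
  rcases eq_or_ne v 0 with rfl | hv
  · simp only [mul_zero, Real.cos_zero, mul_one]
    exact intervalIntegral.integral_nonneg zero_le_one fun θ hθ => by linarith [hθ.2]
  have hderiv : ∀ θ ∈ Set.uIcc (0 : ℝ) 1, HasDerivAt
      (fun θ => (1 - θ) * (Real.sin (θ * v) / v) - Real.cos (θ * v) / v ^ 2)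
      ((1 - θ) * Real.cos (θ * v)) θ := by
    intro θ _
    have h1 : HasDerivAt (fun θ : ℝ => θ * v) v θ := by simpa using (hasDerivAt_id θ).mul_const v
    have h2 : HasDerivAt (fun θ : ℝ => 1 - θ) (-1) θ := by simpa using (hasDerivAt_id θ).const_sub 1
    have h3 := (h2.mul (h1.sin.div_const v)).sub (h1.cos.div_const (v ^ 2))
    convert! h3 using 1
    field_simp
    ring
  rw [intervalIntegral.integral_eq_sub_of_hasDerivAt hderiv
    (Continuous.intervalIntegrable (by fun_prop) _ _)]
  simp only [sub_self, zero_mul, one_mul, Real.sin_zero, zero_div, mul_zero, Real.cos_zero]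
  have := Real.cos_le_one v
  have h : 0 ≤ (1 - Real.cos v) / v ^ 2 := div_nonneg (by linarith) (sq_nonneg v)
  rw [sub_div] at h
  linarith

lemma le_integral_one_sub_mul_cos {v : ℝ} (hv : |v| ≤ 1 / 2) :
    7 / 16 ≤ ∫ θ in (0 : ℝ)..1, (1 - θ) * Real.cos (θ * v) := by
  have h1 : ∫ θ in (0 : ℝ)..1, (1 - θ) * (7 / 8) = 7 / 16 := by
    rw [intervalIntegral.integral_mul_const, intervalIntegral.integral_sub (by simp) (by simp)]
    simp
    norm_num
  rw [← h1]
  refine intervalIntegral.integral_mono_on zero_le_one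
    (Continuous.intervalIntegrable (by fun_prop) _ _)
    (Continuous.intervalIntegrable (by fun_prop) _ _) fun θ hθ => ?_
  have h2 := Real.one_sub_sq_div_two_le_cos (x := θ * v)
  have h3 : (θ * v) ^ 2 ≤ 1 / 4 := by
    rw [mul_pow]
    have h4 : v ^ 2 ≤ 1 / 4 := by
      rw [← sq_abs]; nlinarith [abs_nonneg v]
    have h5 : θ ^ 2 ≤ 1 := by nlinarith [hθ.1, hθ.2]
    nlinarith [sq_nonneg v, sq_nonneg θ]
  exact mul_le_mul_of_nonneg_left (by linarith) (by linarith [hθ.2])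

lemma hooleyDelta_le_integral (n : ℕ) :
    (hooleyDelta n : ℝ) ≤ 16 / 7 * ∫ θ in (0 : ℝ)..1, ‖divisorTwist θ n‖ := by
  obtain ⟨u, hu⟩ := exists_hooleyDelta_eq_windowCount n
  set c := u + 1 / 2 with hc
  have h1 : 7 / 16 * (hooleyDelta n : ℝ) ≤
      ∑ d ∈ n.divisors, ∫ θ in (0 : ℝ)..1, (1 - θ) * Real.cos (θ * (Real.log d - c)) := by
    rw [hu, windowCount, mul_comm, ← nsmul_eq_mul, ← Finset.sum_const]
    refine le_trans (Finset.sum_le_sum fun d hd => ?_)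
      (Finset.sum_le_sum_of_subset_of_nonneg (Finset.filter_subset _ _)
        fun d _ _ => integral_one_sub_mul_cos_nonneg _)
    rw [Finset.mem_filter] at hd
    have hd0 : (0 : ℝ) < d := by exact_mod_cast Nat.pos_of_mem_divisors hd.1
    refine le_integral_one_sub_mul_cos ?_
    have h2 := (Real.lt_log_iff_exp_lt hd0).mpr hd.2.1
    have h3 := (Real.log_le_iff_le_exp hd0).mpr hd.2.2
    rw [abs_le]; constructor <;> linarith
  have h2 : ∑ d ∈ n.divisors, ∫ θ in (0 : ℝ)..1, (1 - θ) * Real.cos (θ * (Real.log d - c)) ≤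
      ∫ θ in (0 : ℝ)..1, ‖divisorTwist θ n‖ := by
    rw [← intervalIntegral.integral_finsetSum
      fun d _ => Continuous.intervalIntegrable (by fun_prop) _ _]
    refine intervalIntegral.integral_mono_on zero_le_one
      (Continuous.intervalIntegrable (by fun_prop) _ _)
      (Continuous.intervalIntegrable (continuous_norm_divisorTwist n) _ _) fun θ hθ => ?_
    rw [← Finset.mul_sum]
    have h3 : ∑ d ∈ n.divisors, Real.cos (θ * (Real.log d - c)) =
        (Complex.exp ((-(θ * c) : ℝ) * Complex.I) * divisorTwist θ n).re := by
      rw [divisorTwist_apply, Finset.mul_sum, Complex.re_sum]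
      refine Finset.sum_congr rfl fun d hd => ?_
      rw [twist_apply θ (Nat.pos_of_mem_divisors hd).ne', ← Complex.exp_add, ← add_mul,
        ← Complex.ofReal_add, Complex.exp_ofReal_mul_I_re]
      ring_nf
    have h4 : ∑ d ∈ n.divisors, Real.cos (θ * (Real.log d - c)) ≤ ‖divisorTwist θ n‖ := by
      rw [h3]
      refine (Complex.re_le_norm _).trans ?_
      rw [norm_mul, Complex.norm_exp_ofReal_mul_I, one_mul]
    have h5 := norm_nonneg (divisorTwist θ n)
    have h6 : (1 - θ) * ∑ d ∈ n.divisors, Real.cos (θ * (Real.log d - c)) ≤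
        (1 - θ) * ‖divisorTwist θ n‖ := mul_le_mul_of_nonneg_left h4 (by linarith [hθ.2])
    nlinarith [hθ.1]
  linarith

end ErdosHooley

namespace ErdosHooley

lemma hasSum_add_three_mul_half_pow :
    HasSum (fun k : ℕ => ((k : ℝ) + 3) * (1 / 2) ^ k) 8 := by
  have h1 := hasSum_coe_mul_geometric_of_norm_lt_one (𝕜 := ℝ) (r := 1 / 2) (by norm_num)
  have h2 := (hasSum_geometric_of_lt_one (r := (1 / 2 : ℝ)) (by norm_num) (by norm_num)).mul_left 3
  have h3 := h1.add h2
  convert! h3 using 1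
  · ext k; ring
  · norm_num

lemma card_divisors_prime_pow {p : ℕ} (hp : p.Prime) (k : ℕ) : (p ^ k).divisors.card = k + 1 := by
  rw [Nat.divisors_prime_pow hp, Finset.card_map, Finset.card_range]

/-- The summand of the Dirichlet series of `|∑_{d ∣ n} d^{iθ}|` at `1 + ε`. -/
noncomputable def twistTerm (ε θ : ℝ) (n : ℕ) : ℝ := ‖divisorTwist θ n‖ * (n : ℝ) ^ (-(1 + ε))

lemma twistTerm_nonneg (ε θ : ℝ) (n : ℕ) : 0 ≤ twistTerm ε θ n :=
  mul_nonneg (norm_nonneg _) (Real.rpow_nonneg (Nat.cast_nonneg _) _)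

lemma twistTerm_one (ε θ : ℝ) : twistTerm ε θ 1 = 1 := by
  simp [twistTerm, (isMultiplicative_divisorTwist θ).map_one]

lemma twistTerm_mul (ε θ : ℝ) {m n : ℕ} (h : m.Coprime n) :
    twistTerm ε θ (m * n) = twistTerm ε θ m * twistTerm ε θ n := by
  rw [twistTerm, (isMultiplicative_divisorTwist θ).map_mul_of_coprime h, norm_mul, Nat.cast_mul,
    Real.mul_rpow (Nat.cast_nonneg _) (Nat.cast_nonneg _), twistTerm, twistTerm]
  ring

lemma twistTerm_prime_pow_add_two_le {ε : ℝ} (hε : 0 < ε) (θ : ℝ) {p : ℕ} (hp : p.Prime) (k : ℕ) :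
    twistTerm ε θ (p ^ (k + 2)) ≤ 1 / (p : ℝ) ^ 2 * (((k : ℝ) + 3) * (1 / 2) ^ k) := by
  have hp2 : (2 : ℝ) ≤ p := by exact_mod_cast hp.two_le
  have h1 : ‖divisorTwist θ (p ^ (k + 2))‖ ≤ k + 3 := by
    refine (norm_divisorTwist_le _ _).trans ?_
    rw [card_divisors_prime_pow hp]
    push_cast; linarith
  have h2 : ((p ^ (k + 2) : ℕ) : ℝ) ^ (-(1 + ε)) ≤ 1 / (p : ℝ) ^ 2 * (1 / 2) ^ k := by
    calc ((p ^ (k + 2) : ℕ) : ℝ) ^ (-(1 + ε)) ≤ ((p ^ (k + 2) : ℕ) : ℝ) ^ (-1 : ℝ) := by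
          refine Real.rpow_le_rpow_of_exponent_le ?_ (by linarith)
          exact_mod_cast Nat.one_le_pow _ _ hp.pos
      _ = 1 / (p : ℝ) ^ 2 * (1 / p) ^ k := by
          rw [Real.rpow_neg_one]; push_cast; rw [one_div_pow, pow_add]; field_simp
      _ ≤ _ := by gcongr
  calc twistTerm ε θ (p ^ (k + 2)) ≤ (k + 3) * (1 / (p : ℝ) ^ 2 * (1 / 2) ^ k) := by
        rw [twistTerm]; gcongr
    _ = _ := by ring

lemma summable_twistTerm_prime_pow {ε : ℝ} (hε : 0 < ε) (θ : ℝ) {p : ℕ} (hp : p.Prime) :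
    Summable fun k : ℕ => twistTerm ε θ (p ^ k) :=
  (summable_nat_add_iff 2).mp <| Summable.of_nonneg_of_le (fun _ => twistTerm_nonneg _ _ _)
    (fun k => twistTerm_prime_pow_add_two_le hε θ hp k)
    (hasSum_add_three_mul_half_pow.summable.mul_left _)

lemma tsum_twistTerm_prime_pow_le {ε : ℝ} (hε : 0 < ε) (θ : ℝ) {p : ℕ} (hp : p.Prime) :
    ∑' k : ℕ, twistTerm ε θ (p ^ k) ≤
      1 + (2 * |Real.cos (θ / 2 * Real.log p)| * (p : ℝ) ^ (-(1 + ε)) + 8 * (1 / (p : ℝ) ^ 2)) := by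
  have hs := summable_twistTerm_prime_pow hε θ hp
  rw [← hs.sum_add_tsum_nat_add 2, Finset.sum_range_succ, Finset.sum_range_one, pow_zero, pow_one,
    twistTerm_one, twistTerm, norm_divisorTwist_prime θ hp]
  have h := ((summable_nat_add_iff 2).mpr hs).tsum_le_tsum
    (fun k => twistTerm_prime_pow_add_two_le hε θ hp k)
    (hasSum_add_three_mul_half_pow.summable.mul_left _)
  rw [tsum_mul_left, hasSum_add_three_mul_half_pow.tsum_eq] at h
  linarith

lemma sum_primesBelow_le_tsum {g : ℕ → ℝ} (hg : ∀ n, 0 ≤ g n)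
    (hs : Summable fun p : Nat.Primes => g p) (N : ℕ) :
    ∑ p ∈ N.primesBelow, g p ≤ ∑' p : Nat.Primes, g p := by
  classical
  let S : Finset Nat.Primes := N.primesBelow.subtype Nat.Prime
  have h : ∑ p ∈ N.primesBelow, g p = ∑ p ∈ S, g p :=
    (Finset.sum_subtype_of_mem g fun p hp => (Nat.mem_primesBelow.mp hp).2).symm
  rw [h]
  exact hs.sum_le_tsum S fun p _ => hg p

lemma sum_twistTerm_le {ε θ : ℝ} (hε : 0 < ε) (hε1 : ε ≤ 1) (hθ : 0 < θ) (hθ1 : θ ≤ 1) (N : ℕ) :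
    ∑ a ∈ Finset.Icc 1 N, twistTerm ε θ a ≤
      Real.exp 316 * (1 / ε) ^ (4 / Real.pi) * θ ^ (4 / Real.pi - 2) := by
  have h1 := sum_le_exp_sum_primesBelow (twistTerm_nonneg ε θ) (twistTerm_one ε θ)
    (twistTerm_mul ε θ) (summable_twistTerm_prime_pow hε θ) (N := N + 1)
    (g := fun p => 2 * |Real.cos (θ / 2 * Real.log p)| * (p : ℝ) ^ (-(1 + ε)) +
      8 * (1 / (p : ℝ) ^ 2))
    (fun hp _ => tsum_twistTerm_prime_pow_le hε θ hp) (S := Finset.Icc 1 N) (fun a ha => by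
      rw [Finset.mem_Icc] at ha
      exact Nat.mem_smoothNumbers_of_lt ha.1 (Nat.lt_succ_of_le ha.2))
  refine h1.trans ?_
  have hs1 : Summable fun p : Nat.Primes =>
      2 * |Real.cos (θ / 2 * Real.log p)| * (p : ℝ) ^ (-(1 + ε)) := by
    refine summable_mul_primes_rpow hε (M := 2) fun p => ?_
    rw [abs_mul, abs_two, abs_abs]
    linarith [Real.abs_cos_le_one (θ / 2 * Real.log p)]
  have h2 := sum_primesBelow_le_tsum
    (g := fun p => 2 * |Real.cos (θ / 2 * Real.log p)| * (p : ℝ) ^ (-(1 + ε)))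
    (fun n => by positivity) hs1 (N + 1)
  have h3 := sum_primesBelow_le_tsum (g := fun p => 1 / (p : ℝ) ^ 2)
    (fun n => by positivity) summable_primes_inv_sq (N + 1)
  have h4 := tsum_two_abs_cos_primes_le hε hε1 hθ hθ1
  have h5 := tsum_primes_inv_sq_le
  rw [Finset.sum_add_distrib, ← Finset.mul_sum]
  rw [Real.rpow_def_of_pos (by positivity : 0 < 1 / ε), Real.rpow_def_of_pos hθ, ← Real.exp_add,
    ← Real.exp_add, Real.exp_le_exp]
  have h6 : Real.log (1 / θ) = -Real.log θ := by rw [one_div, Real.log_inv]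
  rw [h6] at h4
  linarith

lemma sum_hooleyDelta_div_le {x : ℝ} (hx : Real.exp 1 ≤ x) :
    ∑ a ∈ Finset.Icc 1 ⌊x⌋₊, (hooleyDelta a : ℝ) / a ≤
      Real.exp 321 * Real.log x ^ (4 / Real.pi) := by
  have hx0 : 0 < x := (Real.exp_pos 1).trans_le hx
  have hL : 1 ≤ Real.log x := (Real.le_log_iff_exp_le hx0).mpr hx
  set L := Real.log x with hLdef
  have hε : 0 < 1 / L := by positivity
  have hε1 : 1 / L ≤ 1 := by rw [div_le_one (by positivity)]; exact hL
  have hpi3 := Real.pi_gt_three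
  have hpi4 : Real.pi < 3.15 := Real.pi_lt_d2
  have hr : 1.26 ≤ 4 / Real.pi := by rw [le_div_iff₀ Real.pi_pos]; linarith
  have hterm : ∀ a ∈ Finset.Icc 1 ⌊x⌋₊, (hooleyDelta a : ℝ) / a ≤
      16 / 7 * Real.exp 1 * ∫ θ in (0 : ℝ)..1, twistTerm (1 / L) θ a := by
    intro a ha
    rw [Finset.mem_Icc] at ha
    have ha0 : (0 : ℝ) < a := by exact_mod_cast ha.1
    have hax : (a : ℝ) ≤ x := (Nat.le_floor_iff hx0.le).mp ha.2
    have h1 := hooleyDelta_le_integral a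
    have h2 : 1 / (a : ℝ) ≤ Real.exp 1 * (a : ℝ) ^ (-(1 + 1 / L)) := by
      rw [neg_add, Real.rpow_add ha0, Real.rpow_neg_one, one_div]
      have h3 : 1 ≤ Real.exp 1 * (a : ℝ) ^ (-(1 / L)) := by
        rw [Real.rpow_def_of_pos ha0, ← Real.exp_add]
        refine Real.one_le_exp ?_
        have h4 : Real.log a ≤ L := Real.log_le_log ha0 hax
        have h5 : Real.log a * (1 / L) ≤ 1 := by
          rw [mul_one_div, div_le_one (by positivity)]; exact h4
        linarith
      have : 0 < (a : ℝ)⁻¹ := by positivity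
      nlinarith
    have h3 : 0 ≤ ∫ θ in (0 : ℝ)..1, ‖divisorTwist θ a‖ :=
      intervalIntegral.integral_nonneg zero_le_one fun _ _ => norm_nonneg _
    simp only [twistTerm]
    rw [intervalIntegral.integral_mul_const]
    calc (hooleyDelta a : ℝ) / a = hooleyDelta a * (1 / a) := by ring
      _ ≤ (16 / 7 * ∫ θ in (0 : ℝ)..1, ‖divisorTwist θ a‖) *
          (Real.exp 1 * (a : ℝ) ^ (-(1 + 1 / L))) := by gcongr
      _ = _ := by ring
  have hcont : ∀ a : ℕ, Continuous fun θ => twistTerm (1 / L) θ a := fun a =>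
    (continuous_norm_divisorTwist a).mul_const _
  have hcongr : ∑ a ∈ Finset.Icc 1 ⌊x⌋₊, ∫ θ in (0 : ℝ)..1, twistTerm (1 / L) θ a ≤
      Real.exp 316 * L ^ (4 / Real.pi) * 4 := by
    rw [← intervalIntegral.integral_finsetSum
      fun a _ => Continuous.intervalIntegrable (hcont a) _ _]
    have hri : IntervalIntegrable (fun θ : ℝ => Real.exp 316 * L ^ (4 / Real.pi) *
        θ ^ (4 / Real.pi - 2)) MeasureTheory.volume 0 1 :=
      (intervalIntegral.intervalIntegrable_rpow' (by linarith)).const_mul _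
    refine (intervalIntegral.integral_mono_on_of_le_Ioo zero_le_one
      (Continuous.intervalIntegrable (continuous_finsetSum _ fun a _ => hcont a) _ _)
      hri fun θ hθ => ?_).trans ?_
    · have := sum_twistTerm_le hε hε1 hθ.1 hθ.2.le ⌊x⌋₊
      rwa [one_div_one_div] at this
    · rw [intervalIntegral.integral_const_mul, integral_rpow (Or.inl (by linarith)),
        Real.one_rpow, Real.zero_rpow (by linarith)]
      gcongr
      rw [sub_zero, div_le_iff₀ (by linarith)]
      linarith
  calc ∑ a ∈ Finset.Icc 1 ⌊x⌋₊, (hooleyDelta a : ℝ) / a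
      ≤ ∑ a ∈ Finset.Icc 1 ⌊x⌋₊, 16 / 7 * Real.exp 1 *
          ∫ θ in (0 : ℝ)..1, twistTerm (1 / L) θ a := Finset.sum_le_sum hterm
    _ ≤ 16 / 7 * Real.exp 1 * (Real.exp 316 * L ^ (4 / Real.pi) * 4) := by
        rw [← Finset.mul_sum]; gcongr
    _ = 64 / 7 * Real.exp 317 * L ^ (4 / Real.pi) := by
        rw [show (317 : ℝ) = 316 + 1 by norm_num, Real.exp_add]; ring
    _ ≤ Real.exp 4 * Real.exp 317 * L ^ (4 / Real.pi) := by
        gcongr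
        have h1 := Real.add_one_le_exp (1 : ℝ)
        have h2 : Real.exp 4 = Real.exp 1 ^ 4 := by rw [← Real.exp_nat_mul]; norm_num
        rw [h2]
        calc (64 / 7 : ℝ) ≤ 2 ^ 4 := by norm_num
          _ ≤ Real.exp 1 ^ 4 := by gcongr; linarith
    _ = _ := by rw [← Real.exp_add]; norm_num

end ErdosHooley

namespace ErdosHooley

/-- The arithmetic function `n ↦ n^β`. -/
noncomputable def rpowArith (β : ℝ) : ArithmeticFunction ℝ :=
  ⟨fun n => if n = 0 then 0 else (n : ℝ) ^ β, by simp⟩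

lemma rpowArith_apply (β : ℝ) {n : ℕ} (hn : n ≠ 0) : rpowArith β n = (n : ℝ) ^ β := by
  simp [rpowArith, hn]

lemma isMultiplicative_rpowArith (β : ℝ) : (rpowArith β).IsMultiplicative := by
  rw [ArithmeticFunction.IsMultiplicative.iff_ne_zero]
  refine ⟨by simp [rpowArith], fun {m n} hm hn _ => ?_⟩
  rw [rpowArith_apply β hm, rpowArith_apply β hn, rpowArith_apply β (mul_ne_zero hm hn),
    Nat.cast_mul, Real.mul_rpow (Nat.cast_nonneg _) (Nat.cast_nonneg _)]

/-- The Möbius inverse of `n ↦ n^β`. -/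
noncomputable def jordanRpow (β : ℝ) : ArithmeticFunction ℝ :=
  rpowArith β * (ArithmeticFunction.moebius : ArithmeticFunction ℝ)

lemma jordanRpow_mul_zeta (β : ℝ) :
    jordanRpow β * (ArithmeticFunction.zeta : ArithmeticFunction ℝ) = rpowArith β := by
  rw [jordanRpow, mul_assoc, ArithmeticFunction.coe_moebius_mul_coe_zeta, mul_one]

lemma isMultiplicative_jordanRpow (β : ℝ) : (jordanRpow β).IsMultiplicative :=
  (isMultiplicative_rpowArith β).mul ArithmeticFunction.isMultiplicative_moebius.intCast

lemma sum_divisors_jordanRpow (β : ℝ) {n : ℕ} (hn : n ≠ 0) :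
    ∑ d ∈ n.divisors, jordanRpow β d = (n : ℝ) ^ β := by
  rw [← ArithmeticFunction.coe_mul_zeta_apply, jordanRpow_mul_zeta, rpowArith_apply β hn]

lemma jordanRpow_prime_pow (β : ℝ) {p : ℕ} (hp : p.Prime) (k : ℕ) :
    jordanRpow β (p ^ (k + 1)) = ((p : ℝ) ^ β) ^ (k + 1) - ((p : ℝ) ^ β) ^ k := by
  have h1 := sum_divisors_jordanRpow β (pow_ne_zero (k + 1) hp.ne_zero)
  have h2 := sum_divisors_jordanRpow β (pow_ne_zero k hp.ne_zero)
  rw [Nat.sum_divisors_prime_pow hp] at h1 h2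
  rw [Finset.sum_range_succ, h2] at h1
  have h3 : ∀ j : ℕ, ((p ^ j : ℕ) : ℝ) ^ β = ((p : ℝ) ^ β) ^ j := fun j => by
    rw [Nat.cast_pow, ← Real.rpow_natCast_mul p.cast_nonneg,
      ← Real.rpow_mul_natCast p.cast_nonneg, mul_comm]
  rw [h3, h3] at h1
  linarith

lemma jordanRpow_nonneg {β : ℝ} (hβ : 0 ≤ β) (n : ℕ) : 0 ≤ jordanRpow β n := by
  rcases eq_or_ne n 0 with rfl | hn
  · simp
  rw [(isMultiplicative_jordanRpow β).multiplicative_factorization _ hn]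
  refine Finset.prod_nonneg fun p hp => ?_
  have hpp : p.Prime := Nat.prime_of_mem_primeFactors hp
  have h1 : 1 ≤ (p : ℝ) ^ β := Real.one_le_rpow (by exact_mod_cast hpp.one_le) hβ
  rcases n.factorization p with _ | k
  · simp [(isMultiplicative_jordanRpow β).map_one]
  · refine (sub_nonneg.mpr ?_).trans_eq (jordanRpow_prime_pow β hpp k).symm
    exact pow_le_pow_right₀ h1 (Nat.le_succ k)

/-- The multiplicative weight `τ(d) J(d) / d`, with `J` the Möbius inverse of `n ↦ n^β`. -/
noncomputable def rankinWeight (β : ℝ) (d : ℕ) : ℝ := d.divisors.card * jordanRpow β d / d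

lemma rankinWeight_nonneg {β : ℝ} (hβ : 0 ≤ β) (d : ℕ) : 0 ≤ rankinWeight β d :=
  div_nonneg (mul_nonneg (Nat.cast_nonneg _) (jordanRpow_nonneg hβ d)) (Nat.cast_nonneg _)

lemma rankinWeight_one (β : ℝ) : rankinWeight β 1 = 1 := by
  simp [rankinWeight, (isMultiplicative_jordanRpow β).map_one]

lemma rankinWeight_mul (β : ℝ) {m n : ℕ} (h : m.Coprime n) :
    rankinWeight β (m * n) = rankinWeight β m * rankinWeight β n := by
  rw [rankinWeight, (isMultiplicative_jordanRpow β).map_mul_of_coprime h, h.card_divisors_mul,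
    rankinWeight, rankinWeight, div_mul_div_comm]
  push_cast
  ring

lemma hasSum_add_two_mul_pow :
    HasSum (fun k : ℕ => ((k : ℝ) + 2) * (71 / 100) ^ k) (12900 / 841) := by
  have h1 := hasSum_coe_mul_geometric_of_norm_lt_one (𝕜 := ℝ) (r := 71 / 100) (by norm_num)
  have h2 := (hasSum_geometric_of_lt_one (r := (71 / 100 : ℝ)) (by norm_num)
    (by norm_num)).mul_left 2
  convert! h1.add h2 using 1
  · ext k; ring
  · norm_num

lemma rpow_sub_one_le {β : ℝ} (hβ1 : β ≤ 1 / 2) {p : ℕ} (hp : p.Prime) :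
    (p : ℝ) ^ (β - 1) ≤ 71 / 100 := by
  have hp2 : (2 : ℝ) ≤ p := by exact_mod_cast hp.two_le
  have hs := Real.sq_sqrt (show (0 : ℝ) ≤ 2 by norm_num)
  have hs0 := Real.sqrt_nonneg 2
  calc (p : ℝ) ^ (β - 1) ≤ (p : ℝ) ^ (-(1 / 2) : ℝ) :=
        Real.rpow_le_rpow_of_exponent_le (by linarith) (by linarith)
    _ ≤ (2 : ℝ) ^ (-(1 / 2) : ℝ) := Real.rpow_le_rpow_of_nonpos (by norm_num) hp2 (by norm_num)
    _ = (Real.sqrt 2)⁻¹ := by rw [Real.rpow_neg (by norm_num), Real.sqrt_eq_rpow]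
    _ ≤ 71 / 100 := by
        rw [inv_le_comm₀ (by positivity) (by norm_num)]
        exact Real.le_sqrt_of_sq_le (by norm_num)

lemma rankinWeight_prime_pow_le {β : ℝ} (hβ : 0 ≤ β) (hβ1 : β ≤ 1 / 2) {p : ℕ} (hp : p.Prime)
    (k : ℕ) : rankinWeight β (p ^ (k + 1)) ≤
      (p : ℝ) ^ (β - 1) * (β * Real.log p) * (((k : ℝ) + 2) * (71 / 100) ^ k) := by
  have hp0 : (0 : ℝ) < p := by exact_mod_cast hp.pos
  have hlog : 0 ≤ Real.log p := Real.log_natCast_nonneg p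
  set r := (p : ℝ) ^ (β - 1) with hr
  have hr0 : 0 ≤ r := by positivity
  have hpr : (p : ℝ) ^ β = r * p := by
    rw [hr, ← Real.rpow_add_one hp0.ne', sub_add_cancel]
  have h1 : 1 - ((p : ℝ) ^ β)⁻¹ ≤ β * Real.log p := by
    rw [← Real.rpow_neg hp0.le, Real.rpow_def_of_pos hp0]
    linarith [Real.add_one_le_exp (Real.log p * -β)]
  have h2 : rankinWeight β (p ^ (k + 1)) =
      ((k : ℝ) + 2) * r ^ (k + 1) * (1 - ((p : ℝ) ^ β)⁻¹) := by
    have hr1 : 0 < r := by positivity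
    rw [rankinWeight, card_divisors_prime_pow hp, jordanRpow_prime_pow β hp, hpr]
    push_cast
    field_simp
    ring
  rw [h2]
  calc ((k : ℝ) + 2) * r ^ (k + 1) * (1 - ((p : ℝ) ^ β)⁻¹)
      ≤ ((k : ℝ) + 2) * r ^ (k + 1) * (β * Real.log p) := by gcongr
    _ = r * (β * Real.log p) * (((k : ℝ) + 2) * r ^ k) := by ring
    _ ≤ _ := by
        gcongr
        exact rpow_sub_one_le hβ1 hp

lemma sum_rankinWeight_le {β κ : ℝ} (hβ : 0 ≤ β) (hβ1 : β ≤ 1 / 2) {N : ℕ} (hN : 1 ≤ N)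
    (hκ : β * Real.log N ≤ κ) {S : Finset ℕ} (hS : ∀ a ∈ S, a ∈ N.smoothNumbers) :
    ∑ d ∈ S, rankinWeight β d ≤ Real.exp (16 * Real.exp κ * (κ + 1)) := by
  have hsumm : ∀ {p : ℕ}, p.Prime → Summable fun k : ℕ => rankinWeight β (p ^ k) := fun hp =>
    (summable_nat_add_iff 1).mp <| Summable.of_nonneg_of_le (fun _ => rankinWeight_nonneg hβ _)
      (fun k => rankinWeight_prime_pow_le hβ hβ1 hp k)
      (hasSum_add_two_mul_pow.summable.mul_left _)
  have hN0 : (0 : ℝ) < N := by exact_mod_cast hN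
  refine (sum_le_exp_sum_primesBelow (g := fun p => 16 * Real.exp κ * β * (Real.log p / p))
    (rankinWeight_nonneg hβ) (rankinWeight_one β)
    (rankinWeight_mul β) hsumm (fun {p} hp hpN => ?_) hS).trans ?_
  · have hp0 : (0 : ℝ) < p := by exact_mod_cast hp.pos
    have hlog : 0 ≤ Real.log p := Real.log_natCast_nonneg p
    rw [(hsumm hp).tsum_eq_zero_add, pow_zero, rankinWeight_one]
    have h1 := ((summable_nat_add_iff 1).mpr (hsumm hp)).tsum_le_tsum
      (fun k => rankinWeight_prime_pow_le hβ hβ1 hp k)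
      (hasSum_add_two_mul_pow.summable.mul_left _)
    rw [tsum_mul_left, hasSum_add_two_mul_pow.tsum_eq] at h1
    have h2 : (p : ℝ) ^ (β - 1) ≤ Real.exp κ / p := by
      rw [Real.rpow_sub_one hp0.ne', Real.rpow_def_of_pos hp0]
      gcongr
      have h3 : Real.log p ≤ Real.log N := Real.log_le_log hp0 (by exact_mod_cast hpN.le)
      nlinarith
    have h3 : (p : ℝ) ^ (β - 1) * (β * Real.log p) * (12900 / 841) ≤
        Real.exp κ / p * (β * Real.log p) * 16 := by gcongr; norm_num
    have h4 : Real.exp κ / p * (β * Real.log p) * 16 =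
        16 * Real.exp κ * β * (Real.log p / p) := by ring
    linarith
  · rw [Real.exp_le_exp, ← Finset.mul_sum]
    have hsub : ∑ p ∈ N.primesBelow, Real.log p / (p : ℝ) ≤ Real.log N + Real.log 4 := by
      refine le_trans (Finset.sum_le_sum_of_subset_of_nonneg ?_ ?_)
        (sum_log_div_primesBelow_le hN)
      · intro p hp
        rw [Nat.mem_primesBelow] at hp ⊢
        exact ⟨hp.1.trans (Nat.lt_succ_self N), hp.2⟩
      · exact fun p _ _ => div_nonneg (Real.log_natCast_nonneg p) (Nat.cast_nonneg _)
    have hlog4 : Real.log 4 ≤ 2 := by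
      rw [show (4 : ℝ) = 2 ^ 2 by norm_num, Real.log_pow]
      have := Real.log_two_lt_d9
      push_cast; linarith
    have h5 : β * (Real.log N + Real.log 4) ≤ κ + 1 := by
      nlinarith
    calc 16 * Real.exp κ * β * ∑ p ∈ N.primesBelow, Real.log p / (p : ℝ)
        ≤ 16 * Real.exp κ * β * (Real.log N + Real.log 4) := by gcongr
      _ = 16 * Real.exp κ * (β * (Real.log N + Real.log 4)) := by ring
      _ ≤ _ := by gcongr

lemma sum_smooth_hooleyDelta_rpow_le {β κ : ℝ} (hβ : 0 ≤ β) (hβ1 : β ≤ 1 / 2) {N M : ℕ}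
    (hN : 1 ≤ N) (hκ : β * Real.log N ≤ κ) {S : Finset ℕ}
    (hS : ∀ a ∈ S, a ∈ N.smoothNumbers ∧ a ≤ M) :
    ∑ a ∈ S, (hooleyDelta a : ℝ) / a * (a : ℝ) ^ β ≤
      Real.exp (16 * Real.exp κ * (κ + 1)) *
        ∑ a ∈ Finset.Icc 1 M, (hooleyDelta a : ℝ) / a := by
  classical
  set S' := (Finset.Icc 1 M).filter (· ∈ N.smoothNumbers) with hS'
  have hterm : ∀ a ∈ S, (hooleyDelta a : ℝ) / a * (a : ℝ) ^ β ≤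
      ∑ d ∈ a.divisorsAntidiagonal, rankinWeight β d.1 * ((hooleyDelta d.2 : ℝ) / d.2) := by
    intro a ha
    have ha0 := Nat.ne_zero_of_mem_smoothNumbers (hS a ha).1
    rw [← sum_divisors_jordanRpow β ha0, Finset.mul_sum, Nat.sum_divisorsAntidiagonal
      (f := fun i j => rankinWeight β i * ((hooleyDelta j : ℝ) / j))]
    refine Finset.sum_le_sum fun d hd => ?_
    obtain ⟨hda, -⟩ := Nat.mem_divisors.mp hd
    obtain ⟨m, rfl⟩ := hda
    have hd0 : d ≠ 0 := left_ne_zero_of_mul ha0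
    have hm0 : m ≠ 0 := right_ne_zero_of_mul ha0
    have hdR : (0 : ℝ) < d := by exact_mod_cast Nat.pos_of_ne_zero hd0
    have hmR : (0 : ℝ) < m := by exact_mod_cast Nat.pos_of_ne_zero hm0
    have h1 : (hooleyDelta (d * m) : ℝ) ≤ d.divisors.card * hooleyDelta m := by
      rw [mul_comm]
      exact_mod_cast hooleyDelta_mul_le hm0 hd0
    rw [Nat.mul_div_cancel_left m (Nat.pos_of_ne_zero hd0), rankinWeight]
    push_cast
    calc (hooleyDelta (d * m) : ℝ) / (d * m) * jordanRpow β d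
        ≤ d.divisors.card * hooleyDelta m / (d * m) * jordanRpow β d := by
          have := jordanRpow_nonneg hβ d
          gcongr
      _ = _ := by field_simp
  have hnonneg : ∀ d : ℕ × ℕ, 0 ≤ rankinWeight β d.1 * ((hooleyDelta d.2 : ℝ) / d.2) := fun d =>
    mul_nonneg (rankinWeight_nonneg hβ _) (by positivity)
  calc ∑ a ∈ S, (hooleyDelta a : ℝ) / a * (a : ℝ) ^ β
      ≤ ∑ a ∈ S, ∑ d ∈ a.divisorsAntidiagonal,
          rankinWeight β d.1 * ((hooleyDelta d.2 : ℝ) / d.2) := Finset.sum_le_sum hterm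
    _ = ∑ d ∈ S.biUnion Nat.divisorsAntidiagonal,
          rankinWeight β d.1 * ((hooleyDelta d.2 : ℝ) / d.2) := by
        rw [Finset.sum_biUnion]
        intro a _ b _ hab
        refine Finset.disjoint_left.mpr fun d hda hdb => hab ?_
        rw [Nat.mem_divisorsAntidiagonal] at hda hdb
        exact hda.1.symm.trans hdb.1
    _ ≤ ∑ d ∈ S' ×ˢ Finset.Icc 1 M,
          rankinWeight β d.1 * ((hooleyDelta d.2 : ℝ) / d.2) := by
        refine Finset.sum_le_sum_of_subset_of_nonneg ?_ fun d _ _ => hnonneg d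
        intro d hd
        rw [Finset.mem_biUnion] at hd
        obtain ⟨a, ha, hda⟩ := hd
        obtain ⟨rfl, ha0⟩ := Nat.mem_divisorsAntidiagonal.mp hda
        have h1 := hS _ ha
        have hd1 := Nat.pos_of_ne_zero (left_ne_zero_of_mul ha0)
        have hd2 := Nat.pos_of_ne_zero (right_ne_zero_of_mul ha0)
        rw [Finset.mem_product, hS', Finset.mem_filter, Finset.mem_Icc, Finset.mem_Icc]
        exact ⟨⟨⟨hd1, (Nat.le_mul_of_pos_right _ hd2).trans h1.2⟩,
          Nat.mem_smoothNumbers_of_dvd h1.1 (Dvd.intro _ rfl)⟩, hd2,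
          (Nat.le_mul_of_pos_left _ hd1).trans h1.2⟩
    _ = (∑ d ∈ S', rankinWeight β d) * ∑ a ∈ Finset.Icc 1 M, (hooleyDelta a : ℝ) / a := by
        rw [Finset.sum_product, Finset.sum_mul_sum]
    _ ≤ _ := by
        gcongr
        exact sum_rankinWeight_le hβ hβ1 hN hκ fun a ha => (Finset.mem_filter.mp ha).2

lemma sum_Icc_inv_sqrt_le (N : ℕ) :
    ∑ n ∈ Finset.Icc 1 N, (Real.sqrt n)⁻¹ ≤ 2 * Real.sqrt N := by
  induction N with
  | zero => simp
  | succ N ih =>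
    rw [Finset.sum_Icc_succ_top (by omega)]
    push_cast
    set b := Real.sqrt ((N : ℝ) + 1) with hb
    set a := Real.sqrt (N : ℝ) with ha
    have ha0 : 0 ≤ a := Real.sqrt_nonneg _
    have hb0 : 0 < b := Real.sqrt_pos.mpr (by positivity)
    have ha2 : a ^ 2 = N := Real.sq_sqrt (Nat.cast_nonneg _)
    have hb2 : b ^ 2 = N + 1 := Real.sq_sqrt (by positivity)
    have hab : a ≤ b := Real.sqrt_le_sqrt (by linarith)
    have : b⁻¹ ≤ 2 * (b - a) := by
      rw [inv_eq_one_div, div_le_iff₀ hb0]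
      nlinarith
    linarith

lemma sum_smooth_inv_sqrt_le (N : ℕ) {S : Finset ℕ} (hS : ∀ a ∈ S, a ∈ N.smoothNumbers) :
    ∑ a ∈ S, (Real.sqrt a)⁻¹ ≤ Real.exp (8 * Real.sqrt N) := by
  have hrp : ∀ {p : ℕ}, p.Prime → (Real.sqrt p)⁻¹ ≤ 71 / 100 := fun {p} hp => by
    have := rpow_sub_one_le (β := 1 / 2) le_rfl hp
    rwa [show (1 / 2 - 1 : ℝ) = -(1 / 2) by norm_num, Real.rpow_neg (Nat.cast_nonneg _),
      ← Real.sqrt_eq_rpow] at this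
  have hpow : ∀ p k : ℕ, (Real.sqrt ((p ^ k : ℕ) : ℝ))⁻¹ = ((Real.sqrt p)⁻¹) ^ k := fun p k => by
    rw [Nat.cast_pow, inv_pow]
    congr 1
    induction k with
    | zero => simp
    | succ k ih => rw [pow_succ, Real.sqrt_mul (by positivity), ih, pow_succ]
  have hgeo : ∀ {p : ℕ}, p.Prime →
      HasSum (fun k : ℕ => (Real.sqrt ((p ^ k : ℕ) : ℝ))⁻¹) (1 - (Real.sqrt p)⁻¹)⁻¹ :=
    fun {p} hp => by
      simp only [hpow]
      exact hasSum_geometric_of_lt_one (by positivity) (by linarith [hrp hp])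
  refine (sum_le_exp_sum_primesBelow (f := fun n : ℕ => (Real.sqrt n)⁻¹)
    (g := fun p => 4 * (Real.sqrt p)⁻¹)
    (fun n => by positivity) (by simp) (fun {m n} _ => ?_) (fun hp => (hgeo hp).summable)
    (fun {p} hp _ => ?_) hS).trans ?_
  · rw [Nat.cast_mul, Real.sqrt_mul (Nat.cast_nonneg _), mul_inv]
  · rw [(hgeo hp).tsum_eq]
    have h1 := hrp hp
    have h2 : 0 ≤ (Real.sqrt p)⁻¹ := by positivity
    rw [inv_le_comm₀ (by linarith) (by linarith), inv_eq_one_div, div_le_iff₀ (by linarith)]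
    nlinarith
  · rw [Real.exp_le_exp, ← Finset.mul_sum]
    have : ∑ p ∈ N.primesBelow, (Real.sqrt p)⁻¹ ≤ ∑ n ∈ Finset.Icc 1 N, (Real.sqrt n)⁻¹ := by
      refine Finset.sum_le_sum_of_subset_of_nonneg (fun p hp => ?_) fun p _ _ => by positivity
      rw [Nat.mem_primesBelow] at hp
      exact Finset.mem_Icc.mpr ⟨hp.2.one_le, hp.1.le⟩
    linarith [sum_Icc_inv_sqrt_le N]

end ErdosHooley

namespace ErdosHooley

/-- The largest divisor of `n` all of whose prime factors are less than `q`. -/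
def smoothPart (q n : ℕ) : ℕ :=
  ∏ p ∈ n.primeFactors.filter (· < q), p ^ n.factorization p

/-- The largest divisor of `n` all of whose prime factors are at least `q`. -/
def roughPart (q n : ℕ) : ℕ :=
  ∏ p ∈ n.primeFactors.filter (¬ · < q), p ^ n.factorization p

lemma smoothPart_mul_roughPart (q : ℕ) {n : ℕ} (hn : n ≠ 0) :
    smoothPart q n * roughPart q n = n := by
  rw [smoothPart, roughPart, Finset.prod_filter_mul_prod_filter_not]
  exact Nat.prod_factorization_pow_eq_self hn

lemma smoothPart_mem_smoothNumbers (q n : ℕ) : smoothPart q n ∈ q.smoothNumbers := by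
  rw [Nat.mem_smoothNumbers']
  intro p hp hdvd
  obtain ⟨r, hr, hpr⟩ := (Prime.dvd_finsetProd_iff hp.prime _).mp hdvd
  rw [Finset.mem_filter] at hr
  have := (Nat.prime_dvd_prime_iff_eq hp (Nat.prime_of_mem_primeFactors hr.1)).mp
    (hp.dvd_of_dvd_pow hpr)
  exact this ▸ hr.2

lemma le_of_prime_dvd_roughPart {q n p : ℕ} (hp : p.Prime) (hdvd : p ∣ roughPart q n) :
    q ≤ p := by
  obtain ⟨r, hr, hpr⟩ := (Prime.dvd_finsetProd_iff hp.prime _).mp hdvd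
  rw [Finset.mem_filter] at hr
  have := (Nat.prime_dvd_prime_iff_eq hp (Nat.prime_of_mem_primeFactors hr.1)).mp
    (hp.dvd_of_dvd_pow hpr)
  exact this ▸ not_lt.mp hr.2

lemma smoothPart_succ_of_mem {q n : ℕ} (hq : q ∈ n.primeFactors) :
    smoothPart (q + 1) n = smoothPart q n * q ^ n.factorization q := by
  have : n.primeFactors.filter (· < q + 1) = insert q (n.primeFactors.filter (· < q)) := by
    ext p
    simp only [Finset.mem_filter, Finset.mem_insert]
    constructor
    · rintro ⟨h1, h2⟩
      rcases Nat.lt_succ_iff_lt_or_eq.mp h2 with h | h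
      · exact Or.inr ⟨h1, h⟩
      · exact Or.inl h
    · rintro (rfl | ⟨h1, h2⟩)
      · exact ⟨hq, Nat.lt_succ_self _⟩
      · exact ⟨h1, h2.trans (Nat.lt_succ_self _)⟩
  rw [smoothPart, this, Finset.prod_insert (by simp), smoothPart, mul_comm]

lemma smoothPart_succ_of_notMem {q n : ℕ} (hq : q ∉ n.primeFactors) :
    smoothPart (q + 1) n = smoothPart q n := by
  rw [smoothPart, smoothPart]
  congr 1
  refine Finset.filter_congr fun p hp => ?_
  have : p ≠ q := fun h => hq (h ▸ hp)
  omega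

/-- A threshold decomposition: `n = a * b`, where `a ≤ Z` collects the prime factors of `n` less
than the prime `q ∣ b`, and `Z < a * q ^ v_q(n)`. -/
structure ThresholdDecomp (Z : ℝ) (n q a b : ℕ) : Prop where
  prime : q.Prime
  eq_mul : n = a * b
  dvd : q ∣ b
  smooth : a ∈ q.smoothNumbers
  rough : ∀ p : ℕ, p.Prime → p ∣ b → q ≤ p
  le : (a : ℝ) ≤ Z
  lt : Z < a * (q : ℝ) ^ n.factorization q

lemma exists_thresholdDecomp {Z : ℝ} (hZ : 1 ≤ Z) {n : ℕ} (hn : n ≠ 0) (hnZ : Z < n) :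
    ∃ q a b : ℕ, ThresholdDecomp Z n q a b := by
  classical
  have hex : ∃ m : ℕ, Z < smoothPart m n := by
    refine ⟨n + 1, ?_⟩
    have : smoothPart (n + 1) n = n := by
      rw [smoothPart, Finset.filter_true_of_mem fun p hp =>
        Nat.lt_succ_of_le (Nat.le_of_mem_primeFactors hp)]
      exact Nat.prod_factorization_pow_eq_self hn
    rwa [this]
  set m := Nat.find hex with hm
  have hmZ : Z < smoothPart m n := Nat.find_spec hex
  have hm0 : m ≠ 0 := by
    intro h
    rw [h] at hmZ
    simp only [smoothPart, Nat.not_lt_zero, Finset.filter_false, Finset.prod_empty,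
      Nat.cast_one] at hmZ
    linarith
  obtain ⟨q, hq⟩ := Nat.exists_eq_succ_of_ne_zero hm0
  have hqZ : (smoothPart q n : ℝ) ≤ Z :=
    not_lt.mp (Nat.find_min hex (m := q) (by omega))
  rw [hq, Nat.succ_eq_add_one] at hmZ
  have hqmem : q ∈ n.primeFactors := by
    by_contra h
    rw [smoothPart_succ_of_notMem h] at hmZ
    linarith
  have hqp := Nat.prime_of_mem_primeFactors hqmem
  refine ⟨q, smoothPart q n, roughPart q n, hqp, (smoothPart_mul_roughPart q hn).symm, ?_,
    smoothPart_mem_smoothNumbers q n, fun p hp hd => le_of_prime_dvd_roughPart hp hd, hqZ, ?_⟩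
  · have hmem : q ∈ n.primeFactors.filter (¬ · < q) :=
      Finset.mem_filter.mpr ⟨hqmem, lt_irrefl q⟩
    refine dvd_trans ?_ (Finset.dvd_prod_of_mem _ hmem)
    exact dvd_pow_self q (hqp.factorization_pos_of_dvd hn
      (Nat.dvd_of_mem_primeFactors hqmem)).ne'
  · rw [smoothPart_succ_of_mem hqmem] at hmZ
    exact_mod_cast hmZ

lemma card_multiples_le {u Y : ℝ} (hu : 0 ≤ u) {m : ℕ} (hm : m ≠ 0) (hmY : (m : ℝ) ≤ Y) :
    (((intervalNat u Y).filter (m ∣ ·)).card : ℝ) ≤ 2 * Y / m := by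
  have hm0 : (0 : ℝ) < m := by exact_mod_cast Nat.pos_of_ne_zero hm
  have h1 := (abs_le.mp (abs_card_multiples_sub_le hu (hm0.le.trans hmY) hm)).2
  have h2 : 1 ≤ Y / m := by rwa [le_div_iff₀ hm0, one_mul]
  have h3 : 2 * Y / m = Y / m + Y / m := by ring
  linarith

open scoped Classical in
lemma card_rough_multiples_le {u Y z : ℝ} (hu : 0 ≤ u) (hz : 2 ≤ z) {m : ℕ} (hm : m ≠ 0)
    (hY : z ^ 2 * Real.log z ≤ Y / m) :
    (((intervalNat u Y).filter (fun n => ∃ b : ℕ, n = m * b ∧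
      ∀ p : ℕ, p.Prime → p ∣ b → z ≤ p)).card : ℝ) ≤ 5 * (Y / m) / Real.log z := by
  have hm0 : (0 : ℝ) < m := by exact_mod_cast Nat.pos_of_ne_zero hm
  have hlog : 0 < Real.log z := Real.log_pos (by linarith)
  have hYm : 0 ≤ Y / m := le_trans (by positivity) hY
  have hY0 : 0 ≤ Y := by
    have := mul_nonneg hYm hm0.le
    rwa [div_mul_cancel₀ _ hm0.ne'] at this
  refine le_trans ?_ (card_rough_le (div_nonneg hu hm0.le) hz hY)
  rw [Nat.cast_le]
  refine (Finset.card_le_card (t := ((intervalNat (u / m) (Y / m)).filter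
    (fun b => ∀ p : ℕ, p.Prime → p ∣ b → z ≤ p)).image (m * ·)) ?_).trans Finset.card_image_le
  intro n hn
  rw [Finset.mem_filter, mem_intervalNat hu hY0] at hn
  obtain ⟨⟨h1, h2⟩, b, rfl, hb⟩ := hn
  rw [Finset.mem_image]
  refine ⟨b, Finset.mem_filter.mpr ⟨(mem_intervalNat (div_nonneg hu hm0.le) hYm).mpr ⟨?_, ?_⟩,
    hb⟩, rfl⟩
  · rw [div_lt_iff₀ hm0]; push_cast at h1; linarith
  · rw [← add_div, le_div_iff₀ hm0]; push_cast at h2; linarith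

end ErdosHooley

namespace ErdosHooley

open scoped Classical in
lemma sum_filter_le_sum_mul_card {ι : Type*} {I : Finset ℕ} {P : ℕ → Prop} {J : Finset ι}
    {Q : ι → ℕ → Prop} {F : ℕ → ℝ} {c K : ι → ℝ} (hc : ∀ j ∈ J, 0 ≤ c j)
    (hF : ∀ n ∈ I, P n → ∃ j ∈ J, Q j n ∧ F n ≤ c j)
    (hK : ∀ j ∈ J, ((I.filter (Q j)).card : ℝ) ≤ K j) :
    ∑ n ∈ I.filter P, F n ≤ ∑ j ∈ J, c j * K j := by
  calc ∑ n ∈ I.filter P, F n ≤ ∑ n ∈ I.filter P, ∑ j ∈ J, if Q j n then c j else 0 := by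
        refine Finset.sum_le_sum fun n hn => ?_
        rw [Finset.mem_filter] at hn
        obtain ⟨j, hj, hQ, hle⟩ := hF n hn.1 hn.2
        refine hle.trans ((Finset.single_le_sum (f := fun j => if Q j n then c j else 0)
          (fun i hi => ?_) hj).trans' ?_)
        · split_ifs
          exacts [hc i hi, le_rfl]
        · simp [hQ]
    _ ≤ ∑ n ∈ I, ∑ j ∈ J, if Q j n then c j else 0 := by
        refine Finset.sum_le_sum_of_subset_of_nonneg (Finset.filter_subset _ _) fun n _ _ =>
          Finset.sum_nonneg fun j hj => ?_
        split_ifs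
        exacts [hc j hj, le_rfl]
    _ = ∑ j ∈ J, c j * (I.filter (Q j)).card := by
        rw [Finset.sum_comm]
        refine Finset.sum_congr rfl fun j _ => ?_
        rw [← Finset.sum_filter, Finset.sum_const, nsmul_eq_mul, mul_comm]
    _ ≤ _ := Finset.sum_le_sum fun j hj => mul_le_mul_of_nonneg_left (hK j hj) (hc j hj)

/-- The logarithmic mean `∑_{a ≤ x} Δ(a) / a`. -/
noncomputable def logMean (x : ℝ) : ℝ := ∑ a ∈ Finset.Icc 1 ⌊x⌋₊, (hooleyDelta a : ℝ) / a

lemma logMean_nonneg (x : ℝ) : 0 ≤ logMean x := Finset.sum_nonneg fun _ _ => by positivity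

lemma logMean_mono {x y : ℝ} (h : x ≤ y) : logMean x ≤ logMean y :=
  Finset.sum_le_sum_of_subset_of_nonneg
    (Finset.Icc_subset_Icc_right (Nat.floor_le_floor h)) fun _ _ _ => by positivity

lemma hooleyDelta_mul_rough_le {x z : ℝ} (hz : 1 < z) {a b : ℕ} (ha : a ≠ 0) (hb : b ≠ 0)
    (hx : ((a * b : ℕ) : ℝ) ≤ x) (h : ∀ p : ℕ, p.Prime → p ∣ b → z ≤ p) :
    (hooleyDelta (a * b) : ℝ) ≤ 2 ^ (Real.log x / Real.log z) * hooleyDelta a := by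
  have h1 : (hooleyDelta (a * b) : ℝ) ≤ b.divisors.card * hooleyDelta a := by
    exact_mod_cast hooleyDelta_mul_le ha hb
  refine h1.trans (mul_le_mul_of_nonneg_right
    ((card_divisors_le_of_rough hz hb h).trans ?_) (Nat.cast_nonneg _))
  have hb0 : (0 : ℝ) < b := by exact_mod_cast Nat.pos_of_ne_zero hb
  refine Real.rpow_le_rpow_of_exponent_le (by norm_num) ?_
  have hlz := Real.log_pos hz
  gcongr
  refine le_trans ?_ hx
  exact_mod_cast Nat.le_mul_of_pos_left b (Nat.pos_of_ne_zero ha)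

lemma sum_small_hooleyDelta_le {u Y Z : ℝ} (hu : 0 ≤ u) (hZ : 0 ≤ Z) (hZY : Z ^ 2 ≤ Y) :
    ∑ n ∈ (intervalNat u Y).filter (fun n : ℕ => (n : ℝ) ≤ Z), (hooleyDelta n : ℝ) ≤ Y := by
  have hY0 : 0 ≤ Y := (sq_nonneg Z).trans hZY
  have hsub : (intervalNat u Y).filter (fun n : ℕ => (n : ℝ) ≤ Z) ⊆ Finset.Icc 1 ⌊Z⌋₊ := by
    intro n hn
    rw [Finset.mem_filter, mem_intervalNat hu hY0] at hn
    rw [Finset.mem_Icc]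
    refine ⟨?_, Nat.le_floor hn.2⟩
    exact_mod_cast hu.trans_lt hn.1.1
  calc _ ≤ ∑ n ∈ Finset.Icc 1 ⌊Z⌋₊, (hooleyDelta n : ℝ) :=
        Finset.sum_le_sum_of_subset_of_nonneg hsub fun _ _ _ => by positivity
    _ ≤ ∑ n ∈ Finset.Icc 1 ⌊Z⌋₊, Z := by
        refine Finset.sum_le_sum fun n hn => ?_
        rw [Finset.mem_Icc] at hn
        have h1 : (hooleyDelta n : ℝ) ≤ n := by
          exact_mod_cast (hooleyDelta_le_card_divisors n).trans (Nat.card_divisors_le_self n)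
        exact h1.trans ((Nat.le_floor_iff hZ).mp hn.2)
    _ ≤ Z * Z := by
        rw [Finset.sum_const, Nat.card_Icc, Nat.add_sub_cancel, nsmul_eq_mul]
        exact mul_le_mul_of_nonneg_right (Nat.floor_le hZ) hZ
    _ ≤ Y := by rwa [← sq]

open scoped Classical in
lemma sum_large_prime_hooleyDelta_le {ℓ u Y Z z : ℝ} (hu : 0 ≤ u) (hz : 2 ≤ z)
    (hZ : 0 ≤ Z) (hZu : Z ≤ u + Y) (hY : z ^ 2 * Real.log z * Z ≤ Y)
    (hℓ : Real.log (u + Y) ≤ 6 * ℓ * Real.log z) :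
    ∑ n ∈ (intervalNat u Y).filter (fun n => ∃ q a b, ThresholdDecomp Z n q a b ∧ z ≤ q),
      (hooleyDelta n : ℝ) ≤ 2 ^ (6 * ℓ) * (5 * Y / Real.log z) * logMean (u + Y) := by
  have hlz : 0 < Real.log z := Real.log_pos (by linarith)
  have hY0 : 0 ≤ Y := le_trans (by positivity) hY
  refine (sum_filter_le_sum_mul_card (J := Finset.Icc 1 ⌊Z⌋₊)
    (Q := fun a n => ∃ b : ℕ, n = a * b ∧ ∀ p : ℕ, p.Prime → p ∣ b → z ≤ p)
    (c := fun a => 2 ^ (6 * ℓ) * hooleyDelta a) (K := fun a => 5 * (Y / a) / Real.log z)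
    (fun a _ => by positivity) ?_ ?_).trans ?_
  · rintro n hn ⟨q, a, b, h, hzq⟩
    rw [mem_intervalNat hu hY0] at hn
    have ha0 : a ≠ 0 := Nat.ne_zero_of_mem_smoothNumbers h.smooth
    have hrough : ∀ p : ℕ, p.Prime → p ∣ b → z ≤ p := fun p hp hpb =>
      hzq.trans (by exact_mod_cast h.rough p hp hpb)
    have hn0 : n ≠ 0 := by
      rintro rfl
      have := hn.1
      rw [Nat.cast_zero] at this
      linarith
    have hb0 : b ≠ 0 := by
      rintro rfl
      exact hn0 (by simpa using h.eq_mul)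
    refine ⟨a, Finset.mem_Icc.mpr ⟨Nat.pos_of_ne_zero ha0, Nat.le_floor h.le⟩,
      ⟨b, h.eq_mul, hrough⟩, ?_⟩
    have h1 := hn.2
    rw [h.eq_mul] at h1 ⊢
    refine (hooleyDelta_mul_rough_le (by linarith) ha0 hb0 h1 hrough).trans ?_
    gcongr
    · norm_num
    · rwa [div_le_iff₀ hlz]
  · intro a ha
    rw [Finset.mem_Icc] at ha
    have ha0 : (0 : ℝ) < a := by exact_mod_cast ha.1
    have haZ : (a : ℝ) ≤ Z := (Nat.le_floor_iff hZ).mp ha.2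
    refine card_rough_multiples_le hu hz (by omega) ?_
    rw [le_div_iff₀ ha0]
    refine le_trans ?_ hY
    gcongr
  · calc ∑ a ∈ Finset.Icc 1 ⌊Z⌋₊, 2 ^ (6 * ℓ) * (hooleyDelta a : ℝ) * (5 * (Y / a) / Real.log z)
        = 2 ^ (6 * ℓ) * (5 * Y / Real.log z) * logMean Z := by
          rw [logMean, Finset.mul_sum]
          exact Finset.sum_congr rfl fun a _ => by ring
      _ ≤ _ := by
          gcongr
          exact logMean_mono hZu

open scoped Classical in
lemma sum_prime_power_hooleyDelta_le {u Y Z z D : ℝ} (hu : 0 ≤ u) (hz : 2 ≤ z)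
    (hZ : z ^ 2 = Z) (hY : Z ≤ Y) (hD0 : 0 ≤ D)
    (hD : ∀ n ∈ intervalNat u Y, (hooleyDelta n : ℝ) ≤ D) :
    ∑ n ∈ (intervalNat u Y).filter
        (fun n => ∃ q a b, ThresholdDecomp Z n q a b ∧ (q : ℝ) < z ∧ (a : ℝ) ≤ z),
      (hooleyDelta n : ℝ) ≤ D * (2 * Y / Real.sqrt z * (1 + Real.log z)) := by
  have hY0 : 0 ≤ Y := by nlinarith
  have hz0 : 0 ≤ z := by linarith
  have hfz : ⌊z⌋₊ ≠ 0 := (Nat.floor_pos.mpr (by linarith)).ne'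
  have hsz : 0 < Real.sqrt z := Real.sqrt_pos.mpr (by linarith)
  refine (sum_filter_le_sum_mul_card (J := Finset.Icc 1 ⌊z⌋₊)
    (Q := fun q n => 1 < q ∧ q ^ (Nat.log q ⌊z⌋₊ + 1) ∣ n)
    (c := fun _ => D) (K := fun q => 2 * Y / Real.sqrt z * (q : ℝ)⁻¹)
    (fun _ _ => hD0) ?_ ?_).trans ?_
  · rintro n hn ⟨q, a, b, h, hqz, haz⟩
    refine ⟨q, Finset.mem_Icc.mpr ⟨h.prime.one_le, Nat.le_floor hqz.le⟩,
      ⟨h.prime.one_lt, ?_⟩, hD n hn⟩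
    refine dvd_trans (pow_dvd_pow q ?_) (Nat.ordProj_dvd n q)
    by_contra hlt
    have h1 : q ^ n.factorization q ≤ ⌊z⌋₊ :=
      (Nat.pow_le_pow_right h.prime.pos (by omega)).trans (Nat.pow_log_le_self q hfz)
    have h2 : (q : ℝ) ^ n.factorization q ≤ z := by
      have := (Nat.le_floor_iff hz0).mp h1
      exact_mod_cast this
    have h3 := h.lt
    have h4 : (a : ℝ) * (q : ℝ) ^ n.factorization q ≤ z * z := by gcongr
    nlinarith
  · intro q hq
    rw [Finset.mem_Icc] at hq
    by_cases hq1 : 1 < q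
    · have hq0 : (0 : ℝ) < q := by exact_mod_cast hq.1
      set k := Nat.log q ⌊z⌋₊ with hk
      have hk1 : 1 ≤ k := Nat.log_pos hq1 hq.2
      have hlow : z < (q : ℝ) ^ (k + 1) := by
        have := (Nat.floor_lt hz0).mp (Nat.lt_pow_succ_log_self hq1 ⌊z⌋₊)
        exact_mod_cast this
      have hup : (q : ℝ) ^ k ≤ z := by
        have := (Nat.le_floor_iff hz0).mp (Nat.pow_log_le_self q hfz)
        exact_mod_cast this
      have hqz : (q : ℝ) ≤ z := (Nat.le_floor_iff hz0).mp hq.2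
      have hupY : ((q ^ (k + 1) : ℕ) : ℝ) ≤ Y := by
        push_cast
        rw [pow_succ]
        calc (q : ℝ) ^ k * q ≤ z * z := by gcongr
          _ ≤ Y := by nlinarith
      have hcard := card_multiples_le hu (pow_ne_zero (k + 1) (by omega : q ≠ 0)) hupY
      have hsq : Real.sqrt z * q ≤ (q : ℝ) ^ (k + 1) := by
        refine le_of_sq_le_sq ?_ (by positivity)
        rw [mul_pow, Real.sq_sqrt hz0, sq ((q : ℝ) ^ (k + 1))]
        have h1 : (q : ℝ) ^ 2 ≤ (q : ℝ) ^ (k + 1) :=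
          pow_le_pow_right₀ (by exact_mod_cast hq.1) (by omega)
        gcongr
      simp only [hq1, true_and]
      refine hcard.trans ?_
      push_cast
      calc 2 * Y / (q : ℝ) ^ (k + 1) ≤ 2 * Y / (Real.sqrt z * q) := by gcongr
        _ = _ := by rw [← div_div, div_eq_mul_inv]
    · simp only [hq1, false_and, Finset.filter_false, Finset.card_empty, Nat.cast_zero]
      positivity
  · rw [← Finset.mul_sum, ← Finset.mul_sum]
    gcongr
    have h1 := harmonic_floor_le_one_add_log z (by linarith)
    rw [harmonic_eq_sum_Icc] at h1
    push_cast at h1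
    exact h1

open scoped Classical in
lemma sum_tiny_prime_hooleyDelta_le {u Y Z z w D : ℝ} (hu : 0 ≤ u) (hz : 0 < z) (hZ : 0 ≤ Z)
    (hY : Z ≤ Y) (hw : 0 ≤ w) (hD0 : 0 ≤ D)
    (hD : ∀ n ∈ intervalNat u Y, (hooleyDelta n : ℝ) ≤ D) :
    ∑ n ∈ (intervalNat u Y).filter
        (fun n => ∃ q a b, ThresholdDecomp Z n q a b ∧ z < a ∧ (q : ℝ) ≤ w),
      (hooleyDelta n : ℝ) ≤ D * (2 * Y / Real.sqrt z * Real.exp (8 * Real.sqrt w)) := by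
  have hY0 : 0 ≤ Y := hZ.trans hY
  have hsz : 0 < Real.sqrt z := Real.sqrt_pos.mpr hz
  refine (sum_filter_le_sum_mul_card (J := (Finset.Icc 1 ⌊Z⌋₊).filter
      (fun a : ℕ => z < a ∧ a ∈ ⌊w⌋₊.smoothNumbers))
    (Q := fun (a n : ℕ) => a ∣ n)
    (c := fun _ => D) (K := fun a => 2 * Y / Real.sqrt z * (Real.sqrt a)⁻¹)
    (fun _ _ => hD0) ?_ ?_).trans ?_
  · rintro n hn ⟨q, a, b, h, hza, hqw⟩
    have ha0 : a ≠ 0 := Nat.ne_zero_of_mem_smoothNumbers h.smooth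
    exact ⟨a, Finset.mem_filter.mpr ⟨Finset.mem_Icc.mpr ⟨Nat.pos_of_ne_zero ha0,
      Nat.le_floor h.le⟩, hza, Nat.smoothNumbers_mono (Nat.le_floor hqw) h.smooth⟩,
      Dvd.intro _ h.eq_mul.symm, hD n hn⟩
  · intro a ha
    rw [Finset.mem_filter, Finset.mem_Icc] at ha
    have ha0 : (0 : ℝ) < a := by exact_mod_cast ha.1.1
    have haZ : (a : ℝ) ≤ Z := (Nat.le_floor_iff hZ).mp ha.1.2
    have hcard := card_multiples_le hu (by omega : a ≠ 0) (haZ.trans hY)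
    refine (le_of_eq ?_).trans (hcard.trans ?_)
    · congr!
    have h1 : Real.sqrt z * Real.sqrt a ≤ a := by
      calc Real.sqrt z * Real.sqrt a ≤ Real.sqrt a * Real.sqrt a := by
            gcongr
            exact ha.2.1.le
        _ = a := Real.mul_self_sqrt ha0.le
    have hsa : 0 < Real.sqrt a := Real.sqrt_pos.mpr ha0
    calc 2 * Y / (a : ℝ) ≤ 2 * Y / (Real.sqrt z * Real.sqrt a) := by gcongr
      _ = _ := by rw [← div_div, div_eq_mul_inv]
  · rw [← Finset.mul_sum, ← Finset.mul_sum]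
    gcongr
    refine (sum_smooth_inv_sqrt_le ⌊w⌋₊ fun a ha => (Finset.mem_filter.mp ha).2.2).trans ?_
    gcongr
    exact Nat.floor_le hw

end ErdosHooley

namespace ErdosHooley

lemma two_rpow_mul_rpow_neg_le {ℓ κ L s t : ℝ} (hκ : κ = 6 * ℓ * Real.log 2 + 1) (hs : 0 < s)
    (ht : 0 < t) (hL : L ≤ 6 * ℓ * t) :
    (2 : ℝ) ^ (L / s) * Real.exp (-(κ / s * t)) ≤ 2 * s ^ 2 / t ^ 2 := by
  have hl2 : 0 < Real.log 2 := Real.log_pos (by norm_num)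
  have hv : 0 < t / s := by positivity
  have h1 : (2 : ℝ) ^ (L / s) * Real.exp (-(κ / s * t)) ≤ Real.exp (-(t / s)) := by
    rw [Real.rpow_def_of_pos (by norm_num), ← Real.exp_add]
    refine Real.exp_le_exp.mpr ?_
    have h2 : Real.log 2 * (L / s) ≤ Real.log 2 * (6 * ℓ * t / s) := by gcongr
    have h3 : κ / s * t = Real.log 2 * (6 * ℓ * t / s) + t / s := by
      rw [hκ]
      field_simp
    linarith
  refine h1.trans ?_
  have h4 := Real.quadratic_le_exp_of_nonneg hv.le
  have h5 : 2 * s ^ 2 / t ^ 2 = ((t / s) ^ 2 / 2)⁻¹ := by field_simp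
  rw [h5, Real.exp_neg]
  gcongr
  linarith

lemma sum_smooth_large_hooleyDelta_div_le {ℓ κ L Z z x : ℝ} (hℓ : 0 ≤ ℓ)
    (hκ : κ = 6 * ℓ * Real.log 2 + 1) (hz : 1 < z) (hL : L ≤ 6 * ℓ * Real.log z) (hZ : Z ≤ x)
    {q : ℕ} (hq : Real.exp (2 * κ) < q) :
    (2 : ℝ) ^ (L / Real.log q) *
        ∑ a ∈ (Finset.Icc 1 ⌊Z⌋₊).filter (fun a : ℕ => z < a ∧ a ∈ q.smoothNumbers),
          (hooleyDelta a : ℝ) / a ≤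
      2 * Real.log q ^ 2 / Real.log z ^ 2 *
        (Real.exp (16 * Real.exp κ * (κ + 1)) * logMean x) := by
  have hl2 : 0 < Real.log 2 := Real.log_pos (by norm_num)
  have hκ1 : 1 ≤ κ := by
    have : 0 ≤ 6 * ℓ * Real.log 2 := by positivity
    linarith
  have hq0 : (0 : ℝ) < q := (Real.exp_pos _).trans hq
  have hlq : 2 * κ < Real.log q := (Real.lt_log_iff_exp_lt hq0).mpr hq
  have hlq0 : 0 < Real.log q := by linarith
  have hlz : 0 < Real.log z := Real.log_pos hz
  set β := κ / Real.log q with hβ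
  have hβ0 : 0 ≤ β := by positivity
  have hβ1 : β ≤ 1 / 2 := by
    rw [hβ, div_le_iff₀ hlq0]
    linarith
  set S := (Finset.Icc 1 ⌊Z⌋₊).filter (fun a : ℕ => z < a ∧ a ∈ q.smoothNumbers) with hS
  have hrankin := sum_smooth_hooleyDelta_rpow_le (κ := κ) hβ0 hβ1 (N := q) (M := ⌊x⌋₊) (S := S)
    (by exact_mod_cast hq0) (by rw [hβ, div_mul_cancel₀ _ hlq0.ne'])
    (fun a ha => by
      rw [hS, Finset.mem_filter, Finset.mem_Icc] at ha
      exact ⟨ha.2.2, ha.1.2.trans (Nat.floor_le_floor hZ)⟩)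
  have hsum : ∑ a ∈ S, (hooleyDelta a : ℝ) / a ≤
      Real.exp (-(β * Real.log z)) * ∑ a ∈ S, (hooleyDelta a : ℝ) / a * (a : ℝ) ^ β := by
    rw [Finset.mul_sum]
    refine Finset.sum_le_sum fun a ha => ?_
    rw [hS, Finset.mem_filter] at ha
    have haz := ha.2.1
    have ha0 : (0 : ℝ) < a := by linarith
    have h1 : 1 ≤ Real.exp (-(β * Real.log z)) * (a : ℝ) ^ β := by
      rw [Real.rpow_def_of_pos ha0, ← Real.exp_add, Real.one_le_exp_iff]
      have h2 : β * Real.log z ≤ β * Real.log a := by gcongr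
      linarith
    calc (hooleyDelta a : ℝ) / a = (hooleyDelta a : ℝ) / a * 1 := (mul_one _).symm
      _ ≤ (hooleyDelta a : ℝ) / a * (Real.exp (-(β * Real.log z)) * (a : ℝ) ^ β) := by gcongr
      _ = _ := by ring
  calc (2 : ℝ) ^ (L / Real.log q) * ∑ a ∈ S, (hooleyDelta a : ℝ) / a
      ≤ (2 : ℝ) ^ (L / Real.log q) * (Real.exp (-(β * Real.log z)) *
          (Real.exp (16 * Real.exp κ * (κ + 1)) * logMean x)) := by
        gcongr
        exact hsum.trans (mul_le_mul_of_nonneg_left hrankin (Real.exp_pos _).le)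
    _ = (2 : ℝ) ^ (L / Real.log q) * Real.exp (-(β * Real.log z)) *
          (Real.exp (16 * Real.exp κ * (κ + 1)) * logMean x) := by ring
    _ ≤ _ := by
        refine mul_le_mul_of_nonneg_right (two_rpow_mul_rpow_neg_le hκ hlq0 hlz hL)
          (mul_nonneg (Real.exp_pos _).le (logMean_nonneg x))

open scoped Classical in
lemma sum_middle_prime_hooleyDelta_le {ℓ κ u Y Z z : ℝ} (hℓ : 0 ≤ ℓ)
    (hκ : κ = 6 * ℓ * Real.log 2 + 1) (hu : 0 ≤ u) (hz : 4 ≤ z)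
    (hZ : 0 ≤ Z) (hZu : Z ≤ u + Y) (hY : z ^ 4 * Z ≤ Y)
    (hL : Real.log (u + Y) ≤ 6 * ℓ * Real.log z) :
    ∑ n ∈ (intervalNat u Y).filter (fun n => ∃ q a b, ThresholdDecomp Z n q a b ∧ z < a ∧
        Real.exp (2 * κ) < q ∧ (q : ℝ) < z), (hooleyDelta n : ℝ) ≤
      20 * Y * Real.exp (16 * Real.exp κ * (κ + 1)) * logMean (u + Y) / Real.log z := by
  have hlz : 0 < Real.log z := Real.log_pos (by linarith)
  have hY0 : 0 ≤ Y := le_trans (by positivity) hY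
  have hz0 : 0 ≤ z := by linarith
  set H := Real.exp (16 * Real.exp κ * (κ + 1)) with hH
  set T := logMean (u + Y) with hT
  have hT0 : 0 ≤ T := logMean_nonneg _
  set J : Finset ((_ : ℕ) × ℕ) :=
    ((⌊z⌋₊ + 1).primesBelow.filter (fun q : ℕ => Real.exp (2 * κ) < q)).sigma
      (fun q => (Finset.Icc 1 ⌊Z⌋₊).filter (fun a : ℕ => z < a ∧ a ∈ q.smoothNumbers)) with hJ
  have hmem : ∀ j ∈ J, j.1.Prime ∧ (j.1 : ℝ) ≤ z ∧ Real.exp (2 * κ) < j.1 ∧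
      1 ≤ j.2 ∧ (j.2 : ℝ) ≤ Z := by
    intro j hj
    rw [hJ, Finset.mem_sigma, Finset.mem_filter, Finset.mem_filter, Finset.mem_Icc,
      Nat.mem_primesBelow] at hj
    obtain ⟨⟨⟨h1, h2⟩, h3⟩, ⟨h4, h5⟩, -⟩ := hj
    exact ⟨h2, (Nat.le_floor_iff hz0).mp (by omega), h3, h4, (Nat.le_floor_iff hZ).mp h5⟩
  refine (sum_filter_le_sum_mul_card (J := J)
    (Q := fun j n => ∃ b : ℕ, n = (j.2 * j.1) * b ∧
      ∀ p : ℕ, p.Prime → p ∣ b → (j.1 : ℝ) ≤ p)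
    (c := fun j => 2 ^ (Real.log (u + Y) / Real.log j.1) * hooleyDelta j.2)
    (K := fun j => 5 * (Y / ((j.2 * j.1 : ℕ) : ℝ)) / Real.log j.1)
    (fun j _ => by positivity) ?_ ?_).trans ?_
  · rintro n hn ⟨q, a, b, h, hza, hwq, hqz⟩
    rw [mem_intervalNat hu hY0] at hn
    have ha0 : a ≠ 0 := Nat.ne_zero_of_mem_smoothNumbers h.smooth
    have hn0 : n ≠ 0 := by
      rintro rfl
      have := hn.1
      rw [Nat.cast_zero] at this
      linarith
    have hb0 : b ≠ 0 := by
      rintro rfl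
      exact hn0 (by simpa using h.eq_mul)
    have hrough : ∀ p : ℕ, p.Prime → p ∣ b → (q : ℝ) ≤ p := fun p hp hpb => by
      exact_mod_cast h.rough p hp hpb
    obtain ⟨b', hb'⟩ := h.dvd
    refine ⟨⟨q, a⟩, ?_, ⟨b', ?_, ?_⟩, ?_⟩
    · rw [hJ, Finset.mem_sigma, Finset.mem_filter, Finset.mem_filter, Finset.mem_Icc,
        Nat.mem_primesBelow]
      exact ⟨⟨⟨Nat.lt_succ_of_le (Nat.le_floor hqz.le), h.prime⟩, hwq⟩,
        ⟨Nat.pos_of_ne_zero ha0, Nat.le_floor h.le⟩, hza, h.smooth⟩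
    · rw [h.eq_mul, hb', mul_assoc]
    · exact fun p hp hpb => hrough p hp (hb' ▸ hpb.mul_left q)
    · have h1 := hn.2
      rw [h.eq_mul] at h1 ⊢
      exact hooleyDelta_mul_rough_le (by exact_mod_cast h.prime.one_lt) ha0 hb0 h1 hrough
  · intro j hj
    obtain ⟨hp, hqz, -, ha, haZ⟩ := hmem j hj
    have hq2 : (2 : ℝ) ≤ j.1 := by exact_mod_cast hp.two_le
    have ha0 : (0 : ℝ) < j.2 := by exact_mod_cast ha
    refine card_rough_multiples_le hu hq2 (mul_ne_zero (by omega) hp.ne_zero) ?_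
    push_cast
    rw [le_div_iff₀ (by positivity)]
    have hlog : Real.log j.1 ≤ z := (Real.log_le_self (by positivity)).trans hqz
    have hlog0 : 0 ≤ Real.log j.1 := Real.log_nonneg (by linarith)
    calc (j.1 : ℝ) ^ 2 * Real.log j.1 * (j.2 * j.1) ≤ z ^ 2 * z * (Z * z) := by gcongr
      _ = z ^ 4 * Z := by ring
      _ ≤ Y := hY
  · rw [hJ, Finset.sum_sigma]
    calc _ ≤ ∑ q ∈ (⌊z⌋₊ + 1).primesBelow.filter (fun q : ℕ => Real.exp (2 * κ) < q),
            10 * Y * H * T / Real.log z ^ 2 * (Real.log q / q) := by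
          refine Finset.sum_le_sum fun q hq => ?_
          rw [Finset.mem_filter, Nat.mem_primesBelow] at hq
          have hq0 : (0 : ℝ) < q := by exact_mod_cast hq.1.2.pos
          have hlq : 0 < Real.log q := Real.log_pos (by exact_mod_cast hq.1.2.one_lt)
          have hmain := sum_smooth_large_hooleyDelta_div_le hℓ hκ (by linarith) hL hZu hq.2
          calc _ = 5 * Y / (q * Real.log q) * ((2 : ℝ) ^ (Real.log (u + Y) / Real.log q) *
                ∑ a ∈ (Finset.Icc 1 ⌊Z⌋₊).filter (fun a : ℕ => z < a ∧ a ∈ q.smoothNumbers),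
                  (hooleyDelta a : ℝ) / a) := by
                rw [Finset.mul_sum, Finset.mul_sum]
                refine Finset.sum_congr (by congr!) fun a ha => ?_
                have ha0 : (a : ℝ) ≠ 0 := by
                  have := (Finset.mem_filter.mp ha).2.1
                  linarith
                push_cast
                field_simp
            _ ≤ 5 * Y / (q * Real.log q) *
                (2 * Real.log q ^ 2 / Real.log z ^ 2 * (H * T)) := by
                refine mul_le_mul_of_nonneg_left (le_trans (le_of_eq ?_) hmain) (by positivity)
                congr!
            _ = _ := by field_simp; ring
      _ ≤ ∑ q ∈ (⌊z⌋₊ + 1).primesBelow,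
            10 * Y * H * T / Real.log z ^ 2 * (Real.log q / q) := by
          refine Finset.sum_le_sum_of_subset_of_nonneg (Finset.filter_subset _ _) fun q _ _ => ?_
          have : 0 ≤ Real.log (q : ℝ) := Real.log_natCast_nonneg q
          positivity
      _ ≤ 10 * Y * H * T / Real.log z ^ 2 * (Real.log z + Real.log z) := by
          rw [← Finset.mul_sum]
          have hf : 1 ≤ ⌊z⌋₊ := Nat.floor_pos.mpr (by linarith)
          have hf0 : (0 : ℝ) < ⌊z⌋₊ := by exact_mod_cast hf
          gcongr
          refine (sum_log_div_primesBelow_le hf).trans ?_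
          gcongr
          exact Nat.floor_le hz0
      _ = _ := by field_simp; ring

end ErdosHooley

namespace ErdosHooley

lemma sum_filter_or_le {I : Finset ℕ} {f : ℕ → ℝ} (hf : ∀ n, 0 ≤ f n) (P Q : ℕ → Prop)
    [DecidablePred P] [DecidablePred Q] :
    ∑ n ∈ I.filter (fun n => P n ∨ Q n), f n ≤
      ∑ n ∈ I.filter P, f n + ∑ n ∈ I.filter Q, f n := by
  rw [Finset.filter_or, ← Finset.sum_union_inter]
  exact le_add_of_nonneg_right (Finset.sum_nonneg fun n _ => hf n)

lemma one_add_div_rpow_le {ℓ : ℝ} (hℓ : 1 ≤ ℓ) :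
    (1 + 14 * ℓ / Real.log 2) ^ ((2 : ℝ) ^ (14 * ℓ)) ≤
      (10 * ℓ) ^ (2 * ((2 : ℝ) ^ ℓ) ^ 14) := by
  have hl2 := Real.log_two_gt_d9
  have h1 : 1 + 14 * ℓ / Real.log 2 ≤ (10 * ℓ) ^ (2 : ℝ) := by
    have : 14 * ℓ / Real.log 2 ≤ 28 * ℓ := by
      rw [div_le_iff₀ (by linarith)]
      nlinarith
    rw [Real.rpow_two]
    nlinarith
  have h2 : (2 : ℝ) ^ (14 * ℓ) = ((2 : ℝ) ^ ℓ) ^ 14 := by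
    rw [mul_comm, Real.rpow_mul (by norm_num)]
    norm_cast
  rw [h2, Real.rpow_mul (by linarith : 0 ≤ 10 * ℓ)]
  have h3 : 0 < 14 * ℓ / Real.log 2 := by positivity
  gcongr

lemma constant_le {ℓ κ : ℝ} (hℓ : 1 ≤ ℓ) (hκ : κ = 6 * ℓ * Real.log 2 + 1) :
    1 + (30 * 2 ^ (6 * ℓ) + 120 * Real.exp (16 * Real.exp κ * (κ + 1))) * ℓ * Real.exp 321 +
        2 * (1 + 14 * ℓ / Real.log 2) ^ ((2 : ℝ) ^ (14 * ℓ)) +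
        2 * (1 + 14 * ℓ / Real.log 2) ^ ((2 : ℝ) ^ (14 * ℓ)) * Real.exp (8 * Real.exp κ) ≤
      16748 * (5 * ℓ * C2l ℓ) := by
  have hl2 : 0 < Real.log 2 := Real.log_pos (by norm_num)
  set C := (1 + 14 * ℓ / Real.log 2) ^ ((2 : ℝ) ^ (14 * ℓ)) with hC
  set H := Real.exp (16 * Real.exp κ * (κ + 1)) with hH
  set t : ℝ := (2 : ℝ) ^ ℓ with ht
  have ht0 : 0 < t := by positivity
  have ht2 : 2 ≤ t := by
    calc (2 : ℝ) = 2 ^ (1 : ℝ) := (Real.rpow_one 2).symm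
      _ ≤ t := Real.rpow_le_rpow_of_exponent_le (by norm_num) hℓ
  have hlt : Real.log t = ℓ * Real.log 2 := Real.log_rpow (by norm_num) ℓ
  have ht6 : (2 : ℝ) ^ (6 * ℓ) = t ^ 6 := by
    rw [mul_comm, Real.rpow_mul (by norm_num)]
    norm_cast
  have ht16 : (2 : ℝ) ^ (16 * ℓ) = t ^ 16 := by
    rw [mul_comm, Real.rpow_mul (by norm_num)]
    norm_cast
  have hexpκ : Real.exp κ = Real.exp 1 * t ^ 6 := by
    rw [hκ, add_comm, Real.exp_add, ← Real.exp_log (pow_pos ht0 6), Real.log_pow, hlt]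
    push_cast
    ring_nf
  have he := Real.exp_one_lt_d9
  have hexpκ3 : Real.exp κ ≤ 3 * t ^ 6 := by
    rw [hexpκ]
    gcongr
    linarith
  have hκt : κ + 1 ≤ 6 * t := by
    have := Real.log_le_sub_one_of_pos ht0
    rw [hκ]
    linarith
  have hκ0 : 1 ≤ κ := by
    rw [hκ]
    have : 0 ≤ 6 * ℓ * Real.log 2 := by positivity
    linarith
  have hp7 : 512 * t ^ 7 ≤ t ^ 16 := by
    have : (2 : ℝ) ^ 9 ≤ t ^ 9 := by gcongr
    calc 512 * t ^ 7 = 2 ^ 9 * t ^ 7 := by norm_num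
      _ ≤ t ^ 9 * t ^ 7 := by gcongr
      _ = t ^ 16 := by ring
  have hp16 : 65536 ≤ t ^ 16 := by
    calc (65536 : ℝ) = 2 ^ 16 := by norm_num
      _ ≤ t ^ 16 := by gcongr
  have hp6 : 24 * t ^ 6 ≤ t ^ 14 := by
    have : (2 : ℝ) ^ 8 ≤ t ^ 8 := by gcongr
    calc 24 * t ^ 6 ≤ 2 ^ 8 * t ^ 6 := by gcongr; norm_num
      _ ≤ t ^ 8 * t ^ 6 := by gcongr
      _ = t ^ 14 := by ring
  have hbase : Real.exp 1 ≤ 10 * ℓ := by linarith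
  set G := (10 * ℓ) ^ (t ^ 16) with hG
  have hexpG : Real.exp (t ^ 16) ≤ G := by
    rw [hG, ← Real.exp_one_rpow]
    gcongr
  have hHt : H ≤ Real.exp (288 * t ^ 7) := by
    refine Real.exp_le_exp.mpr ?_
    calc 16 * Real.exp κ * (κ + 1) ≤ 16 * (3 * t ^ 6) * (6 * t) := by gcongr
      _ = 288 * t ^ 7 := by ring
  have hHG : H * Real.exp 321 ≤ G := by
    refine le_trans ?_ hexpG
    calc H * Real.exp 321 ≤ Real.exp (288 * t ^ 7) * Real.exp 321 := by gcongr
      _ = Real.exp (288 * t ^ 7 + 321) := (Real.exp_add _ _).symm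
      _ ≤ _ := Real.exp_le_exp.mpr (by linarith)
  have h6H : (2 : ℝ) ^ (6 * ℓ) ≤ H := by
    rw [ht6, hH]
    have h1 : t ^ 6 ≤ Real.exp κ := by
      rw [hexpκ]
      exact le_mul_of_one_le_left (by positivity) (Real.one_le_exp (by norm_num))
    have h2 : Real.exp κ ≤ 16 * Real.exp κ * (κ + 1) := by nlinarith [Real.exp_pos κ]
    linarith [Real.add_one_le_exp (16 * Real.exp κ * (κ + 1))]
  have hC0 : 0 < C := by positivity
  have hCG : C * Real.exp (8 * Real.exp κ) ≤ G := by
    calc C * Real.exp (8 * Real.exp κ)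
        ≤ (10 * ℓ) ^ (2 * t ^ 14) * Real.exp (t ^ 14) := by
          gcongr
          · exact one_add_div_rpow_le hℓ
          · linarith
      _ ≤ (10 * ℓ) ^ (2 * t ^ 14) * (10 * ℓ) ^ (t ^ 14) := by
          gcongr
          rw [← Real.exp_one_rpow]
          gcongr
      _ = (10 * ℓ) ^ (2 * t ^ 14 + t ^ 14) := (Real.rpow_add (by linarith) _ _).symm
      _ ≤ G := by
          refine Real.rpow_le_rpow_of_exponent_le (by linarith) ?_
          nlinarith [pow_pos ht0 14, pow_pos ht0 15]
  have hCG' : C ≤ G :=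
    (le_mul_of_one_le_right hC0.le (Real.one_le_exp (by positivity))).trans hCG
  have hG1 : 1 ≤ G := Real.one_le_rpow (by linarith) (by positivity)
  have hCG2 : C2l ℓ = G := by rw [C2l, ht16]
  rw [hCG2]
  have hfirst : (30 * 2 ^ (6 * ℓ) + 120 * H) * ℓ * Real.exp 321 ≤ 150 * ℓ * G := by
    calc (30 * 2 ^ (6 * ℓ) + 120 * H) * ℓ * Real.exp 321
        ≤ (30 * H + 120 * H) * ℓ * Real.exp 321 := by gcongr
      _ = 150 * ℓ * (H * Real.exp 321) := by ring
      _ ≤ _ := by gcongr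
  have hℓG : G ≤ ℓ * G := le_mul_of_one_le_left (by linarith) hℓ
  nlinarith

lemma C2l_le_Lam2 {ℓ : ℝ} (hℓ : 1 ≤ ℓ) : 5 * ℓ * C2l ℓ ≤ Lam2 ℓ := by
  have hA : 0 < A2 := by norm_num [A2]
  have hD : 0 ≤ D2l ℓ := by
    rw [D2l]
    have : 0 < max A2 (2 * 2 ^ (5 * ℓ * A2)) := lt_max_of_lt_left hA
    split_ifs <;> positivity
  rw [Lam2]
  have : 0 ≤ 12 * ℓ * 2 ^ (6 * ℓ) := by positivity
  nlinarith

open scoped Classical in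
lemma sum_intervalNat_hooleyDelta_le_of_thresholds {ℓ κ u Y Z z D : ℝ} (hℓ : 0 ≤ ℓ)
    (hκ : κ = 6 * ℓ * Real.log 2 + 1) (hu : 0 ≤ u) (hz : 4 ≤ z) (hZ : z ^ 2 = Z)
    (hY : z ^ 4 * Z = Y) (hL : Real.log (u + Y) ≤ 6 * ℓ * Real.log z) (hD0 : 0 ≤ D)
    (hD : ∀ n ∈ intervalNat u Y, (hooleyDelta n : ℝ) ≤ D) :
    ∑ n ∈ intervalNat u Y, (hooleyDelta n : ℝ) ≤
      Y + (2 ^ (6 * ℓ) * (5 * Y / Real.log z) * logMean (u + Y) +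
        (D * (2 * Y / Real.sqrt z * (1 + Real.log z)) +
        (D * (2 * Y / Real.sqrt z * Real.exp (8 * Real.exp κ)) +
        20 * Y * Real.exp (16 * Real.exp κ * (κ + 1)) * logMean (u + Y) / Real.log z))) := by
  have hz1 : 1 ≤ z ^ 4 := one_le_pow₀ (by linarith)
  have hZ1 : 1 ≤ Z := hZ ▸ one_le_pow₀ (by linarith)
  have hZY : Z ≤ Y := hY ▸ le_mul_of_one_le_left (by linarith) hz1
  have hsq : Z ^ 2 ≤ Y := by
    rw [← hY, sq, ← hZ]
    gcongr
    · linarith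
    · norm_num
  have hlz : Real.log z ≤ z ^ 2 := (Real.log_le_self (by linarith)).trans (by nlinarith)
  have hY' : z ^ 2 * Real.log z * Z ≤ Y := by
    calc z ^ 2 * Real.log z * Z ≤ z ^ 2 * z ^ 2 * Z := by gcongr
      _ = Y := by rw [← hY]; ring
  have hsqrt : Real.sqrt (Real.exp (2 * κ)) = Real.exp κ := by
    rw [mul_comm, ← Real.exp_half]
    ring_nf
  have hf : ∀ n : ℕ, (0 : ℝ) ≤ hooleyDelta n := fun n => Nat.cast_nonneg _
  have hcover : intervalNat u Y = (intervalNat u Y).filter (fun n : ℕ => (n : ℝ) ≤ Z ∨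
      (∃ q a b, ThresholdDecomp Z n q a b ∧ z ≤ q) ∨
      (∃ q a b, ThresholdDecomp Z n q a b ∧ (q : ℝ) < z ∧ (a : ℝ) ≤ z) ∨
      (∃ q a b, ThresholdDecomp Z n q a b ∧ z < a ∧ (q : ℝ) ≤ Real.exp (2 * κ)) ∨
      (∃ q a b, ThresholdDecomp Z n q a b ∧ z < a ∧ Real.exp (2 * κ) < q ∧ (q : ℝ) < z)) := by
    refine (Finset.filter_true_of_mem fun n hn => ?_).symm
    rcases le_or_gt (n : ℝ) Z with h | h
    · exact Or.inl h
    have hn0 : n ≠ 0 := by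
      rintro rfl
      rw [Nat.cast_zero] at h
      linarith
    obtain ⟨q, a, b, hd⟩ := exists_thresholdDecomp hZ1 hn0 h
    rcases le_or_gt z q with h1 | h1
    · exact Or.inr (Or.inl ⟨q, a, b, hd, h1⟩)
    rcases le_or_gt (a : ℝ) z with h2 | h2
    · exact Or.inr (Or.inr (Or.inl ⟨q, a, b, hd, h1, h2⟩))
    rcases le_or_gt (q : ℝ) (Real.exp (2 * κ)) with h3 | h3
    · exact Or.inr (Or.inr (Or.inr (Or.inl ⟨q, a, b, hd, h2, h3⟩)))
    · exact Or.inr (Or.inr (Or.inr (Or.inr ⟨q, a, b, hd, h2, h3, h1⟩)))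
  have hsmall := sum_small_hooleyDelta_le hu (by linarith) hsq
  have hlarge := sum_large_prime_hooleyDelta_le hu (by linarith) (by linarith)
    (by linarith) hY' hL
  have hpower := sum_prime_power_hooleyDelta_le hu (by linarith) hZ hZY hD0 hD
  have htiny := sum_tiny_prime_hooleyDelta_le (w := Real.exp (2 * κ)) hu
    (by linarith : 0 < z) (by linarith) hZY (Real.exp_pos _).le hD0 hD
  rw [hsqrt] at htiny
  have hmiddle := sum_middle_prime_hooleyDelta_le hℓ hκ hu hz (by linarith) (by linarith)
    hY.le hL
  calc _ = _ := congrArg (fun s => ∑ n ∈ s, (hooleyDelta n : ℝ)) hcover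
    _ ≤ _ := (sum_filter_or_le hf _ _).trans <| add_le_add (le_of_eq_of_le (by congr!) hsmall) <|
      (sum_filter_or_le hf _ _).trans <| add_le_add (le_of_eq_of_le (by congr!) hlarge) <|
      (sum_filter_or_le hf _ _).trans <| add_le_add (le_of_eq_of_le (by congr!) hpower) <|
      (sum_filter_or_le hf _ _).trans <| add_le_add (le_of_eq_of_le (by congr!) htiny)
        (le_of_eq_of_le (by congr!) hmiddle)

lemma hooleyDelta_le_mul_exp {ℓ lam x : ℝ} (hℓ : 1 ≤ ℓ) (hx : 0 < x)
    (hL : Real.log x ≤ ℓ * lam) {n : ℕ} (hn : n ≠ 0) (hnx : (n : ℝ) ≤ x) :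
    (hooleyDelta n : ℝ) ≤
      (1 + 14 * ℓ / Real.log 2) ^ ((2 : ℝ) ^ (14 * ℓ)) * Real.exp (lam / 14) := by
  have h1 : (hooleyDelta n : ℝ) ≤ n.divisors.card := by
    exact_mod_cast hooleyDelta_le_card_divisors n
  have hδ : 0 < 1 / (14 * ℓ) := by positivity
  have h2 := card_divisors_le_rpow hδ hn
  have h3 : 1 / (1 / (14 * ℓ) * Real.log 2) = 14 * ℓ / Real.log 2 := by
    field_simp
  rw [h3, one_div_one_div] at h2
  refine h1.trans (h2.trans ?_)
  have hl2 : 0 < Real.log 2 := Real.log_pos (by norm_num)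
  gcongr
  calc (n : ℝ) ^ (1 / (14 * ℓ)) ≤ x ^ (1 / (14 * ℓ)) := by gcongr
    _ = Real.exp (Real.log x * (1 / (14 * ℓ))) := Real.rpow_def_of_pos hx _
    _ ≤ _ := by
        refine Real.exp_le_exp.mpr ?_
        rw [mul_one_div, div_le_div_iff₀ (by positivity) (by norm_num)]
        nlinarith

lemma sum_intervalNat_hooleyDelta_le {ℓ κ lam x y : ℝ} (hℓ : 1 ≤ ℓ)
    (hκ : κ = 6 * ℓ * Real.log 2 + 1) (hlam : 10000 ≤ lam) (hy : y = Real.exp lam)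
    (hyx : y ≤ x) (hL : Real.log x ≤ ℓ * lam) :
    ∑ n ∈ intervalNat (x - y) y, (hooleyDelta n : ℝ) ≤
      (1 + (30 * 2 ^ (6 * ℓ) + 120 * Real.exp (16 * Real.exp κ * (κ + 1))) * ℓ * Real.exp 321 +
        2 * (1 + 14 * ℓ / Real.log 2) ^ ((2 : ℝ) ^ (14 * ℓ)) +
        2 * (1 + 14 * ℓ / Real.log 2) ^ ((2 : ℝ) ^ (14 * ℓ)) * Real.exp (8 * Real.exp κ)) *
          y * Real.log x ^ (-1 + 4 / Real.pi) := by
  have hl2 : 0 < Real.log 2 := Real.log_pos (by norm_num)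
  have hy0 : 0 < y := hy ▸ Real.exp_pos _
  have hx0 : 0 < x := hy0.trans_le hyx
  have hu : 0 ≤ x - y := by linarith
  have hLlam : lam ≤ Real.log x := by
    rw [Real.le_log_iff_exp_le hx0, ← hy]
    exact hyx
  have hL0 : 0 < Real.log x := by linarith
  have hexp : ∀ n ∈ intervalNat (x - y) y, (hooleyDelta n : ℝ) ≤
      (1 + 14 * ℓ / Real.log 2) ^ ((2 : ℝ) ^ (14 * ℓ)) * Real.exp (lam / 14) := by
    intro n hn
    rw [mem_intervalNat hu hy0.le, sub_add_cancel] at hn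
    refine hooleyDelta_le_mul_exp hℓ hx0 hL ?_ hn.2
    rintro rfl
    have := hn.1
    rw [Nat.cast_zero] at this
    linarith
  set C := (1 + 14 * ℓ / Real.log 2) ^ ((2 : ℝ) ^ (14 * ℓ)) with hC
  have hC0 : 0 < C := by positivity
  set H := Real.exp (16 * Real.exp κ * (κ + 1)) with hH
  have hz4 : 4 ≤ Real.exp (lam / 6) := by linarith [Real.add_one_le_exp (lam / 6)]
  have hmain := sum_intervalNat_hooleyDelta_le_of_thresholds (ℓ := ℓ) (κ := κ) (u := x - y)
    (Y := y) (Z := Real.exp (lam / 3)) (z := Real.exp (lam / 6))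
    (D := C * Real.exp (lam / 14)) (by linarith) hκ hu hz4
    (by rw [← Real.exp_nat_mul]; push_cast; ring_nf)
    (by rw [← Real.exp_nat_mul, ← Real.exp_add, hy]; push_cast; ring_nf)
    (by rw [sub_add_cancel, Real.log_exp]; linarith) (by positivity) hexp
  rw [sub_add_cancel, Real.log_exp, ← Real.exp_half] at hmain
  refine hmain.trans ?_
  set E := Real.log x ^ (-1 + 4 / Real.pi) with hE
  have hE1 : 1 ≤ E := by
    refine Real.one_le_rpow (by linarith) ?_
    have : 1 ≤ 4 / Real.pi := (one_le_div Real.pi_pos).mpr Real.pi_le_four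
    linarith
  have hT : logMean x / lam ≤ ℓ * Real.exp 321 * E := by
    have h1 : logMean x ≤ Real.exp 321 * Real.log x ^ (4 / Real.pi) :=
      sum_hooleyDelta_div_le ((Real.le_log_iff_exp_le hx0).mp (by linarith))
    have h2 : Real.log x ^ (4 / Real.pi) = E * Real.log x := by
      rw [hE, ← Real.rpow_add_one hL0.ne']
      ring_nf
    rw [div_le_iff₀ (by linarith)]
    calc logMean x ≤ Real.exp 321 * (E * Real.log x) := h2 ▸ h1
      _ ≤ Real.exp 321 * (E * (ℓ * lam)) := by gcongr
      _ = _ := by ring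
  have hdecay : Real.exp (lam / 14) / Real.exp (lam / 6 / 2) = (Real.exp (lam / 84))⁻¹ := by
    rw [← Real.exp_sub, ← Real.exp_neg]
    ring_nf
  have hpoly : 1 + lam / 6 ≤ Real.exp (lam / 84) := by
    have := Real.quadratic_le_exp_of_nonneg (by linarith : 0 ≤ lam / 84)
    nlinarith
  have hpower : C * Real.exp (lam / 14) * (2 * y / Real.exp (lam / 6 / 2) * (1 + lam / 6)) ≤
      2 * C * y := by
    calc _ = 2 * C * y * ((Real.exp (lam / 84))⁻¹ * (1 + lam / 6)) := by
          rw [← hdecay]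
          ring
      _ ≤ 2 * C * y * 1 := by
          gcongr
          rwa [inv_mul_le_iff₀ (Real.exp_pos _), mul_one]
      _ = _ := mul_one _
  have htiny : C * Real.exp (lam / 14) *
      (2 * y / Real.exp (lam / 6 / 2) * Real.exp (8 * Real.exp κ)) ≤
      2 * C * Real.exp (8 * Real.exp κ) * y := by
    calc _ = 2 * C * Real.exp (8 * Real.exp κ) * y * (Real.exp (lam / 84))⁻¹ := by
          rw [← hdecay]
          ring
      _ ≤ 2 * C * Real.exp (8 * Real.exp κ) * y * 1 := by
          gcongr
          exact inv_le_one_of_one_le₀ (Real.one_le_exp (by linarith))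
      _ = _ := mul_one _
  have hprime : 2 ^ (6 * ℓ) * (5 * y / (lam / 6)) * logMean x +
      20 * y * H * logMean x / (lam / 6) ≤
      (30 * 2 ^ (6 * ℓ) + 120 * H) * ℓ * Real.exp 321 * y * E := by
    have hlam0 : lam ≠ 0 := by linarith
    calc _ = (30 * 2 ^ (6 * ℓ) + 120 * H) * y * (logMean x / lam) := by
          field_simp
          ring
      _ ≤ (30 * 2 ^ (6 * ℓ) + 120 * H) * y * (ℓ * Real.exp 321 * E) := by gcongr
      _ = _ := by ring
  have hrest : (1 + 2 * C + 2 * C * Real.exp (8 * Real.exp κ)) * y ≤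
      (1 + 2 * C + 2 * C * Real.exp (8 * Real.exp κ)) * y * E :=
    le_mul_of_one_le_right (by positivity) hE1
  linarith

lemma le_log_of_threshold_le {ℓ x : ℝ} (hℓ : 1 ≤ ℓ)
    (hx : Real.exp (7 ^ 28 * (12 * Real.exp 1 * ℓ) ^
            (28 * Real.log (192 * Real.exp 1 * ℓ))) ≤ x) :
    10000 * ℓ ≤ Real.log x := by
  have he := Real.exp_one_gt_d9
  have hx0 : 0 < x := (Real.exp_pos _).trans_le hx
  have hbase : ℓ ≤ 12 * Real.exp 1 * ℓ := by nlinarith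
  have hlog : 1 ≤ Real.log (192 * Real.exp 1 * ℓ) := by
    rw [Real.le_log_iff_exp_le (by positivity)]
    nlinarith
  have hpow : ℓ ≤ (12 * Real.exp 1 * ℓ) ^ (28 * Real.log (192 * Real.exp 1 * ℓ)) :=
    hbase.trans (Real.self_le_rpow_of_one_le (by linarith) (by linarith))
  refine le_trans ?_ ((Real.le_log_iff_exp_le hx0).mpr hx)
  gcongr
  norm_num

end ErdosHooley

/-- Explicit bound for the Erdős–Hooley Δ-function in short intervals. -/
theorem statement_1 (ℓ : ℝ) (hℓ : 1 ≤ ℓ) (x y : ℝ)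
    (hx : Real.exp (7 ^ 28 * (12 * Real.exp 1 * ℓ) ^
            (28 * Real.log (192 * Real.exp 1 * ℓ))) ≤ x)
    (hy1 : x ^ (1 / ℓ) ≤ y) (hy2 : y ≤ x) :
    ∑ n ∈ (Finset.Icc 1 ⌊x⌋₊).filter (fun n : ℕ => x - y < (n : ℝ)),
        (hooleyDelta n : ℝ) ≤
      phiConst ℓ * y * Real.log x ^ (-1 + 4 / Real.pi) := by
  have hL := ErdosHooley.le_log_of_threshold_le hℓ hx
  have hx0 : 0 < x := (Real.exp_pos _).trans_le hx
  have hy0 : 0 < y := (Real.rpow_pos_of_pos hx0 _).trans_le hy1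
  have hlog : Real.log x ≤ ℓ * Real.log y := by
    have h1 := Real.log_le_log (Real.rpow_pos_of_pos hx0 _) hy1
    rw [Real.log_rpow hx0, one_div_mul_eq_div, div_le_iff₀ (by linarith)] at h1
    linarith
  have hlam : 10000 ≤ Real.log y := by nlinarith
  have hset : (Finset.Icc 1 ⌊x⌋₊).filter (fun n : ℕ => x - y < (n : ℝ)) =
      ErdosHooley.intervalNat (x - y) y := by
    ext n
    rw [ErdosHooley.mem_intervalNat (by linarith) hy0.le, Finset.mem_filter, Finset.mem_Icc,
      sub_add_cancel, Nat.le_floor_iff hx0.le]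
    refine ⟨fun h => ⟨h.2, h.1.2⟩, fun h => ⟨⟨?_, h.2⟩, h.1⟩⟩
    have : (0 : ℝ) < n := by linarith [h.1]
    exact_mod_cast this
  rw [hset]
  refine (ErdosHooley.sum_intervalNat_hooleyDelta_le hℓ rfl hlam (Real.exp_log hy0).symm hy2
    hlog).trans ?_
  have hLpos : 0 < Real.log x := by linarith
  gcongr
  calc _ ≤ 16748 * (5 * ℓ * C2l ℓ) := ErdosHooley.constant_le hℓ rfl
    _ ≤ phiConst ℓ := by
        rw [phiConst]
        gcongr
        exact ErdosHooley.C2l_le_Lam2 hℓ
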